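/- There is a constant C > 0 such that for all T ≥ 10 and all parameters y with 2 ≤ y ≤ T, ∫_T^{2T} |R₂(x)|² dx ≤ C·T^{3/2}·y^{−1/2}·(log T)³. -/

import Mathlib

open MeasureTheory

/-- The divisor function `d(n)`. -/
def divfun (n : ℕ) : ℕ := n.divisors.card

/-- The error term in the Dirichlet divisor problem. -/
noncomputable def DirichletDelta (x : ℝ) : ℝ :=
  (∑ n ∈ Finset.Icc 1 ⌊x⌋₊, (divfun n : ℝ)) - x * Real.log x -
    (2 * Real.eulerMascheroniConstant - 1) * x

/-- The truncated Voronoï sum `R₁(x)` with truncation parameter `y`. -/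
noncomputable def R1 (y x : ℝ) : ℝ :=
  (1 / (Real.sqrt 2 * Real.pi)) * ∑ n ∈ Finset.Icc 1 ⌊y⌋₊,
    (divfun n : ℝ) / (n : ℝ) ^ ((3 : ℝ) / 4) * x ^ ((1 : ℝ) / 4) *
      Real.cos (4 * Real.pi * Real.sqrt (n * x) - Real.pi / 4)

/-- The tail `R₂(x) = Δ(x) - R₁(x)`. -/
noncomputable def R2 (y x : ℝ) : ℝ := DirichletDelta x - R1 y x

open MeasureTheory

lemma fres_tail {w : ℂ} (hw : 0 ≤ w.re) (hw0 : w ≠ 0) {S T : ℝ} (hS : 0 < S) (hT : S ≤ T) :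
    ‖∫ σ in S..T, Complex.exp (-w * (σ:ℂ)^2)‖ ≤ 1 / (‖w‖ * S) := by
  have hpos : ∀ x ∈ Set.uIcc S T, 0 < x := by
    intro x hx; rw [Set.uIcc_of_le hT] at hx; exact lt_of_lt_of_le hS hx.1
  have hn : ∀ x : ℝ, ‖Complex.exp (-w * (x:ℂ)^2)‖ ≤ 1 := by
    intro x
    rw [Complex.norm_exp]
    rw [Real.exp_le_one_iff]
    have : (-w * (x:ℂ)^2).re = -(w.re * x^2) := by
      rw [← Complex.ofReal_pow, Complex.re_mul_ofReal]; simp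
    rw [this]; nlinarith [sq_nonneg x, mul_nonneg hw (sq_nonneg x)]
  have hu : ∀ x ∈ Set.uIcc S T, HasDerivAt (fun x : ℝ => (-(1:ℂ)/(2*w)) * ((x:ℂ))⁻¹) (1/(2*w) * ((x:ℂ)^2)⁻¹) x := by
    intro x hx
    have hx0 : (x:ℂ) ≠ 0 := by exact_mod_cast (hpos x hx).ne'
    have := ((hasDerivAt_inv hx0).comp_ofReal (z := x)).const_mul (-(1:ℂ)/(2*w))
    convert! this using 1
    field_simp
  have hv : ∀ x ∈ Set.uIcc S T, HasDerivAt (fun x : ℝ => Complex.exp (-w * (x:ℂ)^2)) (Complex.exp (-w * (x:ℂ)^2) * (-w * (2 * (x:ℂ)))) x := by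
    intro x hx
    have h1 : HasDerivAt (fun y : ℂ => Complex.exp (-w * y^2)) (Complex.exp (-w * (x:ℂ)^2) * (-w * (2 * (x:ℂ)))) (x:ℂ) := by
      have := (((hasDerivAt_pow 2 (x:ℂ)).const_mul (-w))).cexp
      simpa using this
    exact h1.comp_ofReal
  have hci : ContinuousOn (fun x : ℝ => 1/(2*w) * ((x:ℂ)^2)⁻¹) (Set.uIcc S T) := by
    apply ContinuousOn.mul continuousOn_const
    apply ContinuousOn.inv₀ (by fun_prop)
    intro x hx
    have hx0 : (x:ℂ) ≠ 0 := by exact_mod_cast (hpos x hx).ne'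
    exact pow_ne_zero 2 hx0
  have key := intervalIntegral.integral_mul_deriv_eq_deriv_mul hu hv hci.intervalIntegrable
    (by apply Continuous.intervalIntegrable; fun_prop)
  have hcong : ∫ x in S..T, (-(1:ℂ)/(2*w)) * ((x:ℂ))⁻¹ * (Complex.exp (-w * (x:ℂ)^2) * (-w * (2 * (x:ℂ)))) = ∫ σ in S..T, Complex.exp (-w * (σ:ℂ)^2) := by
    apply intervalIntegral.integral_congr
    intro x hx
    have hx0 : (x:ℂ) ≠ 0 := by exact_mod_cast (hpos x hx).ne'
    simp only
    field_simp
  rw [hcong] at key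
  rw [key]
  have hwn : 0 < ‖w‖ := norm_pos_iff.mpr hw0
  have hTp : 0 < T := lt_of_lt_of_le hS hT
  have b1 : ∀ x : ℝ, 0 < x → ‖(-(1:ℂ)/(2*w)) * ((x:ℂ))⁻¹ * Complex.exp (-w * (x:ℂ)^2)‖ ≤ 1/(2*‖w‖) * x⁻¹ := by
    intro x hx
    rw [norm_mul, norm_mul]
    have : ‖(-(1:ℂ)/(2*w))‖ = 1/(2*‖w‖) := by simp
    rw [this, norm_inv, Complex.norm_real, Real.norm_of_nonneg hx.le]
    have := hn x
    have h2 : 0 ≤ 1/(2*‖w‖) * x⁻¹ := by positivity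
    nlinarith
  have b2 : ‖∫ x in S..T, 1/(2*w) * ((x:ℂ)^2)⁻¹ * Complex.exp (-w * (x:ℂ)^2)‖ ≤ ∫ x in S..T, 1/(2*‖w‖) * (x^2)⁻¹ := by
    apply intervalIntegral.norm_integral_le_of_norm_le hT
    · refine Filter.Eventually.of_forall ?_
      intro x hx
      rw [norm_mul, norm_mul]
      have : ‖(1/(2*w) : ℂ)‖ = 1/(2*‖w‖) := by simp
      rw [this, norm_inv, norm_pow, Complex.norm_real, Real.norm_eq_abs, sq_abs]
      have := hn x
      have h2 : 0 ≤ 1/(2*‖w‖) * (x^2)⁻¹ := by positivity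
      nlinarith
    · apply ContinuousOn.intervalIntegrable
      apply ContinuousOn.mul continuousOn_const
      apply ContinuousOn.inv₀ (by fun_prop)
      intro x hx
      exact pow_ne_zero 2 (hpos x hx).ne'
  have b3 : ∫ x in S..T, 1/(2*‖w‖) * (x^2)⁻¹ = 1/(2*‖w‖) * (S⁻¹ - T⁻¹) := by
    rw [intervalIntegral.integral_const_mul]
    congr 1
    have := intervalIntegral.integral_eq_sub_of_hasDerivAt (a := S) (b := T) (f := fun x : ℝ => -x⁻¹) (f' := fun x => (x^2)⁻¹) ?_ ?_
    · rw [this]; ring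
    · intro x hx
      have := (hasDerivAt_inv (hpos x hx).ne').neg
      convert! this using 1; ring
    · apply ContinuousOn.intervalIntegrable
      apply ContinuousOn.inv₀ (by fun_prop)
      intro x hx
      exact pow_ne_zero 2 (hpos x hx).ne'
  rw [b3] at b2
  have t1 := b1 T hTp
  have t2 := b1 S hS
  refine (norm_sub_le _ _).trans ?_
  refine (add_le_add (norm_sub_le _ _) le_rfl).trans ?_
  refine (add_le_add (add_le_add t1 t2) b2).trans (le_of_eq ?_)
  field_simp; ring

lemma fres_main {z : ℝ} (hz : 0 < z) {S : ℝ} (hS : 0 < S) :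
    ‖(∫ σ in (0:ℝ)..S, Complex.exp (Complex.I * z * (σ:ℂ)^2)) -
      (1/2 * Real.sqrt (Real.pi / z) : ℝ) * Complex.exp (Complex.I * (Real.pi/4 : ℝ))‖ ≤ 1 / (z * S) := by
  -- epsilon-version
  have h1 : ∀ ε : ℝ, 0 < ε → ‖(∫ σ in (0:ℝ)..S, Complex.exp (-((ε:ℂ) - Complex.I * z) * (σ:ℂ)^2)) -
      (Real.pi / ((ε:ℂ) - Complex.I * z)) ^ (1/2:ℂ) / 2‖ ≤ 1 / (‖(ε:ℂ) - Complex.I * z‖ * S) := by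
    intro ε hε
    set w : ℂ := (ε:ℂ) - Complex.I * z with hw
    have hre : w.re = ε := by simp [hw]
    have hrew : 0 < w.re := by rw [hre]; exact hε
    have hw0 : w ≠ 0 := by intro h; rw [h] at hrew; simp at hrew
    rw [← integral_gaussian_complex_Ioi hrew]
    have hIntg : IntegrableOn (fun x : ℝ => Complex.exp (-w * (x:ℂ)^2)) (Set.Ioi 0) :=
      (integrable_cexp_neg_mul_sq hrew).integrableOn
    have ht := intervalIntegral_tendsto_integral_Ioi 0 hIntg Filter.tendsto_id
    have ht2 := (tendsto_const_nhds (x := ∫ σ in (0:ℝ)..S, Complex.exp (-w * (σ:ℂ)^2))).sub ht |>.norm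
    refine le_of_tendsto ht2 ?_
    filter_upwards [Filter.eventually_ge_atTop S] with T hT
    have hii : ∀ a b : ℝ, IntervalIntegrable (fun x : ℝ => Complex.exp (-w * (x:ℂ)^2)) volume a b := by
      intro a b; apply Continuous.intervalIntegrable; fun_prop
    simp only [id]
    rw [intervalIntegral.integral_interval_sub_left (hii _ _) (hii _ _), intervalIntegral.integral_symm, norm_neg]
    exact fres_tail hrew.le hw0 hS hT
  -- limit
  have hne : (-(Complex.I * z) : ℂ) ≠ 0 := by simp [hz.ne']
  have hcw : Filter.Tendsto (fun ε : ℝ => (ε:ℂ) - Complex.I * z) (nhdsWithin 0 (Set.Ioi 0)) (nhds (-(Complex.I * z))) := by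
    have : Filter.Tendsto (fun ε : ℝ => (ε:ℂ) - Complex.I * z) (nhds 0) (nhds (((0:ℝ):ℂ) - Complex.I * z)) := by
      apply Continuous.tendsto; fun_prop
    simp only [Complex.ofReal_zero, zero_sub] at this
    exact this.mono_left nhdsWithin_le_nhds
  have hl1 : Filter.Tendsto (fun ε : ℝ => ∫ σ in (0:ℝ)..S, Complex.exp (-((ε:ℂ) - Complex.I * z) * (σ:ℂ)^2)) (nhdsWithin 0 (Set.Ioi 0)) (nhds (∫ σ in (0:ℝ)..S, Complex.exp (Complex.I * z * (σ:ℂ)^2))) := by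
    have hc : Continuous (fun ε : ℝ => ∫ σ in (0:ℝ)..S, Complex.exp (-((ε:ℂ) - Complex.I * z) * (σ:ℂ)^2)) := by
      apply intervalIntegral.continuous_parametric_intervalIntegral_of_continuous'
      fun_prop
    have := (hc.tendsto 0).mono_left (nhdsWithin_le_nhds (s := Set.Ioi 0))
    simpa using this
  have hdiv : (Real.pi / (-(Complex.I * z)) : ℂ) = ((Real.pi / z : ℝ):ℂ) * Complex.I := by
    have : (z:ℂ) ≠ 0 := by exact_mod_cast hz.ne'
    push_cast
    field_simp
    simp [Complex.I_sq]
  have hpz : 0 < Real.pi / z := div_pos Real.pi_pos hz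
  have hslit : (Real.pi / (-(Complex.I * z)) : ℂ) ∈ Complex.slitPlane := by
    rw [hdiv]; right; simp [Real.pi_pos.ne', hz.ne']
  have hl2 : Filter.Tendsto (fun ε : ℝ => ((Real.pi : ℂ) / ((ε:ℂ) - Complex.I * z)) ^ (1/2:ℂ) / 2) (nhdsWithin 0 (Set.Ioi 0)) (nhds ((Real.pi / (-(Complex.I * z)) : ℂ)^ (1/2:ℂ) / 2)) := by
    apply Filter.Tendsto.div_const
    have := (continuousAt_cpow_const (b := (1/2:ℂ)) hslit).tendsto
    exact this.comp (tendsto_const_nhds.div hcw hne)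
  have hval : (Real.pi / (-(Complex.I * z)) : ℂ)^ (1/2:ℂ) / 2 = (1/2 * Real.sqrt (Real.pi / z) : ℝ) * Complex.exp (Complex.I * (Real.pi/4 : ℝ)) := by
    have hne2 : ((Real.pi / z : ℝ):ℂ) * Complex.I ≠ 0 :=
      mul_ne_zero (by exact_mod_cast hpz.ne') Complex.I_ne_zero
    rw [hdiv, Complex.cpow_def_of_ne_zero hne2, Complex.log_ofReal_mul hpz Complex.I_ne_zero, Complex.log_I]
    have e1 : ((Real.log (Real.pi / z) : ℝ) + (Real.pi:ℂ) / 2 * Complex.I) * (1/2:ℂ) = ((Real.log (Real.pi / z) / 2 : ℝ) : ℂ) + Complex.I * (Real.pi/4 : ℝ) := by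
      push_cast; ring
    rw [e1, Complex.exp_add, ← Complex.ofReal_exp, Real.exp_half, Real.exp_log hpz]
    push_cast; ring
  have hl3 : Filter.Tendsto (fun ε : ℝ => 1 / (‖(ε:ℂ) - Complex.I * z‖ * S)) (nhdsWithin 0 (Set.Ioi 0)) (nhds (1 / (z * S))) := by
    have h0 : ‖(-(Complex.I * z) : ℂ)‖ = z := by simp [abs_of_pos hz]
    have := (hcw.norm.mul_const S)
    rw [h0] at this
    exact tendsto_const_nhds.div this (by positivity)
  rw [← hval]
  exact le_of_tendsto_of_tendsto (hl1.sub hl2).norm hl3 (by filter_upwards [self_mem_nhdsWithin] with ε hε using h1 ε hε)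
open MeasureTheory

noncomputable def fresG (z S : ℝ) : ℂ := ∫ σ in (0:ℝ)..S, Complex.exp (Complex.I * z * (σ:ℂ)^2)

lemma norm_exp_I (t : ℂ) (ht : t.im = 0) : ‖Complex.exp (Complex.I * t)‖ = 1 := by
  rw [Complex.norm_exp]; simp [ht]

lemma fresG_bound_pos {z : ℝ} (hz : 0 < z) {S : ℝ} (hS : 0 ≤ S) : ‖fresG z S‖ ≤ 2 / Real.sqrt z := by
  have hsz : 0 < Real.sqrt z := Real.sqrt_pos.mpr hz
  have hn : ∀ x : ℝ, ‖Complex.exp (Complex.I * z * (x:ℂ)^2)‖ = 1 := by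
    intro x
    rw [mul_assoc]; apply norm_exp_I
    rw [← Complex.ofReal_pow, ← Complex.ofReal_mul]; exact Complex.ofReal_im _
  rcases le_or_gt S (2 / Real.sqrt z) with h | h
  · refine le_trans ?_ h
    have := intervalIntegral.norm_integral_le_of_norm_le_const (a := 0) (b := S) (C := 1) (f := fun x : ℝ => Complex.exp (Complex.I * z * (x:ℂ)^2)) (fun x _ => (hn x).le)
    simpa [fresG, abs_of_nonneg hS] using this
  · have hS0 : 0 < S := lt_trans (by positivity) h
    have := fres_main hz hS0
    have h2 : ‖((1/2 * Real.sqrt (Real.pi / z) : ℝ):ℂ) * Complex.exp (Complex.I * (Real.pi/4 : ℝ))‖ ≤ 1 / Real.sqrt z := by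
      rw [norm_mul, norm_exp_I _ (Complex.ofReal_im _), mul_one, Complex.norm_real, Real.norm_of_nonneg (by positivity), Real.sqrt_div' _ hz.le]
      have : Real.sqrt Real.pi ≤ 2 := by
        rw [Real.sqrt_le_left (by norm_num)]; linarith [Real.pi_le_four]
      rw [← mul_div_assoc]
      gcongr; linarith
    have h3 : 1 / (z * S) ≤ 1 / Real.sqrt z := by
      have : z * S ≥ Real.sqrt z := by
        have h4 : 2 < S * Real.sqrt z := by rwa [div_lt_iff₀ hsz] at h
        nlinarith [Real.mul_self_sqrt hz.le]
      exact one_div_le_one_div_of_le hsz this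
    have h5 := norm_le_norm_add_norm_sub' (fresG z S) (((1/2 * Real.sqrt (Real.pi / z) : ℝ):ℂ) * Complex.exp (Complex.I * (Real.pi/4 : ℝ)))
    have h6 : 2 / Real.sqrt z = 1 / Real.sqrt z + 1 / Real.sqrt z := by ring
    have h7 : ‖fresG z S - ((1/2 * Real.sqrt (Real.pi / z) : ℝ):ℂ) * Complex.exp (Complex.I * (Real.pi/4 : ℝ))‖ ≤ 1 / (z*S) := this
    linarith

lemma fresG_neg (z S : ℝ) : fresG z (-S) = - fresG z S := by
  unfold fresG
  rw [intervalIntegral.integral_symm]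
  congr 1
  have := intervalIntegral.integral_comp_neg (a := 0) (b := S) (fun x : ℝ => Complex.exp (Complex.I * z * (x:ℂ)^2))
  rw [neg_zero] at this
  rw [← this]; simp

lemma fresG_bound {z : ℝ} (hz : 0 < z) (S : ℝ) : ‖fresG z S‖ ≤ 2 / Real.sqrt z := by
  rcases le_total 0 S with h | h
  · exact fresG_bound_pos hz h
  · rw [← neg_neg S, fresG_neg, norm_neg]; exact fresG_bound_pos hz (by linarith)

lemma fresG_deriv (z S : ℝ) : HasDerivAt (fresG z) (Complex.exp (Complex.I * z * (S:ℂ)^2)) S := by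
  have hc : Continuous (fun x : ℝ => Complex.exp (Complex.I * z * (x:ℂ)^2)) := by fun_prop
  exact intervalIntegral.integral_hasDerivAt_right (hc.intervalIntegrable _ _)
    (hc.stronglyMeasurableAtFilter _ _) hc.continuousAt

lemma ibp_bound {a b B C : ℝ} (hab : a ≤ b) {f f' : ℝ → ℝ} {E e : ℝ → ℂ}
    (hf : ∀ x ∈ Set.uIcc a b, HasDerivAt f (f' x) x)
    (hE : ∀ x ∈ Set.uIcc a b, HasDerivAt E (e x) x)
    (hf' : ContinuousOn f' (Set.uIcc a b)) (he : ContinuousOn e (Set.uIcc a b))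
    (hB : ∀ x ∈ Set.uIcc a b, ‖E x‖ ≤ B)
    (hC : ∀ x ∈ Set.uIcc a b, |f' x| ≤ C / (1 + x^2)) (hC0 : 0 ≤ C) :
    ‖∫ x in a..b, (f x : ℂ) * e x‖ ≤ B * (|f a| + |f b| + 4 * C) := by
  have key := intervalIntegral.integral_mul_deriv_eq_deriv_mul (u := fun x => (f x : ℂ)) (u' := fun x => (f' x : ℂ))
    (fun x hx => (hf x hx).ofReal_comp) hE
    (by apply ContinuousOn.intervalIntegrable; fun_prop) he.intervalIntegrable
  rw [key]
  have hB0 : 0 ≤ B := le_trans (norm_nonneg _) (hB a Set.left_mem_uIcc)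
  have h1 : ‖∫ x in a..b, (f' x : ℂ) * E x‖ ≤ B * (4 * C) := by
    have : ‖∫ x in a..b, (f' x : ℂ) * E x‖ ≤ ∫ x in a..b, (B * C) * (1 / (1 + x^2)) := by
      apply intervalIntegral.norm_integral_le_of_norm_le hab
      · refine Filter.Eventually.of_forall ?_
        intro x hx
        have hx' : x ∈ Set.uIcc a b := by rw [Set.uIcc_of_le hab]; exact ⟨hx.1.le, hx.2⟩
        rw [norm_mul, Complex.norm_real, Real.norm_eq_abs]
        calc _ ≤ (C / (1 + x^2)) * B := mul_le_mul (hC x hx') (hB x hx') (norm_nonneg _) (by positivity)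
          _ = _ := by ring
      · apply Continuous.intervalIntegrable
        apply Continuous.mul continuous_const
        apply Continuous.div continuous_const (by fun_prop)
        intro x; positivity
    refine this.trans ?_
    rw [intervalIntegral.integral_const_mul, integral_one_div_one_add_sq]
    have h1 := Real.arctan_lt_pi_div_two b
    have h2 := Real.neg_pi_div_two_lt_arctan a
    have h3 := Real.pi_le_four
    have : Real.arctan b - Real.arctan a ≤ 4 := by linarith
    have h5 : 0 ≤ B * C := by positivity
    nlinarith
  have h2 : ‖(f b : ℂ) * E b‖ ≤ B * |f b| := by
    rw [norm_mul, Complex.norm_real, Real.norm_eq_abs, mul_comm]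
    exact mul_le_mul_of_nonneg_right (hB b Set.right_mem_uIcc) (abs_nonneg _)
  have h3 : ‖(f a : ℂ) * E a‖ ≤ B * |f a| := by
    rw [norm_mul, Complex.norm_real, Real.norm_eq_abs, mul_comm]
    exact mul_le_mul_of_nonneg_right (hB a Set.left_mem_uIcc) (abs_nonneg _)
  refine (norm_sub_le _ _).trans ?_
  refine (add_le_add (norm_sub_le _ _) le_rfl).trans ?_
  refine (add_le_add (add_le_add h2 h3) h1).trans (le_of_eq ?_)
  ring

/-- amplitude `k` -/
noncomputable def ampK (s : ℝ) : ℝ := 1 - 1/2 * (1/(s+1) + 1/(s^2+1))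
noncomputable def ampK' (s : ℝ) : ℝ := 1/2 * (1/(s+1)^2 + 2*s/(s^2+1)^2)
noncomputable def ampN (s : ℝ) : ℝ := ampK' s * s^2 / (s^2+1)
noncomputable def ampN' (s : ℝ) : ℝ := s/((s+1)^2*(s^2+1)) - s^2/((s+1)^3*(s^2+1)) - s^3/((s+1)^2*(s^2+1)^2)
  + 3*s^2/(s^2+1)^3 - 6*s^4/(s^2+1)^4

lemma ampK_deriv {s : ℝ} (hs : 0 < s) : HasDerivAt ampK (ampK' s) s := by
  unfold ampK ampK'
  have h1 : HasDerivAt (fun s : ℝ => s + 1) 1 s := (hasDerivAt_id s).add_const 1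
  have h2 : HasDerivAt (fun s : ℝ => s^2 + 1) (2*s) s := by
    simpa using (hasDerivAt_pow 2 s).add_const 1
  have h3 := (h1.inv (by positivity)).add (h2.inv (by positivity))
  have h4 := (h3.const_mul (1/2)).const_sub 1
  convert! h4 using 1
  · ext x; simp
  · ring

lemma ampN_deriv {s : ℝ} (hs : 0 < s) : HasDerivAt ampN (ampN' s) s := by
  have h1 : HasDerivAt (fun s : ℝ => s + 1) 1 s := (hasDerivAt_id s).add_const 1
  have h2 : HasDerivAt (fun s : ℝ => s^2 + 1) (2*s) s := by
    simpa using (hasDerivAt_pow 2 s).add_const 1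
  have h3 : HasDerivAt (fun s : ℝ => s^2) (2*s) s := by simpa using hasDerivAt_pow 2 s
  have h4 : HasDerivAt (fun s : ℝ => s^3) (3*s^2) s := by simpa using hasDerivAt_pow 3 s
  have h5 := (h3.div ((h1.pow 2).mul h2) (by show (s+1)^2*(s^2+1) ≠ 0; positivity)).const_mul (1/2)
  have h6 := h4.div (h2.pow 3) (by simp; positivity)
  convert! h5.add h6 using 1
  · ext x
    show ampN x = 1/2 * (x^2/((x+1)^2*(x^2+1))) + x^3/(x^2+1)^3
    simp only [ampN, ampK', div_eq_mul_inv, mul_inv, ← inv_pow]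
    generalize (x+1)⁻¹ = p
    generalize (x^2+1)⁻¹ = q
    ring
  · simp [ampN']
    field_simp
    ring

lemma frac_le {s : ℝ} (hs : 0 < s) {x y C : ℝ} (hy : 0 < y) (h : x * (1 + s^2) ≤ C * y) : x / y ≤ C / (1+s^2) := by
  rw [div_le_div_iff₀ hy (by positivity)]; exact h

lemma ampN'_bound {s : ℝ} (hs : 0 < s) : |ampN' s| ≤ 12 / (1 + s^2) := by
  have e1 : s/((s+1)^2*(s^2+1)) ≤ 1 / (1+s^2) := by
    apply frac_le hs (by positivity); nlinarith [sq_nonneg (s+1), mul_pos hs hs, mul_pos (mul_pos hs hs) hs, pow_pos hs 4]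
  have e2 : s^2/((s+1)^3*(s^2+1)) ≤ 1 / (1+s^2) := by
    apply frac_le hs (by positivity)
    have : s^2 ≤ (s+1)^3 := by nlinarith [pow_pos hs 3, pow_pos hs 2]
    have h : 0 < s^2+1 := by positivity
    nlinarith
  have e3 : s^3/((s+1)^2*(s^2+1)^2) ≤ 1 / (1+s^2) := by
    apply frac_le hs (by positivity)
    have : s^3 ≤ (s+1)^2*(s^2+1) := by nlinarith [pow_pos hs 3, pow_pos hs 2, pow_pos hs 4]
    have h : 0 < s^2+1 := by positivity
    nlinarith
  have e4 : 3*s^2/(s^2+1)^3 ≤ 3 / (1+s^2) := by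
    apply frac_le hs (by positivity)
    have : 3*s^2 ≤ 3*(s^2+1)^2 := by nlinarith [pow_pos hs 2, pow_pos hs 4]
    have h : 0 < s^2+1 := by positivity
    nlinarith
  have e5 : 6*s^4/(s^2+1)^4 ≤ 6 / (1+s^2) := by
    apply frac_le hs (by positivity)
    have : 6*s^4 ≤ 6*(s^2+1)^3 := by nlinarith [pow_pos hs 2, pow_pos hs 4, pow_pos hs 6]
    have h : 0 < s^2+1 := by positivity
    nlinarith
  have p1 : 0 ≤ s/((s+1)^2*(s^2+1)) := by positivity
  have p2 : 0 ≤ s^2/((s+1)^3*(s^2+1)) := by positivity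
  have p3 : 0 ≤ s^3/((s+1)^2*(s^2+1)^2) := by positivity
  have p4 : 0 ≤ 3*s^2/(s^2+1)^3 := by positivity
  have p5 : 0 ≤ 6*s^4/(s^2+1)^4 := by positivity
  have t : (12:ℝ) / (1 + s^2) = 12 * (1/(1+s^2)) := by ring
  have t3 : (3:ℝ) / (1 + s^2) = 3 * (1/(1+s^2)) := by ring
  have t6 : (6:ℝ) / (1 + s^2) = 6 * (1/(1+s^2)) := by ring
  have t0 : 0 ≤ 1/(1+s^2) := by positivity
  rw [abs_le, ampN']
  constructor <;> linarith

lemma ampN_bound {s : ℝ} (hs : 0 < s) : |ampN s| ≤ 2 := by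
  have h1 : ampK' s ≤ 2 := by
    have e1 : 1/(s+1)^2 ≤ 1 := by rw [div_le_one (by positivity)]; nlinarith
    have e2 : 2*s/(s^2+1)^2 ≤ 2 := by rw [div_le_iff₀ (by positivity)]; nlinarith [sq_nonneg (s-1), pow_pos hs 4, pow_pos hs 2]
    unfold ampK'; linarith
  have h0 : 0 ≤ ampK' s := by unfold ampK'; positivity
  unfold ampN
  rw [abs_of_nonneg (by positivity), div_le_iff₀ (by positivity)]
  nlinarith [pow_pos hs 2]

noncomputable def eP (z s : ℝ) : ℂ := Complex.exp (Complex.I * ((z * (s^2 + (s^2)⁻¹) : ℝ) : ℂ))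
noncomputable def EP (z s : ℝ) : ℂ := Complex.exp (Complex.I * ((2*z:ℝ):ℂ)) * fresG z (s - s⁻¹)

lemma eP_cont (z : ℝ) : ContinuousOn (eP z) (Set.Ioi 0) := by
  unfold eP
  have : ContinuousOn (fun s : ℝ => (s^2)⁻¹) (Set.Ioi 0) :=
    ContinuousOn.inv₀ (by fun_prop) (fun x hx => pow_ne_zero 2 (ne_of_gt hx))
  fun_prop

lemma EP_deriv (z : ℝ) {s : ℝ} (hs : 0 < s) : HasDerivAt (EP z) (((1 + (s^2)⁻¹ : ℝ) : ℂ) * eP z s) s := by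
  have h1 : HasDerivAt (fun s : ℝ => s - s⁻¹) (1 + (s^2)⁻¹) s := by
    have := (hasDerivAt_id s).sub (hasDerivAt_inv hs.ne')
    convert! this using 1; ring
  have h2 := (fresG_deriv z (s - s⁻¹)).scomp s h1
  have h3 := h2.const_mul (Complex.exp (Complex.I * ((2*z:ℝ):ℂ)))
  convert! h3 using 1
  rw [Complex.real_smul, eP]
  have : Complex.exp (Complex.I * ((z * (s^2 + (s^2)⁻¹) : ℝ) : ℂ)) = Complex.exp (Complex.I * ((2*z:ℝ):ℂ)) * Complex.exp (Complex.I * z * ((s - s⁻¹ : ℝ):ℂ)^2) := by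
    rw [← Complex.exp_add]
    congr 1
    have : s^2 + (s^2)⁻¹ = 2 + (s - s⁻¹)^2 := by field_simp; ring
    rw [this]; push_cast; ring
  rw [this]; ring

lemma eP_deriv (z : ℝ) {s : ℝ} (hs : 0 < s) : HasDerivAt (eP z) (Complex.I * ((z * (2*s - 2*(s^3)⁻¹) : ℝ) : ℂ) * eP z s) s := by
  have h3 : HasDerivAt (fun s : ℝ => s^2) (2*s) s := by simpa using hasDerivAt_pow 2 s
  have h4 : HasDerivAt (fun s : ℝ => z * (s^2 + (s^2)⁻¹)) (z * (2*s - 2*(s^3)⁻¹)) s := by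
    have := (h3.add (h3.inv (by positivity))).const_mul z
    convert! this using 1; field_simp; ring
  have := (h4.ofReal_comp.const_mul Complex.I).cexp
  convert! this using 1
  rw [eP]; ring

lemma norm_eP (z s : ℝ) : ‖eP z s‖ = 1 := norm_exp_I _ (Complex.ofReal_im _)

lemma EP_bound {z : ℝ} (hz : 0 < z) (s : ℝ) : ‖EP z s‖ ≤ 2 / Real.sqrt z := by
  rw [EP, norm_mul, norm_exp_I _ (Complex.ofReal_im _), one_mul]; exact fresG_bound hz _

lemma intK'_bound {z : ℝ} (hz : 0 < z) {a b : ℝ} (ha : 0 < a) (hab : a ≤ b) :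
    ‖∫ s in a..b, (ampK' s : ℂ) * eP z s‖ ≤ 104 / Real.sqrt z := by
  have hpos : ∀ x ∈ Set.uIcc a b, 0 < x := by
    intro x hx; rw [Set.uIcc_of_le hab] at hx; exact lt_of_lt_of_le ha hx.1
  have hcong : ∫ s in a..b, (ampK' s : ℂ) * eP z s = ∫ s in a..b, (ampN s : ℂ) * (((1 + (s^2)⁻¹ : ℝ) : ℂ) * eP z s) := by
    apply intervalIntegral.integral_congr
    intro s hs
    have h := hpos s hs
    simp only
    rw [← mul_assoc, ← Complex.ofReal_mul]
    congr 2
    unfold ampN; field_simp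
  rw [hcong]
  have hci : ContinuousOn (fun s : ℝ => (s^2)⁻¹) (Set.uIcc a b) :=
    ContinuousOn.inv₀ (by fun_prop) (fun x hx => pow_ne_zero 2 (hpos x hx).ne')
  have := ibp_bound (B := 2 / Real.sqrt z) (C := 12) hab (fun x hx => ampN_deriv (hpos x hx)) (fun x hx => EP_deriv z (hpos x hx))
    (by
      unfold ampN'
      refine ContinuousOn.sub (ContinuousOn.add (ContinuousOn.sub (ContinuousOn.sub ?_ ?_) ?_) ?_) ?_ <;>
      · refine ContinuousOn.div (by fun_prop) (by fun_prop) (fun x hx => ?_)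
        have := hpos x hx
        positivity)
    (by
      apply ContinuousOn.mul (by fun_prop)
      exact (eP_cont z).mono (fun x hx => hpos x hx))
    (fun x _ => EP_bound hz x) (fun x hx => ampN'_bound (hpos x hx)) (by norm_num)
  refine this.trans ?_
  have h1 := ampN_bound ha
  have h2 := ampN_bound (hpos b Set.right_mem_uIcc)
  have h3 : 0 ≤ 2 / Real.sqrt z := by positivity
  calc _ ≤ 2 / Real.sqrt z * 52 := by apply mul_le_mul_of_nonneg_left _ h3; linarith
    _ = _ := by ring

lemma intP_formula {z : ℝ} (hz : 0 < z) {a b : ℝ} (ha : 0 < a) (hab : a ≤ b) :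
    ∫ s in a..b, ((2 * s : ℝ):ℂ) * eP z s = (EP z b - EP z a) + (ampK b * eP z b - ampK a * eP z a) / (Complex.I * z)
      - (∫ s in a..b, (ampK' s : ℂ) * eP z s) / (Complex.I * z) := by
  have hpos : ∀ x ∈ Set.uIcc a b, 0 < x := by
    intro x hx; rw [Set.uIcc_of_le hab] at hx; exact lt_of_lt_of_le ha hx.1
  have hIz : Complex.I * (z:ℂ) ≠ 0 := mul_ne_zero Complex.I_ne_zero (by exact_mod_cast hz.ne')
  have hceP : ContinuousOn (eP z) (Set.uIcc a b) := (eP_cont z).mono (fun x hx => hpos x hx)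
  have hcK : ContinuousOn ampK' (Set.uIcc a b) := by
    unfold ampK'
    refine ContinuousOn.mul continuousOn_const (ContinuousOn.add ?_ ?_) <;>
    · refine ContinuousOn.div (by fun_prop) (by fun_prop) (fun x hx => ?_)
      have := hpos x hx
      positivity
  have hc2 : ContinuousOn (fun s => (ampK' s : ℂ) * eP z s) (Set.uIcc a b) := by
    apply ContinuousOn.mul _ hceP; fun_prop
  have hc1 : ContinuousOn (fun s : ℝ => ((2 * s : ℝ):ℂ) * eP z s) (Set.uIcc a b) := by
    apply ContinuousOn.mul _ hceP; fun_prop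
  have := intervalIntegral.integral_eq_sub_of_hasDerivAt (a := a) (b := b) (f := fun s => EP z s + ampK s * eP z s / (Complex.I * z))
    (f' := fun s => ((2 * s : ℝ):ℂ) * eP z s + (ampK' s : ℂ) * eP z s / (Complex.I * z)) ?_ ?_
  · rw [intervalIntegral.integral_add hc1.intervalIntegrable (hc2.div_const _).intervalIntegrable, intervalIntegral.integral_div] at this
    rw [eq_sub_iff_add_eq, this]; ring
  · intro s hs
    have h := hpos s hs
    have h1 := (EP_deriv z h).add (((ampK_deriv h).ofReal_comp.mul (eP_deriv z h)).div_const (Complex.I * z))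
    convert! h1 using 1
    have e : (2 * s : ℝ) = (1 + (s^2)⁻¹) + ampK s * (2*s - 2*(s^3)⁻¹) := by
      unfold ampK; field_simp; ring
    have e2 : ((2 * s : ℝ):ℂ) = ((1 + (s^2)⁻¹ : ℝ):ℂ) + ampK s * ((2*s - 2*(s^3)⁻¹ : ℝ) : ℂ) := by
      rw [← Complex.ofReal_mul, ← Complex.ofReal_add, ← e]
    have e3 : ∀ X : ℂ, ((ampK' s : ℂ) * eP z s + ampK s * (Complex.I * (z * X) * eP z s)) / (Complex.I * z) = (ampK' s : ℂ) * eP z s / (Complex.I * z) + ampK s * X * eP z s := by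
      intro X
      have : (z:ℂ) ≠ 0 := by exact_mod_cast hz.ne'
      field_simp
    rw [Complex.ofReal_mul z, e3]
    linear_combination (eP z s) * e2
  · exact (hc1.add (hc2.div_const _)).intervalIntegrable
open MeasureTheory

noncomputable def ampM (s : ℝ) : ℝ := s^2/(s^2+1)
noncomputable def ampM' (s : ℝ) : ℝ := 2*s/(s^2+1)^2
noncomputable def ampL (s : ℝ) : ℝ := 2*s^3/(s^2+1)^3
noncomputable def ampL' (s : ℝ) : ℝ := 6*s^2/(s^2+1)^3 - 12*s^4/(s^2+1)^4

lemma ampM_deriv (s : ℝ) : HasDerivAt ampM (ampM' s) s := by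
  have h2 : HasDerivAt (fun s : ℝ => s^2 + 1) (2*s) s := by
    simpa using (hasDerivAt_pow 2 s).add_const 1
  have h3 : HasDerivAt (fun s : ℝ => s^2) (2*s) s := by simpa using hasDerivAt_pow 2 s
  convert! h3.div h2 (by positivity) using 1
  simp [ampM']; ring

lemma ampL_deriv (s : ℝ) : HasDerivAt ampL (ampL' s) s := by
  have h2 : HasDerivAt (fun s : ℝ => s^2 + 1) (2*s) s := by
    simpa using (hasDerivAt_pow 2 s).add_const 1
  have h4 : HasDerivAt (fun s : ℝ => 2*s^3) (2*(3*s^2)) s := by simpa using (hasDerivAt_pow 3 s).const_mul 2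
  convert! h4.div (h2.pow 3) (by simp; positivity) using 1
  simp [ampL']
  field_simp
  ring

lemma ampL'_bound {s : ℝ} (hs : 0 < s) : |ampL' s| ≤ 12 / (1 + s^2) := by
  have e4 : 6*s^2/(s^2+1)^3 ≤ 6 / (1+s^2) := by
    apply frac_le hs (by positivity)
    have : 6*s^2 ≤ 6*(s^2+1)^2 := by nlinarith [pow_pos hs 2, pow_pos hs 4]
    have h : 0 < s^2+1 := by positivity
    nlinarith
  have e5 : 12*s^4/(s^2+1)^4 ≤ 12 / (1+s^2) := by
    apply frac_le hs (by positivity)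
    have : 12*s^4 ≤ 12*(s^2+1)^3 := by nlinarith [pow_pos hs 2, pow_pos hs 4, pow_pos hs 6]
    have h : 0 < s^2+1 := by positivity
    nlinarith
  have p4 : 0 ≤ 6*s^2/(s^2+1)^3 := by positivity
  have p5 : 0 ≤ 12*s^4/(s^2+1)^4 := by positivity
  have t : (12:ℝ) / (1 + s^2) = 12 * (1/(1+s^2)) := by ring
  have t6 : (6:ℝ) / (1 + s^2) = 6 * (1/(1+s^2)) := by ring
  have t0 : 0 ≤ 1/(1+s^2) := by positivity
  rw [abs_le, ampL']
  constructor <;> linarith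

lemma ampL_bound {s : ℝ} (hs : 0 < s) : |ampL s| ≤ 2 := by
  unfold ampL
  rw [abs_of_nonneg (by positivity), div_le_iff₀ (by positivity)]
  nlinarith [pow_pos hs 2, pow_pos hs 4, pow_pos hs 6, sq_nonneg (s-1), mul_nonneg (pow_pos hs 2).le (sq_nonneg (s-1))]

noncomputable def eQ (z s : ℝ) : ℂ := Complex.exp (Complex.I * ((z * (s - s⁻¹) : ℝ) : ℂ))

lemma norm_eQ (z s : ℝ) : ‖eQ z s‖ = 1 := norm_exp_I _ (Complex.ofReal_im _)

lemma eQ_cont (z : ℝ) : ContinuousOn (eQ z) (Set.Ioi 0) := by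
  unfold eQ
  have : ContinuousOn (fun s : ℝ => s⁻¹) (Set.Ioi 0) :=
    ContinuousOn.inv₀ (by fun_prop) (fun x hx => (ne_of_gt hx))
  fun_prop

lemma eQ_deriv (z : ℝ) {s : ℝ} (hs : 0 < s) : HasDerivAt (eQ z) (Complex.I * ((z * (1 + (s^2)⁻¹) : ℝ) : ℂ) * eQ z s) s := by
  have h4 : HasDerivAt (fun s : ℝ => z * (s - s⁻¹)) (z * (1 + (s^2)⁻¹)) s := by
    have := ((hasDerivAt_id s).sub (hasDerivAt_inv hs.ne')).const_mul z
    convert! this using 1; ring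
  have := (h4.ofReal_comp.const_mul Complex.I).cexp
  convert! this using 1
  rw [eQ]; ring

lemma intM'_bound {z : ℝ} (hz : 0 < z) {a b : ℝ} (ha : 0 < a) (hab : a ≤ b) :
    ‖∫ s in a..b, (ampM' s : ℂ) * eQ z s‖ ≤ 52 / z := by
  have hpos : ∀ x ∈ Set.uIcc a b, 0 < x := by
    intro x hx; rw [Set.uIcc_of_le hab] at hx; exact lt_of_lt_of_le ha hx.1
  have hz' : (z:ℂ) ≠ 0 := by exact_mod_cast hz.ne'
  have hcong : ∫ s in a..b, (ampM' s : ℂ) * eQ z s = ∫ s in a..b, (ampL s : ℂ) * (((1 + (s^2)⁻¹ : ℝ) : ℂ) * eQ z s) := by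
    apply intervalIntegral.integral_congr
    intro s hs
    have h := hpos s hs
    simp only
    rw [← mul_assoc, ← Complex.ofReal_mul]
    congr 2
    unfold ampL ampM'; field_simp
  rw [hcong]
  have hci : ContinuousOn (fun s : ℝ => (s^2)⁻¹) (Set.uIcc a b) :=
    ContinuousOn.inv₀ (by fun_prop) (fun x hx => pow_ne_zero 2 (hpos x hx).ne')
  have := ibp_bound (B := 1 / z) (C := 12) (E := fun s => eQ z s / (Complex.I * z)) (e := fun s => (((1 + (s^2)⁻¹ : ℝ) : ℂ) * eQ z s)) hab (fun x hx => ampL_deriv x) (fun x hx => by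
      convert! (eQ_deriv z (hpos x hx)).div_const (Complex.I * z) using 1
      rw [Complex.ofReal_mul]
      field_simp)
    (by
      unfold ampL'
      refine ContinuousOn.sub ?_ ?_ <;>
      · refine ContinuousOn.div (by fun_prop) (by fun_prop) (fun x hx => ?_)
        have := hpos x hx
        positivity)
    (by
      apply ContinuousOn.mul (by fun_prop)
      exact (eQ_cont z).mono (fun x hx => hpos x hx))
    (fun x _ => by simp [norm_eQ, abs_of_pos hz]) (fun x hx => ampL'_bound (hpos x hx)) (by norm_num)
  refine this.trans ?_
  have h1 := ampL_bound ha
  have h2 := ampL_bound (hpos b Set.right_mem_uIcc)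
  have h3 : 0 ≤ 1 / z := by positivity
  calc _ ≤ 1 / z * 52 := by apply mul_le_mul_of_nonneg_left _ h3; linarith
    _ = _ := by ring

lemma intQ_formula {z : ℝ} (hz : 0 < z) {a b : ℝ} (ha : 0 < a) (hab : a ≤ b) :
    ∫ s in a..b, eQ z s = (ampM b * eQ z b - ampM a * eQ z a) / (Complex.I * z)
      - (∫ s in a..b, (ampM' s : ℂ) * eQ z s) / (Complex.I * z) := by
  have hpos : ∀ x ∈ Set.uIcc a b, 0 < x := by
    intro x hx; rw [Set.uIcc_of_le hab] at hx; exact lt_of_lt_of_le ha hx.1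
  have hceP : ContinuousOn (eQ z) (Set.uIcc a b) := (eQ_cont z).mono (fun x hx => hpos x hx)
  have hcK : ContinuousOn ampM' (Set.uIcc a b) := by
    unfold ampM'
    refine ContinuousOn.div (by fun_prop) (by fun_prop) (fun x hx => by positivity)
  have hc2 : ContinuousOn (fun s => (ampM' s : ℂ) * eQ z s) (Set.uIcc a b) := by
    apply ContinuousOn.mul _ hceP; fun_prop
  have := intervalIntegral.integral_eq_sub_of_hasDerivAt (a := a) (b := b) (f := fun s => ampM s * eQ z s / (Complex.I * z))
    (f' := fun s => eQ z s + (ampM' s : ℂ) * eQ z s / (Complex.I * z)) ?_ ?_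
  · rw [intervalIntegral.integral_add hceP.intervalIntegrable (hc2.div_const _).intervalIntegrable, intervalIntegral.integral_div] at this
    rw [eq_sub_iff_add_eq, this]; ring
  · intro s hs
    have h := hpos s hs
    have h1 := (((ampM_deriv s).ofReal_comp.mul (eQ_deriv z h)).div_const (Complex.I * z))
    convert! h1 using 1
    have e : (1 : ℝ) = ampM s * (1 + (s^2)⁻¹) := by
      unfold ampM; field_simp
    have e2 : (1:ℂ) = ampM s * ((1 + (s^2)⁻¹ : ℝ) : ℂ) := by
      rw [← Complex.ofReal_mul, ← e, Complex.ofReal_one]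
    have e3 : ∀ X : ℂ, ((ampM' s : ℂ) * eQ z s + ampM s * (Complex.I * (z * X) * eQ z s)) / (Complex.I * z) = (ampM' s : ℂ) * eQ z s / (Complex.I * z) + ampM s * X * eQ z s := by
      intro X
      have : (z:ℂ) ≠ 0 := by exact_mod_cast hz.ne'
      field_simp
    rw [Complex.ofReal_mul z, e3]
    linear_combination (eQ z s) * e2
  · exact (hceP.add (hc2.div_const _)).intervalIntegrable

lemma intP_subst {z : ℝ} {a b : ℝ} (ha : 0 < a) (hab : a ≤ b) :
    ∫ s in a..b, ((2 * s : ℝ):ℂ) * eP z s = ∫ t in (a^2)..(b^2), Complex.exp (Complex.I * ((z * (t + t⁻¹) : ℝ) : ℂ)) := by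
  have hpos : ∀ x ∈ Set.uIcc a b, 0 < x := by
    intro x hx; rw [Set.uIcc_of_le hab] at hx; exact lt_of_lt_of_le ha hx.1
  have := intervalIntegral.integral_deriv_smul_comp' (a := a) (b := b) (f := fun s : ℝ => s^2) (f' := fun s => 2 * s) (g := fun t : ℝ => Complex.exp (Complex.I * ((z * (t + t⁻¹) : ℝ) : ℂ))) ?_ ?_ ?_
  · rw [← this]
    apply intervalIntegral.integral_congr
    intro s _
    simp [eP]
  · intro x _; simpa using hasDerivAt_pow 2 x
  · fun_prop
  · have : ContinuousOn (fun s : ℝ => s⁻¹) ((fun s : ℝ => s^2) '' Set.uIcc a b) := by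
      apply ContinuousOn.inv₀ (by fun_prop)
      rintro x ⟨s, hs, rfl⟩
      exact pow_ne_zero 2 (hpos s hs).ne'
    fun_prop

/-- Lemma B on [1/P^2, P^2] -/
lemma lemmaB_aux {z P : ℝ} (hz : 1 ≤ z) (hP : 2 ≤ P) :
    ‖((∫ s in P⁻¹..P, ((2 * s : ℝ):ℂ) * eP z s) - ∫ s in (P^2)⁻¹..(P^2), eQ z s) - (Real.sqrt (Real.pi / z) : ℝ) * Complex.exp (Complex.I * ((2*z + Real.pi/4 : ℝ):ℂ))‖ ≤ 160 / (z * Real.sqrt z) + 20 / P := by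
  have hz0 : 0 < z := by linarith
  have hP0 : 0 < P := by linarith
  have hPi : P⁻¹ ≤ P := by
    have : P⁻¹ ≤ 1 := inv_le_one_of_one_le₀ (by linarith)
    linarith
  have hPi2 : (P^2)⁻¹ ≤ P^2 := by
    have : (P^2)⁻¹ ≤ 1 := inv_le_one_of_one_le₀ (by nlinarith)
    nlinarith
  rw [intP_formula hz0 (by positivity) hPi, intQ_formula hz0 (by positivity) hPi2]
  have k1 := intK'_bound hz0 (a := P⁻¹) (b := P) (by positivity) hPi
  have k2 := intM'_bound hz0 (a := (P^2)⁻¹) (b := P^2) (by positivity) hPi2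
  set A := ∫ s in P⁻¹..P, (ampK' s : ℂ) * eP z s
  set B := ∫ s in (P^2)⁻¹..(P^2), (ampM' s : ℂ) * eQ z s
  have hEE : EP z P - EP z P⁻¹ = 2 * (Complex.exp (Complex.I * ((2*z:ℝ):ℂ)) * fresG z (P - P⁻¹)) := by
    unfold EP
    rw [inv_inv, ← neg_sub P P⁻¹, fresG_neg]; ring
  have hS : P / 2 ≤ P - P⁻¹ := by
    have : P⁻¹ ≤ 1 := inv_le_one_of_one_le₀ (by linarith)
    linarith
  have hG := fres_main hz0 (S := P - P⁻¹) (by linarith)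
  have hG' : ‖(EP z P - EP z P⁻¹) - (Real.sqrt (Real.pi / z) : ℝ) * Complex.exp (Complex.I * ((2*z + Real.pi/4 : ℝ):ℂ))‖ ≤ 4 / P := by
    have e : (EP z P - EP z P⁻¹) - (Real.sqrt (Real.pi / z) : ℝ) * Complex.exp (Complex.I * ((2*z + Real.pi/4 : ℝ):ℂ)) = 2 * Complex.exp (Complex.I * ((2*z:ℝ):ℂ)) * (fresG z (P - P⁻¹) - (1/2 * Real.sqrt (Real.pi / z) : ℝ) * Complex.exp (Complex.I * (Real.pi/4 : ℝ))) := by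
      rw [hEE]
      have : Complex.exp (Complex.I * ((2*z + Real.pi/4 : ℝ):ℂ)) = Complex.exp (Complex.I * ((2*z:ℝ):ℂ)) * Complex.exp (Complex.I * (Real.pi/4 : ℝ)) := by
        rw [← Complex.exp_add]; congr 1; push_cast; ring
      rw [this]; push_cast; ring
    rw [e, norm_mul, norm_mul, norm_exp_I _ (Complex.ofReal_im _)]
    have : 1 / (z * (P - P⁻¹)) ≤ 2 / P := by
      rw [div_le_div_iff₀ (by nlinarith) hP0]
      nlinarith
    have h3 := hG.trans this
    simp only [Complex.norm_ofNat, mul_one]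
    calc _ ≤ 2 * (2 / P) := by apply mul_le_mul_of_nonneg_left h3; norm_num
      _ = _ := by ring
  have nIz : ‖Complex.I * (z:ℂ)‖ = z := by simp [abs_of_pos hz0]
  have hA : ‖A / (Complex.I * z)‖ ≤ 104 / (z * Real.sqrt z) := by
    rw [norm_div, nIz, div_le_iff₀ hz0]
    refine k1.trans (le_of_eq ?_); field_simp
  have hB : ‖B / (Complex.I * z)‖ ≤ 52 / (z * Real.sqrt z) := by
    rw [norm_div, nIz, div_le_iff₀ hz0]
    refine k2.trans ?_
    have : Real.sqrt z ≤ z := by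
      rw [Real.sqrt_le_left hz0.le]; nlinarith
    have h2 : 52 / (z * Real.sqrt z) * z = 52 / Real.sqrt z := by field_simp
    rw [h2]; gcongr
  have iP : P⁻¹ = 1 / P := by rw [one_div]
  have hk1 : |1 - ampK P| ≤ 1 / P := by
    have e : 1 - ampK P = 1/2 * (1/(P+1) + 1/(P^2+1)) := by unfold ampK; ring
    have h1 : 1/(P+1) ≤ 1/P := one_div_le_one_div_of_le hP0 (by linarith)
    have h2 : 1/(P^2+1) ≤ 1/P := one_div_le_one_div_of_le hP0 (by nlinarith)
    rw [e, abs_of_nonneg (by positivity)]; linarith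
  have hk2 : |ampK P⁻¹| ≤ 1 / P := by
    have e : ampK P⁻¹ = 1/2 * (1/(P+1) + 1/(P^2+1)) := by
      unfold ampK; field_simp; ring
    have h1 : 1/(P+1) ≤ 1/P := one_div_le_one_div_of_le hP0 (by linarith)
    have h2 : 1/(P^2+1) ≤ 1/P := one_div_le_one_div_of_le hP0 (by nlinarith)
    rw [e, abs_of_nonneg (by positivity)]; linarith
  have hm1 : |1 - ampM (P^2)| ≤ 1/P := by
    have e : 1 - ampM (P^2) = 1 / (P^4+1) := by unfold ampM; field_simp; ring
    rw [e, abs_of_nonneg (by positivity)]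
    exact one_div_le_one_div_of_le hP0 (by nlinarith [pow_pos hP0 3, pow_pos hP0 4, pow_pos hP0 2, sq_nonneg (P^2-1)])
  have hm2 : |ampM (P^2)⁻¹| ≤ 1/P := by
    have e : ampM (P^2)⁻¹ = 1 / (P^4+1) := by unfold ampM; field_simp; ring
    rw [e, abs_of_nonneg (by positivity)]
    exact one_div_le_one_div_of_le hP0 (by nlinarith [pow_pos hP0 3, pow_pos hP0 4, pow_pos hP0 2, sq_nonneg (P^2-1)])
  have hdiff : ‖eP z P - eQ z (P^2)‖ ≤ z * (2 / P) := by
    have e : eP z P - eQ z (P^2) = eQ z (P^2) * (Complex.exp (Complex.I * ((z * (2 * (P^2)⁻¹) : ℝ):ℂ)) - 1) := by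
      unfold eP eQ
      rw [mul_sub (Complex.exp _), ← Complex.exp_add, mul_one]
      congr 2; push_cast; ring
    rw [e, norm_mul, norm_eQ, one_mul]
    refine (Real.norm_exp_I_mul_ofReal_sub_one_le).trans ?_
    rw [Real.norm_of_nonneg (by positivity)]
    apply mul_le_mul_of_nonneg_left _ hz0.le
    rw [div_eq_mul_inv]
    apply mul_le_mul_of_nonneg_left _ (by norm_num)
    exact inv_anti₀ hP0 (by nlinarith)
  have hbd : ‖((ampK P * eP z P - ampK P⁻¹ * eP z P⁻¹) - (ampM (P^2) * eQ z (P^2) - ampM (P^2)⁻¹ * eQ z (P^2)⁻¹)) / (Complex.I * z)‖ ≤ 6 / P := by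
    rw [norm_div, nIz, div_le_iff₀ hz0]
    have e : ((ampK P * eP z P - ampK P⁻¹ * eP z P⁻¹) - (ampM (P^2) * eQ z (P^2) - ampM (P^2)⁻¹ * eQ z (P^2)⁻¹)) =
       (eP z P - eQ z (P^2)) - ((1 - ampK P : ℝ):ℂ) * eP z P - ampK P⁻¹ * eP z P⁻¹ + ((1 - ampM (P^2) : ℝ):ℂ) * eQ z (P^2) + ampM (P^2)⁻¹ * eQ z (P^2)⁻¹ := by
      push_cast; ring
    rw [e]
    refine (norm_add_le _ _).trans ?_
    refine (add_le_add (norm_add_le _ _) le_rfl).trans ?_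
    refine (add_le_add (add_le_add (norm_sub_le _ _) le_rfl) le_rfl).trans ?_
    refine (add_le_add (add_le_add (add_le_add (norm_sub_le _ _) le_rfl) le_rfl) le_rfl).trans ?_
    simp only [norm_mul, Complex.norm_real, norm_eP, norm_eQ, mul_one, Real.norm_eq_abs]
    have h9 : 1/P ≤ z * (1/P) := le_mul_of_one_le_left (by positivity) hz
    have h10 : 6 / P * z = 6 * (z * (1/P)) := by ring
    have h11 : z * (2/P) = 2 * (z * (1/P)) := by ring
    linarith
  have efin : (((EP z P - EP z P⁻¹) + (ampK P * eP z P - ampK P⁻¹ * eP z P⁻¹) / (Complex.I * z) - A / (Complex.I * z)) - ((ampM (P^2) * eQ z (P^2) - ampM (P^2)⁻¹ * eQ z (P^2)⁻¹) / (Complex.I * z) - B / (Complex.I * z))) - (Real.sqrt (Real.pi / z) : ℝ) * Complex.exp (Complex.I * ((2*z + Real.pi/4 : ℝ):ℂ))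
     = ((EP z P - EP z P⁻¹) - (Real.sqrt (Real.pi / z) : ℝ) * Complex.exp (Complex.I * ((2*z + Real.pi/4 : ℝ):ℂ))) + ((ampK P * eP z P - ampK P⁻¹ * eP z P⁻¹) - (ampM (P^2) * eQ z (P^2) - ampM (P^2)⁻¹ * eQ z (P^2)⁻¹)) / (Complex.I * z) - A / (Complex.I * z) + B / (Complex.I * z) := by ring
  rw [efin]
  refine (norm_add_le _ _).trans ?_
  refine (add_le_add (norm_sub_le _ _) le_rfl).trans ?_
  refine (add_le_add (add_le_add (norm_add_le _ _) le_rfl) le_rfl).trans ?_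
  have h1 : (160:ℝ) / (z * Real.sqrt z) = 104 / (z * Real.sqrt z) + 52 / (z * Real.sqrt z) + 4 / (z * Real.sqrt z) := by ring
  have h2 : 0 ≤ 4 / (z * Real.sqrt z) := by positivity
  have h3 : 20 / P = 4 / P + 6 / P + 10 / P := by ring
  have h4 : 0 ≤ 10 / P := by positivity
  linarith

noncomputable def JJ (z Y : ℝ) : ℝ := ∫ t in (0:ℝ)..Y, Real.sin (z / t) * Real.cos (z * t)

lemma JJ_meas (z : ℝ) : Measurable (fun t : ℝ => Real.sin (z / t) * Real.cos (z * t)) := by fun_prop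

lemma JJ_int (z a b : ℝ) : IntervalIntegrable (fun t : ℝ => Real.sin (z / t) * Real.cos (z * t)) volume a b := by
  rw [intervalIntegrable_iff]
  apply Measure.integrableOn_of_bounded (M := 1)
  · simp
  · exact (JJ_meas z).aestronglyMeasurable
  · refine Filter.Eventually.of_forall (fun t => ?_)
    rw [norm_mul, Real.norm_eq_abs, Real.norm_eq_abs]
    have h1 := Real.abs_sin_le_one (z/t)
    have h2 := Real.abs_cos_le_one (z*t)
    nlinarith [abs_nonneg (Real.sin (z/t)), abs_nonneg (Real.cos (z*t))]

lemma lemmaB {z P : ℝ} (hz : 1 ≤ z) (hP : 2 ≤ P) :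
    |JJ z (P^2) - 1/2 * Real.sqrt (Real.pi / z) * Real.cos (2*z - Real.pi/4)| ≤ 80 / (z * Real.sqrt z) + 11 / P := by
  have hP0 : 0 < P := by linarith
  have hPi : P⁻¹ ≤ P := by
    have : P⁻¹ ≤ 1 := inv_le_one_of_one_le₀ (by linarith)
    linarith
  have hPi2 : (P^2)⁻¹ ≤ P^2 := by
    have : (P^2)⁻¹ ≤ 1 := inv_le_one_of_one_le₀ (by nlinarith)
    nlinarith
  have hpos : ∀ x ∈ Set.uIcc (P^2)⁻¹ (P^2), 0 < x := by
    intro x hx; rw [Set.uIcc_of_le hPi2] at hx; exact lt_of_lt_of_le (by positivity) hx.1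
  have h := lemmaB_aux hz hP
  rw [intP_subst (by positivity) hPi, inv_pow] at h
  set X : ℂ := (Real.sqrt (Real.pi / z) : ℝ) * Complex.exp (Complex.I * ((2*z + Real.pi/4 : ℝ):ℂ)) with hX
  have hXim : X.im = Real.sqrt (Real.pi / z) * Real.cos (2*z - Real.pi/4) := by
    rw [hX, Complex.im_ofReal_mul, mul_comm Complex.I, Complex.exp_ofReal_mul_I_im]
    congr 1
    rw [← Real.cos_pi_div_two_sub, ← Real.cos_neg]; congr 1; ring
  have hc1 : ContinuousOn (fun s : ℝ => s⁻¹) (Set.uIcc (P^2)⁻¹ (P^2)) :=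
    ContinuousOn.inv₀ (by fun_prop) (fun x hx => (hpos x hx).ne')
  have hi1 : IntervalIntegrable (fun t : ℝ => Complex.exp (Complex.I * ((z * (t + t⁻¹) : ℝ) : ℂ))) volume (P^2)⁻¹ (P^2) := by
    apply ContinuousOn.intervalIntegrable; fun_prop
  have hi2 : IntervalIntegrable (eQ z) volume (P^2)⁻¹ (P^2) :=
    ((eQ_cont z).mono (fun x hx => hpos x hx)).intervalIntegrable
  rw [← intervalIntegral.integral_sub hi1 hi2] at h
  have him : (∫ t in (P^2)⁻¹..(P^2), (Complex.exp (Complex.I * ((z * (t + t⁻¹) : ℝ) : ℂ)) - eQ z t)).im = 2 * ∫ t in (P^2)⁻¹..(P^2), Real.sin (z / t) * Real.cos (z * t) := by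
    rw [← intervalIntegral.integral_const_mul]
    have := (Complex.imCLM.intervalIntegral_comp_comm (hi1.sub hi2))
    simp only [Complex.imCLM_apply] at this
    rw [← this]
    apply intervalIntegral.integral_congr
    intro t ht
    simp only [Complex.sub_im, eQ]
    rw [mul_comm Complex.I, Complex.exp_ofReal_mul_I_im, mul_comm Complex.I, Complex.exp_ofReal_mul_I_im]
    rw [show z * (t + t⁻¹) = z * t + z / t by ring, show z * (t - t⁻¹) = z * t - z / t by ring, Real.sin_add, Real.sin_sub]
    ring
  have h2 := (Complex.abs_im_le_norm _).trans h
  rw [Complex.sub_im, him, hXim] at h2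
  have h3 : JJ z (P^2) = (∫ t in (0:ℝ)..(P^2)⁻¹, Real.sin (z / t) * Real.cos (z * t)) + ∫ t in (P^2)⁻¹..(P^2), Real.sin (z / t) * Real.cos (z * t) := by
    unfold JJ
    rw [intervalIntegral.integral_add_adjacent_intervals (JJ_int _ _ _) (JJ_int _ _ _)]
  have h4 : |∫ t in (0:ℝ)..(P^2)⁻¹, Real.sin (z / t) * Real.cos (z * t)| ≤ 1 / P := by
    have := intervalIntegral.norm_integral_le_of_norm_le_const (a := 0) (b := (P^2)⁻¹) (C := 1) (f := fun t : ℝ => Real.sin (z / t) * Real.cos (z * t)) (fun t _ => by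
      rw [norm_mul, Real.norm_eq_abs, Real.norm_eq_abs]
      have h1 := Real.abs_sin_le_one (z/t)
      have h2 := Real.abs_cos_le_one (z*t)
      nlinarith [abs_nonneg (Real.sin (z/t)), abs_nonneg (Real.cos (z*t))])
    rw [Real.norm_eq_abs] at this
    refine this.trans ?_
    rw [sub_zero, one_mul, abs_of_nonneg (by positivity), one_div]
    exact inv_anti₀ hP0 (by nlinarith)
  rw [h3]
  rw [abs_le] at *
  have e1 : 160 / (z * Real.sqrt z) = 2 * (80 / (z * Real.sqrt z)) := by ring
  have e2 : 20 / P = 20 * (1/P) := by ring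
  have e3 : 11 / P = 11 * (1/P) := by ring
  constructor <;> linarith
open MeasureTheory

noncomputable def psi (t : ℝ) : ℝ := Int.fract t - 1/2

lemma psi_abs (t : ℝ) : |psi t| ≤ 1/2 := by
  unfold psi; rw [abs_le]; constructor <;> linarith [Int.fract_nonneg t, Int.fract_lt_one t]

lemma psi_meas : Measurable psi := by unfold psi; fun_prop

lemma psi_int (x a b : ℝ) : IntervalIntegrable (fun t => psi (x / t)) volume a b := by
  rw [intervalIntegrable_iff]
  apply Measure.integrableOn_of_bounded (M := 1/2)
  · simp
  · exact (psi_meas.comp (by fun_prop)).aestronglyMeasurable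
  · exact Filter.Eventually.of_forall (fun t => psi_abs _)

lemma psi_div_eq {x a : ℝ} (N : ℕ) (h1 : (N:ℝ) ≤ x / a) (h2 : x / a < N + 1) : psi (x/a) = x / a - N - 1/2 := by
  unfold psi
  have : Int.fract (x/a) = x/a - N := by
    rw [Int.fract_eq_iff]
    exact ⟨by linarith, by linarith, N, by simp⟩
  rw [this]

lemma int_psi_step {x : ℝ} (hx : 0 < x) {p q : ℝ} (N : ℕ) (hp : 0 < p) (hpq : p ≤ q)
    (h : ∀ t ∈ Set.Ioc p q, (N:ℝ) ≤ x / t ∧ x / t < N + 1) :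
    ∫ t in p..q, psi (x/t) = x * Real.log (q/p) - (N + 1/2) * (q - p) := by
  have hq : 0 < q := lt_of_lt_of_le hp hpq
  have h0 : (0:ℝ) ∉ Set.uIcc p q := by
    rw [Set.uIcc_of_le hpq]; intro h; exact absurd h.1 (not_le.mpr hp)
  have e1 : ∫ t in p..q, psi (x/t) = ∫ t in p..q, (x * (1/t) - ((N:ℝ) + 1/2)) := by
    apply intervalIntegral.integral_congr_ae
    refine Filter.Eventually.of_forall (fun t ht => ?_)
    rw [Set.uIoc_of_le hpq] at ht
    rw [psi_div_eq N (h t ht).1 (h t ht).2]; ring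
  have hi : IntervalIntegrable (fun t : ℝ => 1/t) volume p q := by
    apply ContinuousOn.intervalIntegrable
    exact ContinuousOn.div continuousOn_const continuousOn_id (fun t ht => fun h => h0 (h ▸ ht))
  rw [e1, intervalIntegral.integral_sub (hi.const_mul x) (by simp), intervalIntegral.integral_const_mul, integral_one_div h0]
  simp; ring

lemma int_psi_N {x A : ℝ} (hx : 0 < x) (hA : x ≤ A) (N : ℕ) :
    ∫ t in (x/(N+1:ℕ))..A, psi (x/t) = x * Real.log (A * (N+1:ℕ) / x) - x * (harmonic (N+1) : ℝ) + x - 1/2 * (A - x/(N+1:ℕ)) := by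
  have hA0 : 0 < A := by linarith
  induction N with
  | zero =>
    have := int_psi_step hx (p := x) (q := A) 0 hx hA (fun t ht => ?_)
    · simp [harmonic_succ] at this ⊢
      rw [this]
    · have : 0 < t := lt_trans hx ht.1
      constructor
      · simp; positivity
      · simp; rw [div_lt_one this]; exact ht.1
  | succ N ih =>
    rw [← intervalIntegral.integral_add_adjacent_intervals (psi_int x _ (x/(N+1:ℕ))) (psi_int x _ _), ih]
    have hn : (0:ℝ) < (N+1:ℕ) := by positivity
    have hn2 : (0:ℝ) < (N+1+1:ℕ) := by positivity
    rw [int_psi_step hx (p := x/(N+1+1:ℕ)) (q := x/(N+1:ℕ)) (N+1) (by positivity) (by gcongr; simp) (fun t ht => ?_)]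
    · have e1 : x/(N+1:ℕ) / (x/(N+1+1:ℕ)) = (N+1+1:ℕ) / (N+1:ℕ) := by field_simp
      rw [e1, Real.log_div hn2.ne' hn.ne', Real.log_div (by positivity) hx.ne', Real.log_div (by positivity) hx.ne', Real.log_mul hA0.ne' hn.ne', Real.log_mul hA0.ne' hn2.ne', harmonic_succ (N+1)]
      push_cast
      field_simp
      ring
    · have ht0 : 0 < t := lt_trans (by positivity) ht.1
      constructor
      · rw [le_div_iff₀ ht0]; have := ht.2; rw [le_div_iff₀ hn] at this; linarith
      · rw [div_lt_iff₀ ht0]; have := ht.1; rw [div_lt_iff₀ hn2] at this; push_cast at this ⊢; linarith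

lemma int_psi {x A : ℝ} (hx : 0 < x) (hA : x ≤ A) :
    ∫ t in (0:ℝ)..A, psi (x/t) = x * (1 - Real.eulerMascheroniConstant) + x * Real.log (A/x) - 1/2 * A := by
  have hA0 : 0 < A := by linarith
  have hn : Filter.Tendsto (fun N : ℕ => x / (N+1:ℕ)) Filter.atTop (nhds 0) := by
    have := (tendsto_const_div_atTop_nhds_zero_nat x).comp (Filter.tendsto_add_atTop_nat 1)
    exact this
  have h1 : Filter.Tendsto (fun N : ℕ => ∫ t in (x/(N+1:ℕ))..A, psi (x/t)) Filter.atTop (nhds (∫ t in (0:ℝ)..A, psi (x/t))) := by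
    have hc : Continuous (fun u : ℝ => ∫ t in A..u, psi (x/t)) := intervalIntegral.continuous_primitive (fun a b => psi_int x a b) A
    have := ((hc.tendsto 0).comp hn).neg
    simpa only [Function.comp, ← intervalIntegral.integral_symm] using this
  have h2 : Filter.Tendsto (fun N : ℕ => x * Real.log (A * (N+1:ℕ) / x) - x * (harmonic (N+1) : ℝ) + x - 1/2 * (A - x/(N+1:ℕ))) Filter.atTop (nhds (x * (1 - Real.eulerMascheroniConstant) + x * Real.log (A/x) - 1/2 * A)) := by
    have h3 := (Real.tendsto_harmonic_sub_log.comp (Filter.tendsto_add_atTop_nat 1))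
    have h4 := ((h3.const_mul (-x)).add_const (x * Real.log (A/x) + x)).add ((hn.const_mul (1/2)).add_const (-(1/2*A)))
    refine (h4.congr ?_).trans_eq ?_
    · intro N
      have hn : (0:ℝ) < (N+1:ℕ) := by positivity
      simp only [Function.comp]
      rw [Real.log_div hA0.ne' hx.ne', Real.log_div (by positivity) hx.ne', Real.log_mul hA0.ne' hn.ne']
      ring
    · congr 1; ring
  refine tendsto_nhds_unique h1 (h2.congr (fun N => (int_psi_N hx hA N).symm))

lemma div_sum {x : ℝ} (hx : 0 < x) {M : ℕ} (hM : x ≤ M) :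
    ∑ n ∈ Finset.Icc 1 ⌊x⌋₊, (divfun n : ℝ) = x * (harmonic M : ℝ) - M / 2 - ∑ a ∈ Finset.Icc 1 M, psi (x / a) := by
  have h1 : ∑ n ∈ Finset.Icc 1 ⌊x⌋₊, divfun n = ∑ a ∈ Finset.Icc 1 M, ⌊x⌋₊ / a := by
    have h := ArithmeticFunction.sum_Ioc_sigma0_eq_sum_div ⌊x⌋₊
    have e : ∀ N : ℕ, Finset.Ioc 0 N = Finset.Icc 1 N := fun N => rfl
    rw [e] at h
    have h2 : ∑ n ∈ Finset.Icc 1 ⌊x⌋₊, divfun n = ∑ n ∈ Finset.Icc 1 ⌊x⌋₊, ArithmeticFunction.sigma 0 n := by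
      apply Finset.sum_congr rfl; intro n _; rw [ArithmeticFunction.sigma_zero_apply]; rfl
    rw [h2, h]
    apply Finset.sum_subset
    · apply Finset.Icc_subset_Icc le_rfl
      exact Nat.floor_le_of_le hM
    · intro a _ ha
      apply Nat.div_eq_of_lt
      simp at *
      omega
  have h2 : ∑ n ∈ Finset.Icc 1 ⌊x⌋₊, (divfun n : ℝ) = ∑ a ∈ Finset.Icc 1 M, (x * (a:ℝ)⁻¹ - 1/2 - psi (x/a)) := by
    rw [← Nat.cast_sum, h1, Nat.cast_sum]
    apply Finset.sum_congr rfl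
    intro a ha
    have : ((⌊x⌋₊ / a : ℕ) : ℝ) = (⌊x / a⌋ : ℤ) := by
      rw [← Nat.floor_div_natCast, ← natCast_floor_eq_intCast_floor (by positivity)]
    rw [this, psi, Int.fract]; ring
  rw [h2, Finset.sum_sub_distrib, Finset.sum_sub_distrib, ← Finset.mul_sum, harmonic_eq_sum_Icc]
  simp; ring

lemma delta_identity {x : ℝ} (hx : 0 < x) {M : ℕ} (hM : x ≤ M) :
    DirichletDelta x = 1/4 + x * ((harmonic M : ℝ) - Real.log ((M:ℝ) + 1/2) - Real.eulerMascheroniConstant)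
      - (∑ a ∈ Finset.Icc 1 M, psi (x / a) - ∫ t in (0:ℝ)..((M:ℝ)+1/2), psi (x/t)) := by
  have hA : x ≤ (M:ℝ) + 1/2 := by linarith
  rw [DirichletDelta, div_sum hx hM, int_psi hx hA, Real.log_div (by positivity) hx.ne']
  ring
open MeasureTheory

noncomputable def psi2 (t : ℝ) : ℝ := ((Int.fract t)^2 - Int.fract t + 1/6) / 2

lemma psi2_hasSum (t : ℝ) : HasSum (fun n : ℕ => 1 / (n:ℝ)^2 * Real.cos (2 * Real.pi * n * t)) (2 * Real.pi^2 * psi2 t) := by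
  have h := hasSum_one_div_nat_pow_mul_cos (k := 1) one_ne_zero (x := Int.fract t) ⟨Int.fract_nonneg t, (Int.fract_lt_one t).le⟩
  convert! h using 1
  · ext n
    congr 1
    have : 2 * Real.pi * n * t = 2 * Real.pi * n * Int.fract t + ((n * ⌊t⌋ : ℤ) : ℝ) * (2 * Real.pi) := by
      rw [Int.fract]; push_cast; ring
    rw [this, Real.cos_add_int_mul_two_pi]
  · have : (Polynomial.map (algebraMap ℚ ℝ) (Polynomial.bernoulli (2 * 1))).eval (Int.fract t) = (Int.fract t)^2 - Int.fract t + 1/6 := by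
      rw [Polynomial.bernoulli]
      simp [Finset.sum_range_succ, bernoulli_two, bernoulli_one, Polynomial.eval_monomial]
      ring
    rw [this, psi2]
    simp; ring

lemma summable_inv_sq : Summable (fun n : ℕ => 1 / (n:ℝ)^2) := by
  simpa using Real.summable_one_div_nat_pow.mpr (by norm_num : 1 < 2)

lemma psi2_cont : Continuous psi2 := by
  have h : psi2 = fun t => (∑' n : ℕ, 1 / (n:ℝ)^2 * Real.cos (2 * Real.pi * n * t)) / (2 * Real.pi^2) := by
    ext t; rw [(psi2_hasSum t).tsum_eq]
    field_simp
  rw [h]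
  apply Continuous.div_const
  apply continuous_tsum (u := fun n : ℕ => 1 / (n:ℝ)^2)
  · intro n; fun_prop
  · exact summable_inv_sq
  · intro n x
    rw [norm_mul, Real.norm_of_nonneg (by positivity)]
    have := Real.abs_cos_le_one (2 * Real.pi * n * x)
    rw [Real.norm_eq_abs]
    exact mul_le_of_le_one_right (by positivity) this

lemma psi2_abs (t : ℝ) : |psi2 t| ≤ 1 := by
  have h1 := Int.fract_nonneg t
  have h2 := (Int.fract_lt_one t).le
  unfold psi2
  rw [abs_le]; constructor <;> nlinarith

lemma psi2_deriv (t : ℝ) : HasDerivWithinAt psi2 (psi t) (Set.Ioi t) t := by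
  have h1 : HasDerivAt (fun s : ℝ => ((s - ⌊t⌋)^2 - (s - ⌊t⌋) + 1/6) / 2) (psi t) t := by
    have h0 : HasDerivAt (fun s : ℝ => s - ⌊t⌋) 1 t := (hasDerivAt_id t).sub_const _
    have := (((h0.pow 2).sub h0).add_const (1/6)).div_const 2
    convert! this using 1
    rw [psi]
    have e : t - (⌊t⌋:ℝ) = Int.fract t := rfl
    rw [e]; ring
  refine h1.hasDerivWithinAt.congr_of_eventuallyEq ?_ ?_
  · have : Set.Ioo t (⌊t⌋ + 1 : ℝ) ∈ nhdsWithin t (Set.Ioi t) := Ioo_mem_nhdsGT (Int.lt_floor_add_one t)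
    filter_upwards [this] with s hs
    have : Int.fract s = s - ⌊t⌋ := by
      rw [Int.fract_eq_iff]
      exact ⟨by linarith [Int.floor_le t, hs.1], by linarith [hs.2], ⌊t⌋, by ring⟩
    rw [psi2, this]
  · rfl

lemma psi_ii (a b : ℝ) : IntervalIntegrable psi volume a b := by
  rw [intervalIntegrable_iff]
  apply Measure.integrableOn_of_bounded (M := 1/2)
  · simp
  · exact psi_meas.aestronglyMeasurable
  · exact Filter.Eventually.of_forall (fun t => psi_abs _)

/-- Euler-Maclaurin -/
lemma euler_mac {h h1 h2 : ℝ → ℝ} (hd1 : ∀ x, HasDerivAt h (h1 x) x) (hd2 : ∀ x, HasDerivAt h1 (h2 x) x)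
    (hc2 : Continuous h2) (h00 : h 0 = 0) (h10 : h1 0 = 0) (M : ℕ) :
    ∑ a ∈ Finset.Icc 1 M, h a - ∫ t in (0:ℝ)..((M:ℝ)+1/2), h t
      = psi2 (1/2) * h1 ((M:ℝ)+1/2) - ∫ t in (0:ℝ)..((M:ℝ)+1/2), psi2 t * h2 t := by
  set A : ℝ := (M:ℝ) + 1/2 with hA
  have hA0 : 0 ≤ A := by positivity
  have hc1 : Continuous h1 := continuous_iff_continuousAt.mpr (fun x => (hd2 x).continuousAt)
  have hc0 : Continuous h := continuous_iff_continuousAt.mpr (fun x => (hd1 x).continuousAt)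
  have hder : deriv h = h1 := funext (fun x => (hd1 x).deriv)
  have hfl : ⌊A⌋₊ = M := by
    rw [Nat.floor_eq_iff hA0]; constructor <;> linarith
  have s1 := sum_mul_eq_sub_integral_mul (fun _ => (1:ℝ)) (f := h) hA0 (fun t _ => (hd1 t).differentiableAt) (by rw [hder]; exact hc1.continuousOn.integrableOn_Icc)
  rw [hfl, hder] at s1
  have s2 : ∑ k ∈ Finset.Icc 0 M, h k * 1 = ∑ a ∈ Finset.Icc 1 M, h a := by
    simp only [mul_one]
    rw [Finset.Icc_eq_cons_Ioc (Nat.zero_le _), Finset.sum_cons]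
    simp only [Nat.cast_zero, h00, zero_add]
    rfl
  have s3 : ∫ t in Set.Ioc 0 A, h1 t * ∑ k ∈ Finset.Icc 0 ⌊t⌋₊, (1:ℝ) = ∫ t in (0:ℝ)..A, ((t + 1/2) * h1 t - psi t * h1 t) := by
    rw [← intervalIntegral.integral_of_le hA0]
    apply intervalIntegral.integral_congr_ae
    refine Filter.Eventually.of_forall (fun t ht => ?_)
    rw [Set.uIoc_of_le hA0] at ht
    have : ((⌊t⌋₊ : ℕ) : ℝ) = (⌊t⌋ : ℤ) := by rw [← natCast_floor_eq_intCast_floor ht.1.le]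
    simp only [Finset.sum_const, Nat.card_Icc, nsmul_eq_mul, mul_one, Nat.sub_zero]
    push_cast
    rw [this, psi, Int.fract]; ring
  have i1 : IntervalIntegrable (fun t => (t + 1/2) * h1 t) volume 0 A := by
    apply Continuous.intervalIntegrable; fun_prop
  have i2 : IntervalIntegrable (fun t => psi t * h1 t) volume 0 A := (psi_ii _ _).mul_continuousOn hc1.continuousOn
  rw [s2, s3, intervalIntegral.integral_sub i1 i2] at s1
  have s4 : ∫ t in (0:ℝ)..A, (t + 1/2) * h1 t = (A + 1/2) * h A - ∫ t in (0:ℝ)..A, h t := by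
    have := intervalIntegral.integral_mul_deriv_eq_deriv_mul (a := 0) (b := A) (u := fun t => t + 1/2) (u' := fun _ => 1) (v := h) (v' := h1)
      (fun x _ => (hasDerivAt_id x).add_const _) (fun x _ => hd1 x) (by simp) (hc1.intervalIntegrable _ _)
    rw [this, h00]; simp
  have s5 : ∫ t in (0:ℝ)..A, psi t * h1 t = psi2 (1/2) * h1 A - ∫ t in (0:ℝ)..A, psi2 t * h2 t := by
    have := intervalIntegral.integral_mul_deriv_eq_deriv_mul_of_hasDeriv_right (a := 0) (b := A) (u := h1) (u' := h2) (v := psi2) (v' := psi)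
      hc1.continuousOn psi2_cont.continuousOn (fun x _ => (hd2 x).hasDerivWithinAt) (fun x _ => psi2_deriv x) (hc2.intervalIntegrable _ _) (psi_ii _ _)
    have e1 : ∫ t in (0:ℝ)..A, psi t * h1 t = ∫ t in (0:ℝ)..A, h1 t * psi t := by simp only [mul_comm]
    have e2 : ∫ t in (0:ℝ)..A, psi2 t * h2 t = ∫ t in (0:ℝ)..A, h2 t * psi2 t := by simp only [mul_comm]
    have e3 : psi2 A = psi2 (1/2) := by
      unfold psi2; rw [hA, Int.fract_natCast_add]
    rw [e1, e2, this, h10, e3]; ring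
  rw [s4, s5] at s1
  rw [s1]
  simp
  rw [hA]; ring
open MeasureTheory

open scoped SchwartzMap in
noncomputable def chi (F : 𝓢(ℝ, ℝ)) (a : ℝ) : ℝ := F a⁻¹
open scoped SchwartzMap in
noncomputable def chi1 (F : 𝓢(ℝ, ℝ)) (a : ℝ) : ℝ := -(a⁻¹)^2 * deriv F a⁻¹
open scoped SchwartzMap in
noncomputable def chi2 (F : 𝓢(ℝ, ℝ)) (a : ℝ) : ℝ :=
  (a⁻¹)^4 * deriv (deriv F) a⁻¹ + 2 * (a⁻¹)^3 * deriv F a⁻¹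

section
open scoped SchwartzMap
variable (F : 𝓢(ℝ, ℝ))

lemma sch_decay0 (k : ℕ) : ∃ C, 0 < C ∧ ∀ y, |y|^k * |F y| ≤ C := by
  obtain ⟨C, hC, h⟩ := F.decay k 0
  refine ⟨C, hC, fun y => ?_⟩
  simpa [Real.norm_eq_abs] using h y

lemma sch_decay1 (k : ℕ) : ∃ C, 0 < C ∧ ∀ y, |y|^k * |deriv F y| ≤ C := by
  obtain ⟨C, hC, h⟩ := F.decay k 1
  refine ⟨C, hC, fun y => ?_⟩
  have := h y
  rwa [norm_iteratedFDeriv_eq_norm_iteratedDeriv, iteratedDeriv_one] at this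

lemma sch_decay2 (k : ℕ) : ∃ C, 0 < C ∧ ∀ y, |y|^k * |deriv (deriv F) y| ≤ C := by
  obtain ⟨C, hC, h⟩ := F.decay k 2
  refine ⟨C, hC, fun y => ?_⟩
  have := h y
  rwa [norm_iteratedFDeriv_eq_norm_iteratedDeriv, iteratedDeriv_succ, iteratedDeriv_one] at this

lemma sch_d1 (y : ℝ) : HasDerivAt F (deriv F y) y := (F.differentiableAt).hasDerivAt

lemma sch_d2 (y : ℝ) : HasDerivAt (deriv F) (deriv (deriv F) y) y := by
  have h : ContDiff ℝ 2 F := F.smooth 2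
  have h1 : ContDiff ℝ 1 (deriv F) := by
    have := (contDiff_succ_iff_deriv (n := 1)).mp (by rw [one_add_one_eq_two]; exact h)
    exact this.2.2
  exact (h1.differentiable one_ne_zero).differentiableAt.hasDerivAt

lemma sch_c2 : Continuous (deriv (deriv F)) := by
  have h : ContDiff ℝ 2 F := F.smooth 2
  have h1 : ContDiff ℝ 1 (deriv F) := by
    have := (contDiff_succ_iff_deriv (n := 1)).mp (by rw [one_add_one_eq_two]; exact h)
    exact this.2.2
  exact h1.continuous_deriv le_rfl

lemma hasDeriv_zero_of_sq {p : ℝ → ℝ} {C : ℝ} (h0 : p 0 = 0) (h : ∀ a, |p a| ≤ C * a^2) : HasDerivAt p 0 0 := by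
  rw [hasDerivAt_iff_isLittleO, Asymptotics.isLittleO_iff]
  intro c hc
  have : ∀ᶠ a : ℝ in nhds 0, (|C| * |a|) < c := by
    have : Filter.Tendsto (fun a : ℝ => |C| * |a|) (nhds 0) (nhds (|C| * |0|)) := by
      apply Continuous.tendsto; fun_prop
    simp only [abs_zero, mul_zero] at this
    exact this.eventually_lt_const hc
  filter_upwards [this] with a ha
  simp only [h0, sub_zero, smul_zero, Real.norm_eq_abs]
  calc |p a| ≤ C * a^2 := h a
    _ ≤ |C| * a^2 := by gcongr; exact le_abs_self C
    _ = (|C| * |a|) * |a| := by rw [← sq_abs a]; ring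
    _ ≤ c * |a| := by gcongr

lemma inv_pow_bound {D C a : ℝ} (k j : ℕ) (ha : a ≠ 0) (h : |a⁻¹|^(k+j) * |D| ≤ C) : |a⁻¹|^k * |D| ≤ C * |a|^j := by
  have : 0 < |a| := abs_pos.mpr ha
  rw [pow_add, abs_inv] at h
  rw [abs_inv]
  calc |a|⁻¹^k * |D| = (|a|⁻¹^k * |a|⁻¹^j * |D|) * |a|^j := by
        have : |a|⁻¹^j * |a|^j = 1 := by rw [← mul_pow, inv_mul_cancel₀ this.ne', one_pow]
        linear_combination (-|a|⁻¹^k * |D|) * this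
    _ ≤ C * |a|^j := by gcongr

variable {F}

lemma chi_zero (h0 : F 0 = 0) : chi F 0 = 0 := by simp [chi, h0]
lemma chi1_zero : chi1 F 0 = 0 := by simp [chi1]
lemma chi2_zero : chi2 F 0 = 0 := by simp [chi2]

lemma chi_hd (h0 : F 0 = 0) (a : ℝ) : HasDerivAt (chi F) (chi1 F a) a := by
  by_cases ha : a = 0
  · subst ha
    rw [chi1_zero]
    obtain ⟨C, hC, h⟩ := sch_decay0 F 2
    apply hasDeriv_zero_of_sq (C := C) (chi_zero h0)
    intro a
    by_cases ha : a = 0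
    · subst ha; rw [chi_zero h0]; simp
    have := inv_pow_bound 0 2 ha (h a⁻¹)
    simpa [chi] using this
  · have := (sch_d1 F a⁻¹).comp a (hasDerivAt_inv ha)
    convert! this using 1
    rw [chi1]; field_simp

lemma chi1_hd (a : ℝ) : HasDerivAt (chi1 F) (chi2 F a) a := by
  by_cases ha : a = 0
  · subst ha
    rw [chi2_zero]
    obtain ⟨C, hC, h⟩ := sch_decay1 F 4
    apply hasDeriv_zero_of_sq (C := C) chi1_zero
    intro a
    by_cases ha : a = 0
    · subst ha; rw [chi1_zero]; simp
    have := inv_pow_bound 2 2 ha (h a⁻¹)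
    rw [chi1, abs_mul, abs_neg, abs_pow]
    simpa using this
  · have h1 := (sch_d2 F a⁻¹).comp a (hasDerivAt_inv ha)
    have h2 := ((hasDerivAt_inv ha).pow 2).neg.mul h1
    convert! h2 using 1
    simp only [chi2, Function.comp, Pi.pow_apply, Pi.neg_apply]
    norm_num
    ring

lemma chi2_cont : Continuous (chi2 F) := by
  rw [continuous_iff_continuousAt]
  intro a
  by_cases ha : a = 0
  · subst ha
    obtain ⟨C, hC, h⟩ := sch_decay1 F 5
    obtain ⟨C', hC', h'⟩ := sch_decay2 F 6
    apply (hasDeriv_zero_of_sq (C := C' + 2 * C) chi2_zero _).continuousAt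
    intro a
    by_cases ha : a = 0
    · subst ha; rw [chi2_zero]; simp
    have e1 := inv_pow_bound 4 2 ha (h' a⁻¹)
    have e2 := inv_pow_bound 3 2 ha (h a⁻¹)
    rw [sq_abs] at e1 e2
    rw [chi2]
    refine (abs_add_le _ _).trans ?_
    rw [abs_mul, abs_mul, abs_mul, abs_pow, abs_pow, abs_two]
    linarith
  · have c1 : Continuous (deriv F) := continuous_iff_continuousAt.mpr (fun x => (sch_d2 F x).continuousAt)
    have c2 := sch_c2 F
    have ci : ContinuousAt (fun a : ℝ => a⁻¹) a := continuousAt_inv₀ ha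
    unfold chi2
    have d1 : ContinuousAt (fun a : ℝ => deriv F a⁻¹) a := ContinuousAt.comp (f := fun a : ℝ => a⁻¹) c1.continuousAt ci
    have d2 : ContinuousAt (fun a : ℝ => deriv (deriv F) a⁻¹) a := ContinuousAt.comp (f := fun a : ℝ => a⁻¹) c2.continuousAt ci
    fun_prop

lemma chi_bounds : ∃ C, 0 < C ∧ (∀ a, |chi1 F a| ≤ C / (1 + a^2)) ∧ (∀ a, |chi2 F a| ≤ C / (1 + a^2)) := by
  obtain ⟨A0, hA0, a0⟩ := sch_decay1 F 0
  obtain ⟨A1, hA1, a1⟩ := sch_decay1 F 1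
  obtain ⟨A2, hA2, a2⟩ := sch_decay1 F 2
  obtain ⟨A3, hA3, a3⟩ := sch_decay1 F 3
  obtain ⟨B2, hB2, b2⟩ := sch_decay2 F 2
  obtain ⟨B4, hB4, b4⟩ := sch_decay2 F 4
  refine ⟨A0 + 2 * A1 + A2 + 2 * A3 + B2 + B4, by positivity, fun a => ?_, fun a => ?_⟩
  · by_cases ha : a = 0
    · subst ha; rw [chi1_zero]; simp; positivity
    rw [le_div_iff₀ (by positivity)]
    have e : |chi1 F a| * (1 + a^2) = |a⁻¹|^2 * |deriv F a⁻¹| + |a⁻¹|^0 * |deriv F a⁻¹| := by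
      rw [chi1, abs_mul, abs_neg, abs_pow, abs_inv, ← sq_abs a]
      have : 0 < |a| := abs_pos.mpr ha
      field_simp
    rw [e]; linarith [a0 a⁻¹, a2 a⁻¹]
  · by_cases ha : a = 0
    · subst ha; rw [chi2_zero]; simp; positivity
    rw [le_div_iff₀ (by positivity)]
    have hp : 0 < |a| := abs_pos.mpr ha
    have e : |chi2 F a| * (1 + a^2) ≤ (|a⁻¹|^4 * |deriv (deriv F) a⁻¹| + |a⁻¹|^2 * |deriv (deriv F) a⁻¹|) + 2 * (|a⁻¹|^3 * |deriv F a⁻¹| + |a⁻¹|^1 * |deriv F a⁻¹|) := by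
      have e1 : |chi2 F a| ≤ |a⁻¹|^4 * |deriv (deriv F) a⁻¹| + 2 * |a⁻¹|^3 * |deriv F a⁻¹| := by
        rw [chi2]
        refine (abs_add_le _ _).trans ?_
        rw [abs_mul, abs_mul, abs_mul, abs_pow, abs_pow, abs_two]
      calc _ ≤ (|a⁻¹|^4 * |deriv (deriv F) a⁻¹| + 2 * |a⁻¹|^3 * |deriv F a⁻¹|) * (1 + |a|^2) := by
            rw [sq_abs]; gcongr
        _ = _ := by rw [abs_inv]; field_simp
    linarith [a1 a⁻¹, a3 a⁻¹, b2 a⁻¹, b4 a⁻¹]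

lemma chi_tendsto (h0 : F 0 = 0) : Filter.Tendsto (chi F) Filter.atTop (nhds 0) := by
  have : Filter.Tendsto F (nhds 0) (nhds (F 0)) := F.continuous.tendsto 0
  rw [h0] at this
  exact this.comp tendsto_inv_atTop_zero

lemma chi1_tendsto : Filter.Tendsto (chi1 F) Filter.atTop (nhds 0) := by
  have : Filter.Tendsto (fun y => -y^2 * deriv F y) (nhds 0) (nhds (-0^2 * deriv F 0)) := by
    have c1 : Continuous (deriv F) := continuous_iff_continuousAt.mpr (fun x => (sch_d2 F x).continuousAt)
    apply Continuous.tendsto; fun_prop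
  simp only [ne_eq, OfNat.ofNat_ne_zero, not_false_eq_true, zero_pow, neg_zero, zero_mul] at this
  exact this.comp tendsto_inv_atTop_zero

lemma chi2_integrable : Integrable (chi2 F) := by
  obtain ⟨C, hC, -, h⟩ := chi_bounds (F := F)
  refine (integrable_inv_one_add_sq.const_mul C).mono' chi2_cont.aestronglyMeasurable ?_
  exact Filter.Eventually.of_forall (fun a => by simpa [div_eq_mul_inv] using h a)

end
open MeasureTheory

section
open scoped SchwartzMap FourierTransform ContDiff

lemma exists_sineF {g : ℝ → ℝ} (hg : ContDiff ℝ ∞ g) (hs : HasCompactSupport g) :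
    ∃ F : 𝓢(ℝ, ℝ), ∀ y, F y = ∫ x, g x * Real.sin (2 * Real.pi * x * y) := by
  have h1 : HasCompactSupport (fun x => (g x : ℂ)) := hs.comp_left (g := fun r : ℝ => (r:ℂ)) (by simp)
  have h2 : ContDiff ℝ ∞ (fun x => (g x : ℂ)) := Complex.ofRealCLM.contDiff.comp hg
  set G : 𝓢(ℝ, ℂ) := h1.toSchwartzMap h2
  have hG : ⇑G = fun x => (g x : ℂ) := rfl
  refine ⟨-SchwartzMap.postcompCLM Complex.imCLM (𝓕 G), fun y => ?_⟩
  rw [neg_apply, SchwartzMap.postcompCLM_apply, SchwartzMap.fourier_coe, Real.fourier_real_eq_integral_exp_smul,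
    hG, ← ContinuousLinearMap.integral_comp_comm]
  · rw [← integral_neg]
    congr 1; ext x
    simp only [Complex.imCLM_apply, smul_eq_mul]
    rw [Complex.im_mul_ofReal, Complex.exp_ofReal_mul_I_im]
    rw [show -2 * Real.pi * x * y = -(2 * Real.pi * x * y) by ring, Real.sin_neg]; ring
  · have hi : Integrable (fun x => (g x : ℂ)) := h2.continuous.integrable_of_hasCompactSupport h1
    refine hi.bdd_mul (c := 1) (by fun_prop) ?_
    exact Filter.Eventually.of_forall (fun x => by rw [Complex.norm_exp_ofReal_mul_I])

/-- Package of test function hypotheses. -/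
structure TestFn (g : ℝ → ℝ) (x0 x1 : ℝ) (F : 𝓢(ℝ, ℝ)) : Prop where
  smooth : ContDiff ℝ ∞ g
  pos : 0 < x0
  le : x0 ≤ x1
  supp : ∀ x, x ∉ Set.Ioo x0 x1 → g x = 0
  hF : ∀ y, F y = ∫ x, g x * Real.sin (2 * Real.pi * x * y)

variable {g : ℝ → ℝ} {x0 x1 : ℝ} {F : 𝓢(ℝ, ℝ)}

lemma TestFn.cpt (h : TestFn g x0 x1 F) : HasCompactSupport g := by
  apply HasCompactSupport.intro (isCompact_Icc (a := x0) (b := x1))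
  intro x hx
  exact h.supp x (fun hh => hx (Set.Ioo_subset_Icc_self hh))

lemma TestFn.F0 (h : TestFn g x0 x1 F) : F 0 = 0 := by rw [h.hF]; simp

lemma TestFn.int (h : TestFn g x0 x1 F) : Integrable g :=
  h.smooth.continuous.integrable_of_hasCompactSupport h.cpt

lemma TestFn.restrict (h : TestFn g x0 x1 F) (f : ℝ → ℝ) :
    ∫ x, g x * f x = ∫ x in x0..x1, g x * f x := by
  rw [intervalIntegral.integral_of_le h.le, setIntegral_eq_integral_of_forall_compl_eq_zero]
  intro x hx
  rw [h.supp x (fun hh => hx (Set.Ioo_subset_Ioc_self hh)), zero_mul]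

lemma TestFn.end0 (h : TestFn g x0 x1 F) : g x0 = 0 := h.supp _ (by simp)
lemma TestFn.end1 (h : TestFn g x0 x1 F) : g x1 = 0 := h.supp _ (by simp)

noncomputable def PhiG (g : ℝ → ℝ) (a : ℝ) : ℝ := ∫ x, g x * psi (x / a)

lemma TestFn.dcont (h : TestFn g x0 x1 F) : Continuous (deriv g) := h.smooth.continuous_deriv (by simp)
lemma TestFn.hd (h : TestFn g x0 x1 F) (x : ℝ) : HasDerivAt g (deriv g x) x :=
  (h.smooth.differentiable (by simp)).differentiableAt.hasDerivAt

lemma TestFn.phi_hasSum (h : TestFn g x0 x1 F) {a : ℝ} (ha : 0 < a) :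
    HasSum (fun n : ℕ => -(1 / (Real.pi * n)) * F (n / a)) (PhiG g a) := by
  have e1 : PhiG g a = - ∫ x in x0..x1, deriv g x * (a * psi2 (x / a)) := by
    rw [PhiG, h.restrict]
    have hpi : IntervalIntegrable (fun x => psi (x / a)) volume x0 x1 := by
      rw [intervalIntegrable_iff]
      apply Measure.integrableOn_of_bounded (M := 1/2)
      · simp
      · exact (psi_meas.comp (measurable_id.div_const a)).aestronglyMeasurable
      · exact Filter.Eventually.of_forall (fun t => psi_abs _)
    have := intervalIntegral.integral_mul_deriv_eq_deriv_mul_of_hasDeriv_right (a := x0) (b := x1)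
      (u := g) (u' := deriv g) (v := fun x => a * psi2 (x / a)) (v' := fun x => psi (x / a))
      h.smooth.continuous.continuousOn ((continuous_const.mul (psi2_cont.comp (continuous_id.div_const a))).continuousOn)
      (fun x _ => (h.hd x).hasDerivWithinAt) (fun x _ => by
        have d := (psi2_deriv (x/a)).comp (h := fun x => x / a) x (s := Set.Ioi x) ((hasDerivAt_id x).div_const a).hasDerivWithinAt (by
          intro y hy
          exact div_lt_div_of_pos_right hy ha)
        convert! d.const_mul a using 1
        field_simp)
      (h.dcont.intervalIntegrable _ _) hpi
    rw [this, h.end0, h.end1]; ring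
  have e2 : HasSum (fun n : ℕ => ∫ x in x0..x1, deriv g x * (a * (1 / (2 * Real.pi^2) * (1 / (n:ℝ)^2 * Real.cos (2 * Real.pi * n * (x / a))))))
      (∫ x in x0..x1, deriv g x * (a * psi2 (x / a))) := by
    apply intervalIntegral.hasSum_integral_of_dominated_convergence (fun (n : ℕ) (x : ℝ) => |deriv g x| * (a * (1 / (2 * Real.pi^2) * (1 / (n:ℝ)^2))))
    · intro n
      apply Continuous.aestronglyMeasurable
      have := h.dcont
      fun_prop
    · intro n
      refine Filter.Eventually.of_forall (fun x _ => ?_)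
      have hc := Real.abs_cos_le_one (2 * Real.pi * n * (x / a))
      rw [norm_mul, norm_mul, norm_mul, norm_mul, Real.norm_of_nonneg ha.le, Real.norm_of_nonneg (by positivity : 0 ≤ 1 / (2 * Real.pi^2)),
        Real.norm_of_nonneg (by positivity : 0 ≤ 1 / (n:ℝ)^2), Real.norm_eq_abs, Real.norm_eq_abs]
      gcongr
      exact mul_le_of_le_one_right (by positivity) hc
    · refine Filter.Eventually.of_forall (fun x _ => ?_)
      exact (((summable_inv_sq.mul_left _).mul_left _).mul_left _)
    · simp only [tsum_mul_left]
      apply Continuous.intervalIntegrable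
      have := h.dcont
      fun_prop
    · refine Filter.Eventually.of_forall (fun x _ => ?_)
      refine HasSum.mul_left _ (HasSum.mul_left _ ?_)
      have := (psi2_hasSum (x/a)).mul_left (1 / (2 * Real.pi^2))
      convert! this using 1
      field_simp
  rw [e1]
  convert! e2.neg using 1
  ext n
  by_cases hn : n = 0
  · subst hn; simp
  have hn' : (n:ℝ) ≠ 0 := by exact_mod_cast hn
  have e3 : ∫ x in x0..x1, deriv g x * Real.cos (2 * Real.pi * n * (x/a)) = 2 * Real.pi * n / a * F (n/a) := by
    have := intervalIntegral.integral_mul_deriv_eq_deriv_mul (a := x0) (b := x1)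
      (u := fun x => Real.cos (2 * Real.pi * n * (x/a))) (u' := fun x => -Real.sin (2 * Real.pi * n * (x/a)) * (2 * Real.pi * n / a)) (v := g) (v' := deriv g)
      (fun x _ => by
        have d := (((hasDerivAt_id x).div_const a).const_mul (2 * Real.pi * n)).cos
        convert! d using 1
        simp only [id, mul_one_div]) (fun x _ => h.hd x) (by apply Continuous.intervalIntegrable; fun_prop) (h.dcont.intervalIntegrable _ _)
    simp only [mul_comm (deriv g _)]
    rw [this, h.end0, h.end1, h.hF, h.restrict, ← intervalIntegral.integral_const_mul]
    simp only [mul_zero, sub_self, zero_sub, ← intervalIntegral.integral_neg]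
    congr 1; ext x
    rw [show 2 * Real.pi * x * (n / a) = 2 * Real.pi * n * (x / a) by ring]; ring
  have e4 : ∫ x in x0..x1, deriv g x * (a * (1 / (2 * Real.pi^2) * (1 / (n:ℝ)^2 * Real.cos (2 * Real.pi * n * (x / a)))))
      = (a * (1 / (2 * Real.pi^2) * (1 / (n:ℝ)^2))) * ∫ x in x0..x1, deriv g x * Real.cos (2 * Real.pi * n * (x/a)) := by
    rw [← intervalIntegral.integral_const_mul]
    congr 1; ext x; ring
  rw [e4, e3]
  field_simp

lemma TestFn.F_bound (h : TestFn g x0 x1 F) : ∃ C, 0 < C ∧ ∀ (n : ℕ) (a : ℝ), 0 < a → |F (n/a)| ≤ C * a / n := by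
  obtain ⟨C, hC, hb⟩ := sch_decay0 F 1
  refine ⟨C, hC, fun n a ha => ?_⟩
  rcases Nat.eq_zero_or_pos n with hn | hn
  · subst hn; simp [h.F0]
  have hn' : (0:ℝ) < n := by exact_mod_cast hn
  have := hb (n/a)
  rw [pow_one, abs_of_pos (by positivity : (0:ℝ) < n / a)] at this
  rw [le_div_iff₀ hn']
  rw [div_mul_eq_mul_div, div_le_iff₀ ha] at this
  linarith

lemma TestFn.int_phi_hasSum (h : TestFn g x0 x1 F) {A : ℝ} (hA : 0 < A) :
    HasSum (fun n : ℕ => ∫ t in (0:ℝ)..A, -(1 / (Real.pi * n)) * F (n / t)) (∫ t in (0:ℝ)..A, PhiG g t) := by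
  obtain ⟨C, hC, hb⟩ := h.F_bound
  apply intervalIntegral.hasSum_integral_of_dominated_convergence (fun (n : ℕ) (x : ℝ) => C * A / Real.pi * (1 / (n:ℝ)^2))
  · intro n
    exact (measurable_const.mul (F.continuous.measurable.comp (measurable_const.div measurable_id))).aestronglyMeasurable
  · intro n
    refine Filter.Eventually.of_forall (fun t ht => ?_)
    rw [Set.uIoc_of_le hA.le] at ht
    rw [norm_mul, norm_neg, Real.norm_of_nonneg (by positivity), Real.norm_eq_abs]
    calc 1 / (Real.pi * n) * |F (n / t)| ≤ 1 / (Real.pi * n) * (C * t / n) := by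
          gcongr; exact hb n t ht.1
      _ ≤ 1 / (Real.pi * n) * (C * A / n) := by gcongr; exact ht.2
      _ = _ := by ring
  · exact Filter.Eventually.of_forall (fun t ht => summable_inv_sq.mul_left _)
  · exact intervalIntegrable_const
  · refine Filter.Eventually.of_forall (fun t ht => ?_)
    rw [Set.uIoc_of_le hA.le] at ht
    exact h.phi_hasSum ht.1

noncomputable def EM (g : ℝ → ℝ) (M : ℕ) : ℝ := ∑ a ∈ Finset.Icc 1 M, PhiG g a - ∫ t in (0:ℝ)..((M:ℝ)+1/2), PhiG g t

lemma TestFn.EM_hasSum (h : TestFn g x0 x1 F) (M : ℕ) :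
    HasSum (fun n : ℕ => -(1 / (Real.pi * n)) * (psi2 (1/2) * (chi1 F (((M:ℝ)+1/2)/n) / n)
      - (1 / n) * ∫ α in (0:ℝ)..(((M:ℝ)+1/2)/n), psi2 (n * α) * chi2 F α)) (EM g M) := by
  have h1 : HasSum (fun n : ℕ => ∑ a ∈ Finset.Icc 1 M, -(1 / (Real.pi * n)) * F (n / a)) (∑ a ∈ Finset.Icc 1 M, PhiG g a) :=
    hasSum_sum (fun a ha => h.phi_hasSum (by
      have := (Finset.mem_Icc.mp ha).1
      exact_mod_cast this))
  have h2 := h1.sub (h.int_phi_hasSum (A := (M:ℝ)+1/2) (by positivity))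
  convert! h2 using 1
  ext n
  by_cases hn : n = 0
  · subst hn; simp
  have hn' : (n:ℝ) ≠ 0 := by exact_mod_cast hn
  rw [← Finset.mul_sum, intervalIntegral.integral_const_mul, ← mul_sub]
  congr 1
  have hi : ∀ x : ℝ, HasDerivAt (fun t : ℝ => t / n) (1/n) x := fun x => (hasDerivAt_id x).div_const _
  have := euler_mac (h := fun t => chi F (t / n)) (h1 := fun t => chi1 F (t/n) / n) (h2 := fun t => chi2 F (t/n) / n^2)
    (fun x => by
      have d := (chi_hd h.F0 (x/n)).comp x (hi x)
      convert! d using 1; ring)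
    (fun x => by
      have d := ((chi1_hd (F := F) (x/n)).comp x (hi x)).div_const (n:ℝ)
      convert! d using 1; ring) (by
      have := chi2_cont (F := F)
      fun_prop) (by simp [chi, h.F0]) (by simp [chi1]) M
  simp only [chi, inv_div] at this
  rw [this]
  congr 1
  have s := intervalIntegral.integral_comp_div (a := 0) (b := (M:ℝ)+1/2) (fun α => psi2 (n * α) * chi2 F α) hn'
  rw [zero_div, smul_eq_mul] at s
  have e : ∫ α in (0:ℝ)..((M:ℝ)+1/2)/n, psi2 (n*α) * chi2 F α = (1/n) * ∫ x in (0:ℝ)..((M:ℝ)+1/2), psi2 (n * (x/n)) * chi2 F (x/n) := by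
    rw [s]; field_simp
  rw [e, ← intervalIntegral.integral_const_mul, ← intervalIntegral.integral_const_mul]
  congr 1; ext x
  rw [mul_div_cancel₀ _ hn']; ring

lemma EM_lim (h : TestFn g x0 x1 F) :
    Filter.Tendsto (EM g) Filter.atTop (nhds (∑' n : ℕ, 1 / (Real.pi * n^2) * ∫ α in Set.Ioi (0:ℝ), psi2 (n * α) * chi2 F α)) := by
  have e : EM g = fun M : ℕ => ∑' n : ℕ, -(1 / (Real.pi * n)) * (psi2 (1/2) * (chi1 F (((M:ℝ)+1/2)/n) / n)
      - (1 / n) * ∫ α in (0:ℝ)..(((M:ℝ)+1/2)/n), psi2 (n * α) * chi2 F α) := by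
    ext M; exact (h.EM_hasSum M).tsum_eq.symm
  rw [e]
  obtain ⟨C, hC, hb, -⟩ := chi_bounds (F := F)
  set K := ∫ α, |chi2 F α| with hK
  have hIntg : ∀ n : ℕ, Integrable (fun α => psi2 (n * α) * chi2 F α) := by
    intro n
    refine chi2_integrable.bdd_mul (c := 1) (psi2_cont.comp (by fun_prop)).aestronglyMeasurable ?_
    exact Filter.Eventually.of_forall (fun x => psi2_abs _)
  apply tendsto_tsum_of_dominated_convergence (bound := fun n : ℕ => (C + K) / Real.pi * (1 / (n:ℝ)^2))
  · exact summable_inv_sq.mul_left _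
  · intro n
    by_cases hn : n = 0
    · subst hn; simp
    have hn' : (0:ℝ) < n := by exact_mod_cast Nat.pos_of_ne_zero hn
    have t0 : Filter.Tendsto (fun M : ℕ => ((M:ℝ)+1/2)/n) Filter.atTop Filter.atTop := by
      apply Filter.Tendsto.atTop_div_const hn'
      exact Filter.tendsto_atTop_add_const_right _ _ tendsto_natCast_atTop_atTop
    have t1 := (chi1_tendsto (F := F)).comp t0
    have t2 := intervalIntegral_tendsto_integral_Ioi (0:ℝ) (hIntg n).integrableOn t0
    have := (((t1.div_const (n:ℝ)).const_mul (psi2 (1/2))).sub (t2.const_mul (1/(n:ℝ)))).const_mul (-(1 / (Real.pi * n)))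
    convert! this using 2
    field_simp; simp
  · refine Filter.Eventually.of_forall (fun M n => ?_)
    by_cases hn : n = 0
    · subst hn; simp
    have hn' : (0:ℝ) < n := by exact_mod_cast Nat.pos_of_ne_zero hn
    rw [norm_mul, norm_neg, Real.norm_of_nonneg (by positivity : 0 ≤ 1 / (Real.pi * n))]
    have b1 : |psi2 (1/2) * (chi1 F (((M:ℝ)+1/2)/n) / n)| ≤ C / n := by
      rw [abs_mul, abs_div, abs_of_pos hn']
      have := hb (((M:ℝ)+1/2)/n)
      have h2 : C / (1 + (((M:ℝ)+1/2)/n)^2) ≤ C := div_le_self hC.le (by nlinarith [sq_nonneg (((M:ℝ)+1/2)/n)])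
      calc _ ≤ 1 * (C / n) := by
            gcongr
            · exact psi2_abs _
            · linarith
        _ = _ := one_mul _
    have b2 : |(1 / n) * ∫ α in (0:ℝ)..(((M:ℝ)+1/2)/n), psi2 (n * α) * chi2 F α| ≤ K / n := by
      rw [abs_mul, abs_of_pos (by positivity : (0:ℝ) < 1 / n)]
      have : |∫ α in (0:ℝ)..(((M:ℝ)+1/2)/n), psi2 (n * α) * chi2 F α| ≤ K := by
        rw [intervalIntegral.integral_of_le (by positivity)]
        refine (abs_integral_le_integral_abs).trans ?_
        refine (setIntegral_le_integral (hIntg n).abs (Filter.Eventually.of_forall (fun x => abs_nonneg _))).trans ?_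
        apply integral_mono (hIntg n).abs chi2_integrable.abs
        intro x
        simp only [abs_mul]
        exact mul_le_of_le_one_left (abs_nonneg _) (psi2_abs _)
      calc _ ≤ 1 / n * K := by gcongr
        _ = _ := by ring
    calc _ ≤ 1 / (Real.pi * n) * (C / n + K / n) := by
          gcongr
          rw [Real.norm_eq_abs]
          exact (abs_sub _ _).trans (add_le_add b1 b2)
      _ = _ := by field_simp

end
open MeasureTheory

section
open scoped SchwartzMap FourierTransform ContDiff
variable {g : ℝ → ℝ} {x0 x1 : ℝ} {F : 𝓢(ℝ, ℝ)}

lemma TestFn.prod_int (h : TestFn g x0 x1 F) (A : ℝ) :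
    Integrable (fun p : ℝ × ℝ => g p.1 * psi (p.1 / p.2)) (volume.prod (volume.restrict (Set.Ioc 0 A))) := by
  have h1 : Integrable (fun p : ℝ × ℝ => g p.1 * (1:ℝ)) (volume.prod (volume.restrict (Set.Ioc 0 A))) :=
    h.int.mul_prod (integrable_const (1:ℝ))
  simp only [mul_one] at h1
  refine h1.mul_bdd (c := 1/2) (psi_meas.comp (measurable_fst.div measurable_snd)).aestronglyMeasurable ?_
  exact Filter.Eventually.of_forall (fun x => psi_abs _)

lemma TestFn.delta_M (h : TestFn g x0 x1 F) {M : ℕ} (hM : x1 ≤ M) :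
    ∫ x, g x * DirichletDelta x = 1/4 * (∫ x, g x) + ((harmonic M : ℝ) - Real.log ((M:ℝ) + 1/2) - Real.eulerMascheroniConstant) * (∫ x, g x * x) - EM g M := by
  have hA : (0:ℝ) ≤ (M:ℝ) + 1/2 := by positivity
  have hx : Integrable (fun x => g x * x) := by
    apply Continuous.integrable_of_hasCompactSupport
    · have := h.smooth.continuous; fun_prop
    · exact h.cpt.mul_right
  have hp : ∀ a : ℝ, Integrable (fun x => g x * psi (x / a)) := fun a => by
    refine h.int.mul_bdd (c := 1/2) (psi_meas.comp (measurable_id.div_const a)).aestronglyMeasurable ?_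
    exact Filter.Eventually.of_forall (fun x => psi_abs _)
  have hf := h.prod_int ((M:ℝ)+1/2)
  have hq : Integrable (fun x => ∫ t in (0:ℝ)..((M:ℝ)+1/2), g x * psi (x / t)) := by
    simp only [intervalIntegral.integral_of_le hA]
    exact hf.integral_prod_left
  have hsw : ∫ x, ∫ t in (0:ℝ)..((M:ℝ)+1/2), g x * psi (x / t) = ∫ t in (0:ℝ)..((M:ℝ)+1/2), PhiG g t := by
    simp only [intervalIntegral.integral_of_le hA, PhiG]
    exact integral_integral_swap hf
  have hs : Integrable (fun x => ∑ a ∈ Finset.Icc 1 M, g x * psi (x / a)) :=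
    integrable_finsetSum _ (fun a _ => hp a)
  have e : ∀ x, g x * DirichletDelta x = (1/4 * g x + ((harmonic M : ℝ) - Real.log ((M:ℝ) + 1/2) - Real.eulerMascheroniConstant) * (g x * x))
      - (∑ a ∈ Finset.Icc 1 M, g x * psi (x / a) - ∫ t in (0:ℝ)..((M:ℝ)+1/2), g x * psi (x / t)) := by
    intro x
    by_cases hxx : x ∈ Set.Ioo x0 x1
    · rw [delta_identity (h.pos.trans hxx.1) (hxx.2.le.trans hM), intervalIntegral.integral_const_mul, ← Finset.mul_sum]
      ring
    · simp [h.supp x hxx]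
  simp only [e]
  have hL : Integrable (fun x => 1/4 * g x + ((harmonic M : ℝ) - Real.log ((M:ℝ) + 1/2) - Real.eulerMascheroniConstant) * (g x * x)) :=
    (h.int.const_mul _).add (hx.const_mul _)
  have hR : Integrable (fun x => ∑ a ∈ Finset.Icc 1 M, g x * psi (x / a) - ∫ t in (0:ℝ)..((M:ℝ)+1/2), g x * psi (x / t)) := hs.sub hq
  rw [integral_sub hL hR, integral_add (h.int.const_mul _) (hx.const_mul _),
    integral_sub hs hq, hsw, integral_finsetSum _ (fun (a : ℕ) _ => hp (a:ℝ)), integral_const_mul, integral_const_mul]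
  rfl

lemma TestFn.delta_eq (h : TestFn g x0 x1 F) :
    ∫ x, g x * DirichletDelta x = 1/4 * (∫ x, g x) - (∑' n : ℕ, 1 / (Real.pi * n^2) * ∫ α in Set.Ioi (0:ℝ), psi2 (n * α) * chi2 F α) := by
  have t1 : Filter.Tendsto (fun M : ℕ => (harmonic M : ℝ) - Real.log ((M:ℝ) + 1/2) - Real.eulerMascheroniConstant) Filter.atTop (nhds 0) := by
    have a1 := Real.tendsto_harmonic_sub_log
    have a2 : Filter.Tendsto (fun M : ℕ => Real.log ((M:ℝ) + 1/2) - Real.log M) Filter.atTop (nhds 0) := by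
      have b1 : Filter.Tendsto (fun M : ℕ => 1 + (1/2) / (M:ℝ)) Filter.atTop (nhds (1 + 0)) :=
        (tendsto_const_div_atTop_nhds_zero_nat (1/2 : ℝ)).const_add 1
      rw [add_zero] at b1
      have b2 := b1.log one_ne_zero
      rw [Real.log_one] at b2
      refine b2.congr' ?_
      filter_upwards [Filter.eventually_gt_atTop 0] with M hM
      have hM' : (0:ℝ) < M := by exact_mod_cast hM
      rw [← Real.log_div (by positivity) (by positivity)]
      congr 1; field_simp
    have := (a1.sub a2).sub_const Real.eulerMascheroniConstant
    simp only [sub_zero, sub_self] at this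
    refine this.congr (fun M => by ring)
  have t2 := ((t1.mul_const (∫ x, g x * x)).const_add (1/4 * ∫ x, g x)).sub (EM_lim h)
  rw [zero_mul, add_zero] at t2
  refine tendsto_nhds_unique (tendsto_const_nhds.congr' ?_) t2
  filter_upwards [Filter.eventually_ge_atTop ⌈x1⌉₊] with M hM
  exact h.delta_M (Nat.ceil_le.mp hM)

noncomputable def cc (F : 𝓢(ℝ, ℝ)) (m : ℕ) : ℝ := ∫ α in Set.Ioi (0:ℝ), Real.cos (2 * Real.pi * m * α) * chi2 F α

lemma cc_int (m : ℕ) : Integrable (fun α => Real.cos (2 * Real.pi * m * α) * chi2 F α) := by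
  refine chi2_integrable.bdd_mul (c := 1) (by fun_prop) ?_
  exact Filter.Eventually.of_forall (fun x => Real.abs_cos_le_one _)

lemma cc_bound (m : ℕ) : |cc F m| ≤ ∫ α, |chi2 F α| := by
  refine (abs_integral_le_integral_abs).trans ?_
  refine (setIntegral_le_integral (cc_int m).abs (Filter.Eventually.of_forall (fun x => abs_nonneg _))).trans ?_
  apply integral_mono (cc_int m).abs chi2_integrable.abs
  intro x
  simp only [abs_mul]
  exact mul_le_of_le_one_left (abs_nonneg _) (Real.abs_cos_le_one _)

lemma psi2_chi2_hasSum (n : ℕ) :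
    HasSum (fun l : ℕ => 1 / (2 * Real.pi^2) * (1 / (l:ℝ)^2) * cc F (n * l)) (∫ α in Set.Ioi (0:ℝ), psi2 (n * α) * chi2 F α) := by
  have : HasSum (fun l : ℕ => ∫ α in Set.Ioi (0:ℝ), 1 / (2 * Real.pi^2) * (1 / (l:ℝ)^2) * (Real.cos (2 * Real.pi * ((n * l : ℕ):ℝ) * α) * chi2 F α)) (∫ α in Set.Ioi (0:ℝ), psi2 (n * α) * chi2 F α) := by
    apply hasSum_integral_of_dominated_convergence (fun (l : ℕ) (α : ℝ) => 1 / (2 * Real.pi^2) * (1 / (l:ℝ)^2) * |chi2 F α|)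
    · intro l
      exact ((cc_int (n*l)).const_mul _).integrableOn.aestronglyMeasurable
    · intro l
      refine Filter.Eventually.of_forall (fun x => ?_)
      rw [norm_mul, Real.norm_of_nonneg (by positivity), Real.norm_eq_abs, abs_mul]
      gcongr
      exact mul_le_of_le_one_left (abs_nonneg _) (Real.abs_cos_le_one _)
    · refine Filter.Eventually.of_forall (fun x => ?_)
      exact (summable_inv_sq.mul_left _).mul_right _
    · simp only [tsum_mul_right]
      exact (chi2_integrable.abs.const_mul _).integrableOn
    · refine Filter.Eventually.of_forall (fun x => ?_)
      have := ((psi2_hasSum (n * x)).mul_left (1 / (2 * Real.pi^2))).mul_right (chi2 F x)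
      convert! this using 1
      · ext l
        push_cast
        rw [show 2 * Real.pi * (l:ℝ) * (n * x) = 2 * Real.pi * (n * l) * x by ring]; ring
      · field_simp
  simp only [integral_const_mul] at this
  exact this

lemma regroup : HasSum (fun m : ℕ => (divfun m : ℝ) * (1 / (2 * Real.pi^3 * m^2) * cc F m))
    (∑' n : ℕ, 1 / (Real.pi * n^2) * ∫ α in Set.Ioi (0:ℝ), psi2 (n * α) * chi2 F α) := by
  set f : ℕ × ℕ → ℝ := fun p => 1 / (2 * Real.pi^3 * ((p.1 * p.2 : ℕ):ℝ)^2) * cc F (p.1 * p.2) with hf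
  have hsum : Summable f := by
    set K := ∫ α, |chi2 F α|
    have hs : Summable (fun p : ℕ × ℕ => (1 / (p.1:ℝ)^2) * (1 / (p.2:ℝ)^2)) :=
      summable_inv_sq.mul_of_nonneg summable_inv_sq (fun n => by positivity) (fun n => by positivity)
    refine Summable.of_norm_bounded (hs.mul_left (K / (2 * Real.pi^3))) ?_
    intro p
    rw [hf]
    simp only
    rw [norm_mul, Real.norm_of_nonneg (by positivity), Real.norm_eq_abs]
    calc _ ≤ 1 / (2 * Real.pi^3 * ((p.1 * p.2 : ℕ):ℝ)^2) * K := by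
          gcongr; exact cc_bound _
      _ = _ := by push_cast; ring
  have e1 : ∑' p, f p = ∑' n : ℕ, 1 / (Real.pi * n^2) * ∫ α in Set.Ioi (0:ℝ), psi2 (n * α) * chi2 F α := by
    rw [hsum.tsum_prod]
    congr 1; ext n
    rw [← (psi2_chi2_hasSum n).tsum_eq, ← tsum_mul_left]
    congr 1; ext l
    simp only [hf]; push_cast; ring
  have h2 := hsum.hasSum.tsum_fiberwise (fun p => p.1 * p.2)
  rw [e1] at h2
  convert! h2 using 1
  ext m
  by_cases hm : m = 0
  · subst hm
    simp only [divfun, Nat.divisors_zero, Finset.card_empty, Nat.cast_zero, zero_mul]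
    symm
    convert tsum_zero with p
    have := p.2
    simp only [Set.mem_preimage, Set.mem_singleton_iff] at this
    simp only [hf, this]
    simp
  · have hset : (fun p : ℕ × ℕ => p.1 * p.2) ⁻¹' {m} = ↑(m.divisorsAntidiagonal) := by
      ext p; simp [Nat.mem_divisorsAntidiagonal, hm]
    rw [hset, Finset.tsum_subtype' m.divisorsAntidiagonal f]
    have : ∀ p ∈ m.divisorsAntidiagonal, f p = 1 / (2 * Real.pi^3 * m^2) * cc F m := by
      intro p hp
      simp only [hf, (Nat.mem_divisorsAntidiagonal.mp hp).1]
    rw [Finset.sum_congr rfl this, Finset.sum_const, nsmul_eq_mul, divfun, ← Nat.map_div_right_divisors, Finset.card_map]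

lemma TestFn.voronoi0 (h : TestFn g x0 x1 F) :
    HasSum (fun m : ℕ => (divfun m : ℝ) * (-(1 / (2 * Real.pi^3 * m^2)) * cc F m)) ((∫ x, g x * DirichletDelta x) - 1/4 * ∫ x, g x) := by
  rw [h.delta_eq]
  convert! (regroup (F := F)).neg using 1
  · ext m; ring
  · ring

lemma TestFn.cc_lim (h : TestFn g x0 x1 F) {m : ℕ} (hm : 0 < m) :
    Filter.Tendsto (fun Λ : ℝ => 2 / Real.pi * ∫ α in (0:ℝ)..Λ, Real.cos (2 * Real.pi * m * α) * chi F α) Filter.atTop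
      (nhds (-(1 / (2 * Real.pi^3 * m^2)) * cc F m)) := by
  have hm' : (0:ℝ) < m := by exact_mod_cast hm
  set om := 2 * Real.pi * m with hom
  have hom0 : 0 < om := by positivity
  have t0 := intervalIntegral_tendsto_integral_Ioi (0:ℝ) (cc_int (F := F) m).integrableOn Filter.tendsto_id
  have cchi1 : Continuous (chi1 F) := continuous_iff_continuousAt.mpr (fun x => (chi1_hd x).continuousAt)
  have cchi : Continuous (chi F) := continuous_iff_continuousAt.mpr (fun x => (chi_hd h.F0 x).continuousAt)
  have e : ∀ Λ : ℝ, ∫ α in (0:ℝ)..Λ, Real.cos (om * α) * chi F α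
      = 1/om^2 * (Real.cos (om * Λ) * chi1 F Λ) + 1/om * (Real.sin (om * Λ) * chi F Λ) - 1/om^2 * ∫ α in (0:ℝ)..Λ, Real.cos (om * α) * chi2 F α := by
    intro Λ
    have dl : ∀ x : ℝ, HasDerivAt (fun x : ℝ => om * x) om x := fun x => by simpa using (hasDerivAt_id x).const_mul om
    have i1 := intervalIntegral.integral_mul_deriv_eq_deriv_mul (a := 0) (b := Λ) (u := fun α => Real.cos (om * α)) (u' := fun α => -Real.sin (om * α) * om)
      (v := chi1 F) (v' := chi2 F) (fun x _ => (dl x).cos) (fun x _ => chi1_hd x) (by apply Continuous.intervalIntegrable; fun_prop)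
      (chi2_cont.intervalIntegrable _ _)
    have i2 := intervalIntegral.integral_mul_deriv_eq_deriv_mul (a := 0) (b := Λ) (u := fun α => -Real.sin (om * α) * om) (u' := fun α => -(Real.cos (om * α) * om) * om)
      (v := chi F) (v' := chi1 F) (fun x _ => ((dl x).sin.neg.mul_const om)) (fun x _ => chi_hd h.F0 x) (by apply Continuous.intervalIntegrable; fun_prop)
      (cchi1.intervalIntegrable _ _)
    rw [i2, chi1_zero, chi_zero h.F0] at i1
    have i3 : ∫ x in (0:ℝ)..Λ, -(Real.cos (om * x) * om) * om * chi F x = -om^2 * ∫ α in (0:ℝ)..Λ, Real.cos (om * α) * chi F α := by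
      rw [← intervalIntegral.integral_const_mul]; congr 1; ext x; ring
    rw [i3] at i1
    rw [i1]; field_simp; ring
  simp only [e]
  have tb : ∀ (s : ℝ → ℝ) (p : ℝ → ℝ), (∀ x, |s x| ≤ 1) → Filter.Tendsto p Filter.atTop (nhds 0) → Filter.Tendsto (fun x => s x * p x) Filter.atTop (nhds 0) := by
    intro s p hs hp
    apply squeeze_zero_norm (a := fun x => |p x|)
    · intro x; rw [norm_mul]; exact mul_le_of_le_one_left (norm_nonneg _) (hs x)
    · simpa using hp.abs
  have t1 := tb (fun Λ => Real.cos (om * Λ)) _ (fun x => Real.abs_cos_le_one _) (chi1_tendsto (F := F))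
  have t2 := tb (fun Λ => Real.sin (om * Λ)) _ (fun x => Real.abs_sin_le_one _) (chi_tendsto h.F0)
  have := ((((t1.const_mul (1/om^2)).add (t2.const_mul (1/om))).sub (t0.const_mul (1/om^2)))).const_mul (2/Real.pi)
  convert! this using 2
  rw [cc, mul_zero, mul_zero, add_zero, hom]
  field_simp
  ring

end
open MeasureTheory

lemma osc_sub {q r Λ : ℝ} (hq : 0 < q) (hr : 0 < r) :
    ∫ α in (0:ℝ)..Λ, Real.cos (2 * Real.pi * r^4 * α) * Real.sin (2 * Real.pi * q^4 * α⁻¹)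
      = q^2 / r^2 * JJ (2 * Real.pi * q^2 * r^2) (Λ * r^2 / q^2) := by
  have hc : r^2/q^2 ≠ 0 := by positivity
  have := intervalIntegral.integral_comp_mul_left (a := 0) (b := Λ)
    (fun t => Real.sin ((2 * Real.pi * q^2 * r^2) / t) * Real.cos ((2 * Real.pi * q^2 * r^2) * t)) hc
  rw [mul_zero, smul_eq_mul] at this
  rw [JJ, show Λ * r^2/q^2 = r^2/q^2 * Λ by ring, show q^2/r^2 = (r^2/q^2)⁻¹ by rw [inv_div], ← this]
  congr 1; ext α
  rw [show 2 * Real.pi * q ^ 2 * r ^ 2 * (r ^ 2 / q ^ 2 * α) = 2 * Real.pi * r^4 * α by field_simp]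
  rw [show 2 * Real.pi * q ^ 2 * r ^ 2 / (r ^ 2 / q ^ 2 * α) = 2 * Real.pi * q^4 * α⁻¹ by
    by_cases h : α = 0
    · subst h; simp
    field_simp]
  ring

lemma osc_bound {q r Λ : ℝ} (hq : 1 ≤ q) (hr : 1 ≤ r) (hΛ : 4 ≤ Λ * r^2 / q^2) :
    |(∫ α in (0:ℝ)..Λ, Real.cos (2 * Real.pi * r^4 * α) * Real.sin (2 * Real.pi * q^4 * α⁻¹))
      - q / (2 * √2 * r^3) * Real.cos (4 * Real.pi * (q^2 * r^2) - Real.pi/4)| ≤ 80 / (q * r^5) + q^2/r^2 * (11 / √(Λ * r^2 / q^2)) := by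
  have hq0 : 0 < q := by linarith
  have hr0 : 0 < r := by linarith
  rw [osc_sub hq0 hr0]
  set z := 2 * Real.pi * q^2 * r^2 with hz
  have hqr : 1 ≤ q^2 * r^2 := by nlinarith [one_le_pow₀ hq (n := 2), one_le_pow₀ hr (n := 2)]
  have hz1 : q^2 * r^2 ≤ z := by
    rw [hz]; nlinarith [Real.pi_gt_three]
  have hP : 2 ≤ √(Λ * r^2 / q^2) := by
    rw [show (2:ℝ) = √4 by rw [show (4:ℝ) = 2^2 by norm_num]; simp]
    exact Real.sqrt_le_sqrt hΛ
  have hB := lemmaB (hqr.trans hz1) hP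
  rw [Real.sq_sqrt (by linarith)] at hB
  have hs : √(Real.pi / z) = 1 / (√2 * q * r) := by
    rw [Real.sqrt_eq_iff_mul_self_eq_of_pos (by positivity)]
    rw [hz]
    have : √2 * √2 = 2 := Real.mul_self_sqrt (by norm_num)
    field_simp
    nlinarith
  have e : q^2/r^2 * JJ z (Λ * r^2/q^2) - q / (2 * √2 * r^3) * Real.cos (4 * Real.pi * (q^2 * r^2) - Real.pi/4)
     = q^2/r^2 * (JJ z (Λ * r^2/q^2) - 1/2 * √(Real.pi/z) * Real.cos (2 * z - Real.pi/4)) := by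
    rw [hs, show 4 * Real.pi * (q^2 * r^2) - Real.pi/4 = 2 * z - Real.pi/4 by rw [hz]; ring]
    field_simp
  rw [e, abs_mul, abs_of_pos (by positivity : 0 < q^2/r^2)]
  have h1 : 80 / (z * √z) ≤ 80 / (q^3 * r^3) := by
    have : q * r ≤ √z := by
      apply Real.le_sqrt_of_sq_le; nlinarith
    have : q^3 * r^3 ≤ z * √z := by
      calc q^3 * r^3 = (q^2 * r^2) * (q * r) := by ring
        _ ≤ z * √z := by gcongr
    gcongr
  calc _ ≤ q^2/r^2 * (80 / (q^3 * r^3) + 11 / √(Λ * r^2/q^2)) := by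
        gcongr; linarith
    _ = _ := by field_simp

section
open scoped SchwartzMap FourierTransform ContDiff
variable {g : ℝ → ℝ} {x0 x1 : ℝ} {F : 𝓢(ℝ, ℝ)}

lemma quarter_pow {x : ℝ} (hx : 0 < x) : (x^((1:ℝ)/4))^4 = x := by
  rw [← Real.rpow_natCast, ← Real.rpow_mul hx.le]; norm_num

lemma quarter_sq {x y : ℝ} (hx : 0 < x) (hy : 0 < y) : (x^((1:ℝ)/4))^2 * (y^((1:ℝ)/4))^2 = √(y * x) := by
  symm
  rw [Real.sqrt_eq_iff_mul_self_eq_of_pos (by positivity)]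
  calc _ = (x^((1:ℝ)/4))^4 * (y^((1:ℝ)/4))^4 := by ring
    _ = _ := by rw [quarter_pow hx, quarter_pow hy]; ring

lemma TestFn.osc_fubini (h : TestFn g x0 x1 F) (m : ℕ) {Λ : ℝ} (hΛ : 0 ≤ Λ) :
    (∫ α in (0:ℝ)..Λ, Real.cos (2 * Real.pi * m * α) * chi F α)
      = ∫ x, g x * ∫ α in (0:ℝ)..Λ, Real.cos (2 * Real.pi * m * α) * Real.sin (2 * Real.pi * x * α⁻¹)
    ∧ Integrable (fun x => g x * ∫ α in (0:ℝ)..Λ, Real.cos (2 * Real.pi * m * α) * Real.sin (2 * Real.pi * x * α⁻¹)) := by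
  have h1 : Integrable (fun p : ℝ × ℝ => g p.1 * (1:ℝ)) (volume.prod (volume.restrict (Set.Ioc 0 Λ))) :=
    h.int.mul_prod (integrable_const (1:ℝ))
  simp only [mul_one] at h1
  have h2 : Integrable (fun p : ℝ × ℝ => g p.1 * (Real.cos (2 * Real.pi * m * p.2) * Real.sin (2 * Real.pi * p.1 * p.2⁻¹))) (volume.prod (volume.restrict (Set.Ioc 0 Λ))) := by
    refine h1.mul_bdd (c := 1) (by
      apply Measurable.aestronglyMeasurable
      fun_prop) ?_
    refine Filter.Eventually.of_forall (fun p => ?_)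
    rw [norm_mul]
    exact mul_le_one₀ (Real.abs_cos_le_one _) (norm_nonneg _) (Real.abs_sin_le_one _)
  simp only [← intervalIntegral.integral_const_mul]
  constructor
  · simp only [intervalIntegral.integral_of_le hΛ]
    rw [integral_integral_swap h2]
    congr 1; ext α
    rw [chi, h.hF, ← integral_const_mul]
    congr 1; ext x; ring
  · simp only [intervalIntegral.integral_of_le hΛ]
    exact h2.integral_prod_left

lemma TestFn.tau_bound (h : TestFn g x0 x1 F) (hx0 : 1 ≤ x0) {m : ℕ} (hm : 0 < m) :
    |-(1 / (2 * Real.pi^3 * m^2)) * cc F m - 1 / (√2 * Real.pi) * (1 / ((m:ℝ)^((1:ℝ)/4))^3) * ∫ x, g x * (x^((1:ℝ)/4) * Real.cos (4 * Real.pi * √(m * x) - Real.pi/4))|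
     ≤ 80 / ((m:ℝ)^((1:ℝ)/4))^5 * ∫ x, |g x| := by
  have hm' : (1:ℝ) ≤ m := by exact_mod_cast hm
  have hm0 : (0:ℝ) < m := by linarith
  set r := (m:ℝ)^((1:ℝ)/4) with hr
  have hr1 : 1 ≤ r := Real.one_le_rpow hm' (by norm_num)
  have hr4 : r^4 = m := quarter_pow hm0
  have hx1 : 0 < x1 := by linarith [h.le]
  set q1 := x1^((1:ℝ)/4) with hq1
  have hq1p : 0 < q1 := by positivity
  set main := ∫ x, g x * (x^((1:ℝ)/4) * Real.cos (4 * Real.pi * √(m * x) - Real.pi/4)) with hmain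
  have hmi : Integrable (fun x => g x * (x^((1:ℝ)/4) * Real.cos (4 * Real.pi * √(m * x) - Real.pi/4))) := by
    apply Continuous.integrable_of_hasCompactSupport
    · have := h.smooth.continuous
      have : Continuous (fun x : ℝ => x^((1:ℝ)/4)) := Real.continuous_rpow_const (by norm_num)
      fun_prop
    · exact h.cpt.mul_right
  set eps : ℝ → ℝ := fun Λ => q1^2 * (11 / √(Λ / q1^2)) with heps
  have teps : Filter.Tendsto eps Filter.atTop (nhds 0) := by
    have t1 : Filter.Tendsto (fun Λ : ℝ => √(Λ / q1^2)) Filter.atTop Filter.atTop :=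
      Real.tendsto_sqrt_atTop.comp (Filter.Tendsto.atTop_div_const (by positivity) Filter.tendsto_id)
    have := (t1.const_div_atTop 11).const_mul (q1^2)
    rwa [mul_zero] at this
  have tl := (h.cc_lim hm).sub_const (1 / (√2 * Real.pi) * (1 / r^3) * main)
  have tr := (teps.const_add (80 / r^5)).mul_const (∫ x, |g x|)
  rw [add_zero] at tr
  refine le_of_tendsto_of_tendsto tl.abs tr ?_
  filter_upwards [Filter.eventually_ge_atTop (4 * q1^2)] with Λ hΛ
  have hΛ0 : 0 < Λ := lt_of_lt_of_le (by positivity) hΛ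
  obtain ⟨f1, f2⟩ := h.osc_fubini m hΛ0.le
  rw [f1]
  have e : 2 / Real.pi * (∫ x, g x * ∫ α in (0:ℝ)..Λ, Real.cos (2 * Real.pi * m * α) * Real.sin (2 * Real.pi * x * α⁻¹)) - 1 / (√2 * Real.pi) * (1 / r^3) * main
     = 2 / Real.pi * ∫ x, (g x * (∫ α in (0:ℝ)..Λ, Real.cos (2 * Real.pi * m * α) * Real.sin (2 * Real.pi * x * α⁻¹))
        - 1 / (2 * √2 * r^3) * (g x * (x^((1:ℝ)/4) * Real.cos (4 * Real.pi * √(m * x) - Real.pi/4)))) := by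
    rw [integral_sub f2 (hmi.const_mul _), integral_const_mul, ← hmain]
    field_simp
  rw [e, abs_mul, abs_of_pos (by positivity : 0 < 2 / Real.pi)]
  have hb : |∫ x, (g x * (∫ α in (0:ℝ)..Λ, Real.cos (2 * Real.pi * m * α) * Real.sin (2 * Real.pi * x * α⁻¹))
        - 1 / (2 * √2 * r^3) * (g x * (x^((1:ℝ)/4) * Real.cos (4 * Real.pi * √(m * x) - Real.pi/4))))| ≤ (80 / r^5 + eps Λ) * ∫ x, |g x| := by
    rw [← integral_const_mul, ← Real.norm_eq_abs]
    apply norm_integral_le_of_norm_le (h.int.abs.const_mul _)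
    refine Filter.Eventually.of_forall (fun x => ?_)
    by_cases hx : x ∈ Set.Ioo x0 x1
    swap
    · simp [h.supp x hx]
    have hx1' : 1 ≤ x := by linarith [hx.1]
    have hxp : 0 < x := by linarith
    set q := x^((1:ℝ)/4) with hq
    have hq1' : 1 ≤ q := Real.one_le_rpow hx1' (by norm_num)
    have hqq : q ≤ q1 := Real.rpow_le_rpow hxp.le hx.2.le (by norm_num)
    have hq0 : 0 < q := by linarith
    have hr0 : 0 < r := by linarith
    have hP : Λ / q1^2 ≤ Λ * r^2 / q^2 := by
      gcongr
      nlinarith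
    have hP4 : 4 ≤ Λ / q1^2 := by rw [le_div_iff₀ (by positivity)]; exact hΛ
    have := osc_bound (Λ := Λ) hq1' hr1 (hP4.trans hP)
    rw [hr4, quarter_pow hxp, quarter_sq hxp hm0] at this
    rw [Real.norm_eq_abs]
    have e2 : g x * (∫ α in (0:ℝ)..Λ, Real.cos (2 * Real.pi * m * α) * Real.sin (2 * Real.pi * x * α⁻¹))
        - 1 / (2 * √2 * r^3) * (g x * (q * Real.cos (4 * Real.pi * √(m * x) - Real.pi/4)))
       = g x * ((∫ α in (0:ℝ)..Λ, Real.cos (2 * Real.pi * m * α) * Real.sin (2 * Real.pi * x * α⁻¹)) - q / (2 * √2 * r^3) * Real.cos (4 * Real.pi * √(m * x) - Real.pi/4)) := by ring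
    rw [e2, abs_mul, mul_comm]
    gcongr
    refine this.trans (add_le_add ?_ ?_)
    · gcongr
      have : 0 < r^5 := by positivity
      nlinarith
    · simp only [heps]
      have : 0 < √(Λ/q1^2) := Real.sqrt_pos.mpr (by linarith)
      gcongr
      calc q^2/r^2 ≤ q^2 := div_le_self (by positivity) (by nlinarith)
        _ ≤ q1^2 := by gcongr
  have hpi : 2 / Real.pi ≤ 1 := by rw [div_le_one (by positivity)]; linarith [Real.pi_gt_three]
  exact (mul_le_of_le_one_left (abs_nonneg _) hpi).trans hb
end
open MeasureTheory

noncomputable def bmp : ContDiffBump (0:ℝ) := ⟨1/2, 1, by norm_num, by norm_num⟩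
noncomputable def rho : ℝ → ℝ := bmp.normed volume

section
open scoped SchwartzMap FourierTransform ContDiff

lemma rho_smooth : ContDiff ℝ ∞ rho := bmp.contDiff_normed
lemma rho_nonneg (w : ℝ) : 0 ≤ rho w := bmp.nonneg_normed w
lemma rho_neg (w : ℝ) : rho (-w) = rho w := bmp.normed_neg w
lemma rho_integral : ∫ w, rho w = 1 := bmp.integral_normed
lemma rho_supp {w : ℝ} (hw : w ∉ Set.Ioo (-1:ℝ) 1) : rho w = 0 := by
  have h : Function.support rho = Metric.ball 0 1 := bmp.support_normed_eq
  by_contra hne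
  have : w ∈ Metric.ball (0:ℝ) 1 := h ▸ hne
  rw [Real.ball_eq_Ioo] at this
  simp at this
  exact hw this
lemma rho_cpt : HasCompactSupport rho := bmp.hasCompactSupport_normed
lemma rho_cont : Continuous rho := rho_smooth.continuous
lemma rho_int : Integrable rho := rho_cont.integrable_of_hasCompactSupport rho_cpt

lemma rho_restrict (f : ℝ → ℝ) : ∫ w in Set.Ioo (-1:ℝ) 1, rho w * f w = ∫ w, rho w * f w := by
  rw [setIntegral_eq_integral_of_forall_compl_eq_zero]
  intro w hw; rw [rho_supp hw, zero_mul]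

noncomputable def gfun (u δ x : ℝ) : ℝ := 1/2 * √u * (1/δ) * rho ((√x - u)/δ) / (√x * √(√x))

lemma gfun_supp {u δ : ℝ} (hu : 3 ≤ u) (hδ : 0 < δ) (hδ1 : δ ≤ 1) {x : ℝ} (hx : x ∉ Set.Ioo ((u-δ)^2) ((u+δ)^2)) : gfun u δ x = 0 := by
  have : rho ((√x - u)/δ) = 0 := by
    apply rho_supp
    intro hh
    apply hx
    have h1 : u - δ < √x := by
      have := hh.1; rw [lt_div_iff₀ hδ] at this; linarith
    have h2 : √x < u + δ := by
      have := hh.2; rw [div_lt_iff₀ hδ] at this; linarith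
    have h3 : 0 < √x := by linarith
    have hx0 : 0 < x := Real.sqrt_pos.mp h3
    have h4 := Real.sq_sqrt hx0.le
    constructor
    · rw [← h4]; exact pow_lt_pow_left₀ h1 (by linarith) two_ne_zero
    · rw [← h4]; exact pow_lt_pow_left₀ h2 h3.le two_ne_zero
  rw [gfun, this]; simp

lemma gfun_smooth {u δ : ℝ} (hu : 3 ≤ u) (hδ : 0 < δ) (hδ1 : δ ≤ 1) : ContDiff ℝ ∞ (gfun u δ) := by
  rw [contDiff_iff_contDiffAt]
  intro x
  by_cases hx : x < 1
  · have : gfun u δ =ᶠ[nhds x] fun _ => 0 := by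
      filter_upwards [Iio_mem_nhds hx] with z hz
      apply gfun_supp hu hδ hδ1
      intro hh
      have : (1:ℝ) ≤ (u-δ)^2 := by nlinarith
      have hz' : z < 1 := hz
      linarith [hh.1]
    exact contDiffAt_const.congr_of_eventuallyEq this
  · have hx0 : 0 < x := by linarith
    have h1 : ContDiffAt ℝ ∞ (fun x => √x) x := contDiffAt_id.sqrt hx0.ne'
    have h2 : ContDiffAt ℝ ∞ (fun x => √(√x)) x := h1.sqrt (Real.sqrt_pos.mpr hx0).ne'
    have h3 : ContDiffAt ℝ ∞ (fun x => rho ((√x - u)/δ)) x :=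
      (rho_smooth.contDiffAt).comp x ((h1.sub contDiffAt_const).div_const δ)
    unfold gfun
    apply ContDiffAt.div
    · exact contDiffAt_const.mul h3
    · exact h1.mul h2
    · have := Real.sqrt_pos.mpr hx0
      have := Real.sqrt_pos.mpr this
      positivity

lemma gfun_cov {u δ : ℝ} (hu : 3 ≤ u) (hδ : 0 < δ) (hδ1 : δ ≤ 1) (f : ℝ → ℝ) :
    ∫ x, gfun u δ x * f x = ∫ w, rho w * (√(u / (u + δ * w)) * f ((u + δ * w)^2)) := by
  have e1 : ∫ x, gfun u δ x * f x = ∫ x in Set.Ioo ((u-δ)^2) ((u+δ)^2), gfun u δ x * f x := by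
    rw [setIntegral_eq_integral_of_forall_compl_eq_zero]
    intro w hw; rw [gfun_supp hu hδ hδ1 hw, zero_mul]
  have himg : (fun w : ℝ => (u + δ * w)^2) '' Set.Ioo (-1) 1 = Set.Ioo ((u-δ)^2) ((u+δ)^2) := by
    ext x
    constructor
    · rintro ⟨w, hw, rfl⟩
      constructor
      · exact pow_lt_pow_left₀ (by nlinarith [hw.1]) (by linarith) two_ne_zero
      · exact pow_lt_pow_left₀ (by nlinarith [hw.2]) (by nlinarith [hw.1]) two_ne_zero
    · intro hx
      have hx0 : 0 < x := lt_of_le_of_lt (sq_nonneg _) hx.1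
      have hsq : u - δ < √x := Real.lt_sqrt_of_sq_lt hx.1
      have hsq2 : √x < u + δ := by
        rw [Real.sqrt_lt' (by linarith)]; exact hx.2
      refine ⟨(√x - u)/δ, ⟨?_, ?_⟩, ?_⟩
      · rw [lt_div_iff₀ hδ]; linarith
      · rw [div_lt_iff₀ hδ]; linarith
      · simp only
        rw [mul_div_cancel₀ _ hδ.ne', add_sub_cancel, Real.sq_sqrt hx0.le]
  have hinj : Set.InjOn (fun w : ℝ => (u + δ * w)^2) (Set.Ioo (-1) 1) := by
    intro a ha b hb hab
    have := (sq_eq_sq₀ (by nlinarith [ha.1]) (by nlinarith [hb.1])).mp hab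
    have : δ * a = δ * b := by linarith
    exact mul_left_cancel₀ hδ.ne' this
  have hd : ∀ w ∈ Set.Ioo (-1:ℝ) 1, HasDerivWithinAt (fun w : ℝ => (u + δ * w)^2) (2 * (u + δ * w) * δ) (Set.Ioo (-1) 1) w := by
    intro w _
    have := ((((hasDerivAt_id w).const_mul δ).const_add u).pow 2).hasDerivWithinAt (s := Set.Ioo (-1:ℝ) 1)
    convert! this using 1
    simp
  rw [e1, ← himg, integral_image_eq_integral_abs_deriv_smul measurableSet_Ioo hd hinj, ← rho_restrict]
  apply setIntegral_congr_fun measurableSet_Ioo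
  intro w hw
  have hv : 0 < u + δ * w := by nlinarith [hw.1]
  simp only [smul_eq_mul, gfun]
  rw [abs_of_pos (by positivity), Real.sqrt_sq hv.le, add_sub_cancel_left, mul_div_cancel_left₀ _ hδ.ne', Real.sqrt_div (by linarith)]
  have := Real.sqrt_pos.mpr hv
  field_simp

noncomputable def WW (t : ℝ) : ℝ := ∫ w, rho w * Real.cos (4 * Real.pi * t * w)

lemma rho_cos_int (t : ℝ) : Integrable (fun w => rho w * Real.cos (4 * Real.pi * t * w)) := by
  refine rho_int.mul_bdd (c := 1) (by fun_prop) ?_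
  exact Filter.Eventually.of_forall (fun x => Real.abs_cos_le_one _)

lemma WW_abs (t : ℝ) : |WW t| ≤ 1 := by
  rw [← rho_integral, WW, ← Real.norm_eq_abs]
  apply norm_integral_le_of_norm_le rho_int
  refine Filter.Eventually.of_forall (fun w => ?_)
  rw [norm_mul, Real.norm_of_nonneg (rho_nonneg w)]
  exact mul_le_of_le_one_right (rho_nonneg w) (Real.abs_cos_le_one _)

lemma WW_sub_one {t : ℝ} (ht : 0 ≤ t) : |WW t - 1| ≤ 4 * Real.pi * t := by
  have e : WW t - 1 = ∫ w, rho w * (Real.cos (4 * Real.pi * t * w) - 1) := by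
    simp only [mul_sub, mul_one]
    rw [integral_sub (rho_cos_int t) rho_int, rho_integral, WW]
  rw [e, ← Real.norm_eq_abs]
  have : 4 * Real.pi * t = ∫ w, rho w * (4 * Real.pi * t) := by rw [integral_mul_const, rho_integral, one_mul]
  refine le_trans ?_ this.ge
  apply norm_integral_le_of_norm_le (rho_int.mul_const _)
  refine Filter.Eventually.of_forall (fun w => ?_)
  rw [norm_mul, Real.norm_of_nonneg (rho_nonneg w), Real.norm_eq_abs]
  by_cases hw : w ∈ Set.Ioo (-1:ℝ) 1
  · apply mul_le_mul_of_nonneg_left _ (rho_nonneg w)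
    have h1 := Real.abs_cos_sub_cos_le (4 * Real.pi * t * w) 0
    rw [Real.cos_zero, sub_zero, abs_mul, abs_of_nonneg (by positivity : 0 ≤ 4 * Real.pi * t)] at h1
    refine h1.trans (mul_le_of_le_one_right (by positivity) (abs_le.mpr ⟨hw.1.le, hw.2.le⟩))
  · simp [rho_supp hw]

lemma WW_decay : ∃ C, 0 < C ∧ ∀ t, t^2 * |WW t| ≤ C := by
  have h1 : HasCompactSupport (fun x => (rho x : ℂ)) := rho_cpt.comp_left (g := fun r : ℝ => (r:ℂ)) (by simp)
  have h2 : ContDiff ℝ ∞ (fun x => (rho x : ℂ)) := Complex.ofRealCLM.contDiff.comp rho_smooth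
  set G : 𝓢(ℝ, ℂ) := h1.toSchwartzMap h2
  have hG : ⇑G = fun x => (rho x : ℂ) := rfl
  set F : 𝓢(ℝ, ℝ) := SchwartzMap.postcompCLM Complex.reCLM (𝓕 G)
  have hF : ∀ t, F (2 * t) = WW t := by
    intro t
    rw [SchwartzMap.postcompCLM_apply, SchwartzMap.fourier_coe, Real.fourier_real_eq_integral_exp_smul,
      hG, ← ContinuousLinearMap.integral_comp_comm]
    · rw [WW]
      congr 1; ext x
      simp only [Complex.reCLM_apply, smul_eq_mul]
      rw [Complex.re_mul_ofReal, Complex.exp_ofReal_mul_I_re]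
      rw [show -2 * Real.pi * x * (2 * t) = -(4 * Real.pi * t * x) by ring, Real.cos_neg]; ring
    · have hi : Integrable (fun x => (rho x : ℂ)) := h2.continuous.integrable_of_hasCompactSupport h1
      refine hi.bdd_mul (c := 1) (by fun_prop) ?_
      exact Filter.Eventually.of_forall (fun x => by rw [Complex.norm_exp_ofReal_mul_I])
  obtain ⟨C, hC, hb⟩ := sch_decay0 F 2
  refine ⟨C, hC, fun t => ?_⟩
  have := hb (2 * t)
  rw [hF, sq_abs] at this
  nlinarith [abs_nonneg (WW t), sq_nonneg t, mul_nonneg (sq_nonneg t) (abs_nonneg (WW t))]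

lemma rho_sin (t : ℝ) : ∫ w, rho w * Real.sin (4 * Real.pi * t * w) = 0 := by
  have h := integral_neg_eq_self (fun w => rho w * Real.sin (4 * Real.pi * t * w)) volume
  have : ∀ w, rho (-w) * Real.sin (4 * Real.pi * t * (-w)) = -(rho w * Real.sin (4 * Real.pi * t * w)) := by
    intro w
    rw [rho_neg, mul_neg, Real.sin_neg]; ring
  simp only [this, integral_neg] at h
  linarith

lemma gfun_main {u δ : ℝ} (hu : 3 ≤ u) (hδ : 0 < δ) (hδ1 : δ ≤ 1) (m : ℕ) :
    ∫ x, gfun u δ x * (x^((1:ℝ)/4) * Real.cos (4 * Real.pi * √(m * x) - Real.pi/4))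
     = √u * (WW (δ * √m) * Real.cos (4 * Real.pi * √m * u - Real.pi/4)) := by
  rw [gfun_cov hu hδ hδ1]
  have e : ∀ w, rho w * (√(u / (u + δ * w)) * (((u + δ * w)^2)^((1:ℝ)/4) * Real.cos (4 * Real.pi * √(m * (u + δ * w)^2) - Real.pi/4)))
     = √u * (Real.cos (4 * Real.pi * √m * u - Real.pi/4)) * (rho w * Real.cos (4 * Real.pi * (δ * √m) * w))
      - √u * (Real.sin (4 * Real.pi * √m * u - Real.pi/4)) * (rho w * Real.sin (4 * Real.pi * (δ * √m) * w)) := by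
    intro w
    by_cases hw : w ∈ Set.Ioo (-1:ℝ) 1
    swap
    · simp [rho_supp hw]
    have hv : 0 < u + δ * w := by nlinarith [hw.1]
    have h1 : ((u + δ * w)^2)^((1:ℝ)/4) = √(u + δ * w) := by
      rw [Real.sqrt_eq_rpow, ← Real.rpow_natCast, ← Real.rpow_mul hv.le]; norm_num
    have h2 : √(u / (u + δ * w)) * √(u + δ * w) = √u := by
      rw [← Real.sqrt_mul (by positivity), div_mul_cancel₀ _ hv.ne']
    have h3 : √(m * (u + δ * w)^2) = √m * (u + δ * w) := by
      rw [Real.sqrt_mul (by positivity), Real.sqrt_sq hv.le]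
    have h4 : 4 * Real.pi * (√m * (u + δ * w)) - Real.pi/4 = (4 * Real.pi * √m * u - Real.pi/4) + 4 * Real.pi * (δ * √m) * w := by ring
    rw [h1, h3, h4, Real.cos_add, ← mul_assoc (√(u / (u + δ * w))), h2]; ring
  simp only [e]
  have si : Integrable (fun w => rho w * Real.sin (4 * Real.pi * (δ * √m) * w)) := by
    refine rho_int.mul_bdd (c := 1) (by fun_prop) ?_
    exact Filter.Eventually.of_forall (fun x => Real.abs_sin_le_one _)
  rw [integral_sub ((rho_cos_int _).const_mul _) (si.const_mul _), integral_const_mul, integral_const_mul, rho_sin, WW]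
  ring

lemma gfun_int_bound {u δ : ℝ} (hu : 3 ≤ u) (hδ : 0 < δ) (hδ1 : δ ≤ 1) : (∫ x, |gfun u δ x|) ≤ 2 ∧ |∫ x, gfun u δ x| ≤ 2 := by
  have hnn : ∀ x, 0 ≤ gfun u δ x := fun x => by
    unfold gfun
    have := rho_nonneg ((√x - u)/δ)
    positivity
  have e : ∀ x, |gfun u δ x| = gfun u δ x * 1 := fun x => by rw [abs_of_nonneg (hnn x), mul_one]
  have h1 : (∫ x, |gfun u δ x|) ≤ 2 := by
    simp only [e]
    rw [gfun_cov hu hδ hδ1 (fun _ => 1)]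
    have : (2:ℝ) = ∫ w, rho w * 2 := by rw [integral_mul_const, rho_integral, one_mul]
    rw [this]
    apply integral_mono_of_nonneg
    · exact Filter.Eventually.of_forall (fun w => mul_nonneg (rho_nonneg w) (by positivity))
    · exact rho_int.mul_const 2
    · refine Filter.Eventually.of_forall (fun w => ?_)
      by_cases hw : w ∈ Set.Ioo (-1:ℝ) 1
      swap
      · simp [rho_supp hw]
      have hv : u/2 ≤ u + δ * w := by nlinarith [hw.1]
      have hv0 : 0 < u + δ * w := by linarith
      apply mul_le_mul_of_nonneg_left _ (rho_nonneg w)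
      rw [mul_one]
      apply Real.sqrt_le_iff.mpr ⟨by norm_num, ?_⟩
      rw [div_le_iff₀ hv0]; linarith
  exact ⟨h1, (abs_integral_le_integral_abs).trans h1⟩

lemma div_summable {s : ℝ} (hs : 1 < s) : Summable (fun m : ℕ => (divfun m : ℝ) * (1 / (m:ℝ)^s)) := by
  have h0 : Summable (fun n : ℕ => 1 / (n:ℝ)^s) := Real.summable_one_div_nat_rpow.mpr hs
  have h1 : Summable (fun p : ℕ × ℕ => (1 / (p.1:ℝ)^s) * (1 / (p.2:ℝ)^s)) :=
    h0.mul_of_nonneg h0 (fun n => by positivity) (fun n => by positivity)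
  set f : ℕ × ℕ → ℝ := fun p => 1 / (((p.1 * p.2 : ℕ):ℝ))^s with hf
  have h2 : Summable f := by
    refine h1.congr (fun p => ?_)
    simp only [hf]; push_cast
    rw [Real.mul_rpow (by positivity) (by positivity)]; field_simp
  have h3 := (h2.hasSum.tsum_fiberwise (fun p => p.1 * p.2)).summable
  refine h3.congr (fun m => ?_)
  by_cases hm : m = 0
  · subst hm
    simp only [divfun, Nat.divisors_zero, Finset.card_empty, Nat.cast_zero, zero_mul]
    convert tsum_zero with p
    have := p.2
    simp only [Set.mem_preimage, Set.mem_singleton_iff] at this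
    simp only [hf, this]
    simp [Real.zero_rpow (by linarith : s ≠ 0)]
  · have hset : (fun p : ℕ × ℕ => p.1 * p.2) ⁻¹' {m} = ↑(m.divisorsAntidiagonal) := by
      ext p; simp [Nat.mem_divisorsAntidiagonal, hm]
    rw [hset, Finset.tsum_subtype' m.divisorsAntidiagonal f]
    have : ∀ p ∈ m.divisorsAntidiagonal, f p = 1 / (m:ℝ)^s := by
      intro p hp
      simp only [hf, (Nat.mem_divisorsAntidiagonal.mp hp).1]
    rw [Finset.sum_congr rfl this, Finset.sum_const, nsmul_eq_mul, divfun, ← Nat.map_div_right_divisors, Finset.card_map]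

noncomputable def coefA (δ : ℝ) (m : ℕ) : ℝ := 1 / (√2 * Real.pi) * ((divfun m : ℝ) * (1 / (m:ℝ)^((3:ℝ)/4)) * WW (δ * √m))

lemma coefA_summable {δ : ℝ} (hδ : 0 < δ) : Summable (fun m => |coefA δ m|) := by
  obtain ⟨C, hC, hb⟩ := WW_decay
  refine Summable.of_nonneg_of_le (fun m => abs_nonneg _) ?_ ((div_summable (s := 7/4) (by norm_num)).mul_left (C / δ^2))
  intro m
  rcases Nat.eq_zero_or_pos m with hm | hm
  · subst hm; simp [coefA, divfun]
  have hm0 : (0:ℝ) < m := by exact_mod_cast hm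
  rw [coefA, abs_mul, abs_mul, abs_of_nonneg (by positivity : 0 ≤ 1 / (√2 * Real.pi)), abs_of_nonneg (by positivity : 0 ≤ (divfun m : ℝ) * (1 / (m:ℝ)^((3:ℝ)/4)))]
  have h1 : 1 / (√2 * Real.pi) ≤ 1 := by
    rw [div_le_one (by positivity)]
    nlinarith [Real.pi_gt_three, Real.one_le_sqrt.mpr (by norm_num : (1:ℝ) ≤ 2)]
  have h2 : |WW (δ * √m)| ≤ C / (δ^2 * m) := by
    rw [le_div_iff₀ (by positivity)]
    have := hb (δ * √m)
    rw [mul_pow, Real.sq_sqrt hm0.le] at this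
    linarith
  have h3 : (m:ℝ)^((7:ℝ)/4) = (m:ℝ)^((3:ℝ)/4) * m := by
    rw [← Real.rpow_add_one hm0.ne']; norm_num
  calc _ ≤ 1 * ((divfun m : ℝ) * (1 / (m:ℝ)^((3:ℝ)/4)) * (C / (δ^2 * m))) := by gcongr
    _ = _ := by rw [h3]; field_simp

lemma quarter_three {x : ℝ} (hx : 0 < x) : (x^((1:ℝ)/4))^3 = x^((3:ℝ)/4) := by
  rw [← Real.rpow_natCast, ← Real.rpow_mul hx.le]; norm_num
lemma quarter_five {x : ℝ} (hx : 0 < x) : (x^((1:ℝ)/4))^5 = x^((5:ℝ)/4) := by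
  rw [← Real.rpow_natCast, ← Real.rpow_mul hx.le]; norm_num

lemma smoothed_voronoi : ∃ C, 0 < C ∧ ∀ u δ : ℝ, 3 ≤ u → 0 < δ → δ ≤ 1 →
    |(∫ w, rho w * (√(u / (u + δ * w)) * DirichletDelta ((u + δ * w)^2)))
      - √u * ∑' m : ℕ, coefA δ m * Real.cos (4 * Real.pi * √m * u - Real.pi/4)| ≤ C := by
  have hS := div_summable (s := 5/4) (by norm_num)
  set D := ∑' m : ℕ, (divfun m : ℝ) * (1 / (m:ℝ)^((5:ℝ)/4)) with hD
  have hD0 : 0 ≤ D := tsum_nonneg (fun m => by positivity)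
  refine ⟨1/2 + 160 * D, by positivity, fun u δ hu hδ hδ1 => ?_⟩
  have hcs : HasCompactSupport (gfun u δ) := by
    apply HasCompactSupport.intro (isCompact_Icc (a := (u-δ)^2) (b := (u+δ)^2))
    intro x hx
    exact gfun_supp hu hδ hδ1 (fun hh => hx (Set.Ioo_subset_Icc_self hh))
  obtain ⟨F, hF⟩ := exists_sineF (gfun_smooth hu hδ hδ1) hcs
  have hx0 : 1 ≤ (u-δ)^2 := by nlinarith
  have h : TestFn (gfun u δ) ((u-δ)^2) ((u+δ)^2) F :=
    ⟨gfun_smooth hu hδ hδ1, by linarith, by nlinarith, fun x hx => gfun_supp hu hδ hδ1 hx, hF⟩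
  obtain ⟨b1, b2⟩ := gfun_int_bound hu hδ hδ1
  have v := h.voronoi0
  rw [gfun_cov hu hδ hδ1] at v
  have hsumA : Summable (fun m : ℕ => coefA δ m * Real.cos (4 * Real.pi * √m * u - Real.pi/4)) := by
    refine Summable.of_norm_bounded (coefA_summable hδ) (fun m => ?_)
    rw [norm_mul]
    exact mul_le_of_le_one_right (norm_nonneg _) (Real.abs_cos_le_one _)
  have v2 := v.sub (hsumA.hasSum.mul_left (√u))
  have key : ∀ m : ℕ, ‖(divfun m : ℝ) * (-(1 / (2 * Real.pi^3 * m^2)) * cc F m) - √u * (coefA δ m * Real.cos (4 * Real.pi * √m * u - Real.pi/4))‖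
      ≤ 160 * ((divfun m : ℝ) * (1 / (m:ℝ)^((5:ℝ)/4))) := by
    intro m
    rcases Nat.eq_zero_or_pos m with hm | hm
    · subst hm; simp [coefA, divfun]
    have hm0 : (0:ℝ) < m := by exact_mod_cast hm
    have := h.tau_bound hx0 hm
    rw [gfun_main hu hδ hδ1, quarter_three hm0, quarter_five hm0] at this
    have e : (divfun m : ℝ) * (-(1 / (2 * Real.pi^3 * m^2)) * cc F m) - √u * (coefA δ m * Real.cos (4 * Real.pi * √m * u - Real.pi/4))
      = (divfun m : ℝ) * (-(1 / (2 * Real.pi^3 * m^2)) * cc F m - 1 / (√2 * Real.pi) * (1 / (m:ℝ)^((3:ℝ)/4)) * (√u * (WW (δ * √m) * Real.cos (4 * Real.pi * √m * u - Real.pi/4)))) := by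
      rw [coefA]; ring
    rw [e, norm_mul, Real.norm_of_nonneg (by positivity), Real.norm_eq_abs]
    calc _ ≤ (divfun m : ℝ) * (80 / (m:ℝ)^((5:ℝ)/4) * 2) := by
          gcongr
          exact this.trans (by gcongr)
      _ = _ := by ring
  have v3 := (hS.mul_left 160).hasSum
  have v4 := tsum_of_norm_bounded v3 key
  rw [v2.tsum_eq, tsum_mul_left, ← hD, Real.norm_eq_abs] at v4
  rw [abs_le] at v4 b2 ⊢
  constructor <;> linarith [v4.1, v4.2, b2.1, b2.2]

end
open MeasureTheory

noncomputable def Dsum (x : ℝ) : ℝ := ∑ n ∈ Finset.Icc 1 ⌊x⌋₊, (divfun n : ℝ)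

lemma Dsum_step {x z : ℝ} (hx : 1 ≤ x) (hxz : |z - x| ≤ 1) :
    |Dsum x - Dsum z| ≤ (divfun ⌊x⌋₊ : ℝ) + (divfun (⌊x⌋₊ + 1) : ℝ) := by
  rw [abs_le] at hxz
  have h1 : ⌊z⌋₊ ≤ ⌊x⌋₊ + 1 := by
    rw [← Nat.floor_add_one (by linarith)]
    exact Nat.floor_le_floor (by linarith)
  have h2 : ⌊x⌋₊ ≤ ⌊z⌋₊ + 1 := by
    rw [← Nat.floor_add_one (by linarith)]
    exact Nat.floor_le_floor (by linarith)
  have p1 : (0:ℝ) ≤ divfun ⌊x⌋₊ := by positivity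
  have p2 : (0:ℝ) ≤ divfun (⌊x⌋₊ + 1) := by positivity
  unfold Dsum
  rcases (by omega : ⌊z⌋₊ = ⌊x⌋₊ + 1 ∨ ⌊z⌋₊ = ⌊x⌋₊ ∨ ⌊x⌋₊ = ⌊z⌋₊ + 1) with h | h | h
  · rw [h, Finset.sum_Icc_succ_top (by omega)]
    rw [abs_le]; constructor <;> linarith
  · rw [h, sub_self, abs_zero]; positivity
  · rw [h, Finset.sum_Icc_succ_top (by omega)]
    rw [h] at p1 p2
    rw [abs_le]; constructor <;> linarith

lemma xlogx_diff {x z : ℝ} (hx : 0 < x) (hz : 1 ≤ z) (hxz : z ≤ x) : |x * Real.log x - z * Real.log z| ≤ (x - z) * (Real.log x + 1) := by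
  have hz0 : 0 < z := by linarith
  have h1 : Real.log z ≤ Real.log x := Real.log_le_log hz0 hxz
  have h2 := Real.log_le_sub_one_of_pos (div_pos hx hz0)
  rw [Real.log_div hx.ne' hz0.ne'] at h2
  have h3 : z * (Real.log x - Real.log z) ≤ x - z := by
    calc _ ≤ z * (x / z - 1) := by gcongr
      _ = _ := by field_simp
  have h0 := Real.log_nonneg hz
  rw [abs_of_nonneg]
  · nlinarith
  · nlinarith

lemma gamma_bd : |2 * Real.eulerMascheroniConstant - 1| ≤ 1 := by
  have h1 := Real.one_half_lt_eulerMascheroniConstant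
  have h2 := Real.eulerMascheroniConstant_lt_two_thirds
  rw [abs_le]; constructor <;> linarith

lemma delta_step {T x z : ℝ} (hT : 10 ≤ T) (hx : 1 ≤ x) (hxT : x ≤ 4 * T) (hz : 1 ≤ z) (hzT : z ≤ 4 * T) (hxz : |z - x| ≤ 1) :
    |DirichletDelta x - DirichletDelta z| ≤ (divfun ⌊x⌋₊ : ℝ) + (divfun (⌊x⌋₊ + 1) : ℝ) + 4 * Real.log T := by
  have hd := Dsum_step hx hxz
  have hlT : 1 ≤ Real.log T := by
    rw [Real.le_log_iff_exp_le (by linarith)]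
    linarith [Real.exp_one_lt_d9]
  have h4 : Real.log (4 * T) ≤ 2 * Real.log T := by
    rw [Real.log_mul (by norm_num) (by linarith)]
    have : Real.log 4 ≤ Real.log T := Real.log_le_log (by norm_num) (by linarith)
    linarith
  have hM : |x * Real.log x - z * Real.log z| ≤ 3 * Real.log T := by
    rcases le_total z x with h | h
    · have := xlogx_diff (by linarith) hz h
      have l1 : Real.log x ≤ Real.log (4 * T) := Real.log_le_log (by linarith) hxT
      have l0 := Real.log_nonneg hx
      have hd : x - z ≤ 1 := by linarith [(abs_le.mp hxz).1]
      nlinarith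
    · have := xlogx_diff (by linarith) hx h
      rw [abs_sub_comm] at this
      have l1 : Real.log z ≤ Real.log (4 * T) := Real.log_le_log (by linarith) hzT
      have l0 := Real.log_nonneg hz
      have hd : z - x ≤ 1 := by linarith [(abs_le.mp hxz).2]
      nlinarith
  have hG : |(2 * Real.eulerMascheroniConstant - 1) * (x - z)| ≤ 1 := by
    rw [abs_mul]
    rw [abs_sub_comm] at hxz
    exact mul_le_one₀ gamma_bd (abs_nonneg _) hxz
  have e : DirichletDelta x - DirichletDelta z = (Dsum x - Dsum z) - (x * Real.log x - z * Real.log z) - (2 * Real.eulerMascheroniConstant - 1) * (x - z) := by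
    unfold DirichletDelta Dsum; ring
  rw [e]
  rw [abs_le] at *
  constructor <;> linarith [hd.1, hd.2, hM.1, hM.2, hG.1, hG.2]

lemma delta_triv {T z : ℝ} (hT : 10 ≤ T) (hz : 1 ≤ z) (hzT : z ≤ 4 * T) : |DirichletDelta z| ≤ 24 * (T * Real.log T) := by
  have hlT : 1 ≤ Real.log T := by
    rw [Real.le_log_iff_exp_le (by linarith)]
    linarith [Real.exp_one_lt_d9]
  have hM1 : z ≤ (⌈4 * T⌉₊ : ℝ) := hzT.trans (Nat.le_ceil _)
  have hM2 : (⌈4 * T⌉₊ : ℝ) ≤ 5 * T := by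
    have := Nat.ceil_lt_add_one (by linarith : 0 ≤ 4 * T)
    linarith
  have hd := div_sum (by linarith : 0 < z) hM1
  have hH := harmonic_le_one_add_log ⌈4 * T⌉₊
  have hl5 : Real.log (⌈4 * T⌉₊ : ℝ) ≤ 2 * Real.log T := by
    calc _ ≤ Real.log (5 * T) := Real.log_le_log (by linarith) hM2
      _ = Real.log 5 + Real.log T := Real.log_mul (by norm_num) (by linarith)
      _ ≤ Real.log T + Real.log T := by
        gcongr; linarith
      _ = _ := by ring
  have hlz : Real.log z ≤ 2 * Real.log T := (Real.log_le_log (by linarith) hM1).trans hl5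
  have hlz0 := Real.log_nonneg hz
  have hps : |∑ a ∈ Finset.Icc 1 ⌈4*T⌉₊, psi (z / a)| ≤ (⌈4 * T⌉₊ : ℝ) / 2 := by
    refine (Finset.abs_sum_le_sum_abs _ _).trans ?_
    refine (Finset.sum_le_card_nsmul _ _ (1/2) (fun a _ => psi_abs _)).trans ?_
    simp; linarith
  have hD0 : 0 ≤ Dsum z := by unfold Dsum; positivity
  have hD1 : Dsum z ≤ z * (1 + 2 * Real.log T) := by
    unfold Dsum; rw [hd]
    rw [abs_le] at hps
    have : z * (harmonic ⌈4 * T⌉₊ : ℝ) ≤ z * (1 + 2 * Real.log T) := by gcongr; linarith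
    linarith [hps.1]
  have hg := gamma_bd
  have e : DirichletDelta z = Dsum z - z * Real.log z - (2 * Real.eulerMascheroniConstant - 1) * z := rfl
  rw [e]
  have a1 : |(2 * Real.eulerMascheroniConstant - 1) * z| ≤ z := by
    rw [abs_mul, abs_of_pos (by linarith : 0 < z)]
    exact mul_le_of_le_one_left (by linarith) hg
  have a2 : z * Real.log z ≤ z * (2 * Real.log T) := by gcongr
  have a3 : 0 ≤ z * Real.log z := by positivity
  have a4 : z * Real.log T ≤ 4 * (T * Real.log T) := by nlinarith
  have a5 : z ≤ 4 * (T * Real.log T) := by nlinarith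
  rw [abs_le] at *
  constructor <;> linarith [a1.1, a1.2]

lemma delta_meas : Measurable DirichletDelta := by
  unfold DirichletDelta
  have : Measurable (fun x : ℝ => ∑ n ∈ Finset.Icc 1 ⌊x⌋₊, (divfun n : ℝ)) :=
    (measurable_from_nat (f := fun k : ℕ => ∑ n ∈ Finset.Icc 1 k, (divfun n : ℝ))).comp Nat.measurable_floor
  fun_prop

lemma desmooth {T x : ℝ} (hT : 10 ≤ T) (hx : T ≤ x) (hx2 : x ≤ 2 * T) :
    |DirichletDelta x - ∫ w, rho w * (√(√x / (√x + 1/(4*√T) * w)) * DirichletDelta ((√x + 1/(4*√T) * w)^2))|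
      ≤ (divfun ⌊x⌋₊ : ℝ) + (divfun (⌊x⌋₊ + 1) : ℝ) + 16 * Real.log T := by
  have hlT : 1 ≤ Real.log T := by
    rw [Real.le_log_iff_exp_le (by linarith)]
    linarith [Real.exp_one_lt_d9]
  set s := √T with hs
  set u := √x with hu
  have hs2 : s^2 = T := Real.sq_sqrt (by linarith)
  have hu2 : u^2 = x := Real.sq_sqrt (by linarith)
  have hs3 : 3 ≤ s := Real.le_sqrt_of_sq_le (by linarith)
  have hsu : s ≤ u := Real.sqrt_le_sqrt hx
  have hus : u ≤ 3/2 * s := by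
    apply Real.sqrt_le_iff.mpr ⟨by linarith, by nlinarith⟩
  set δ := 1 / (4 * s) with hδ
  have hδ0 : 0 < δ := by positivity
  have hδs : δ * s = 1/4 := by rw [hδ]; field_simp
  have hδ1 : δ ≤ 1/12 := by nlinarith
  set B := (divfun ⌊x⌋₊ : ℝ) + (divfun (⌊x⌋₊ + 1) : ℝ) + 16 * Real.log T with hB
  set f : ℝ → ℝ := fun w => √(u / (u + δ * w)) * DirichletDelta ((u + δ * w)^2) with hf
  have pt : ∀ w ∈ Set.Ioo (-1:ℝ) 1, |DirichletDelta x - f w| ≤ B := by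
    intro w hw
    have hwδ : |δ * w| ≤ δ := by
      rw [abs_mul, abs_of_pos hδ0]
      exact mul_le_of_le_one_right hδ0.le (abs_le.mpr ⟨hw.1.le, hw.2.le⟩)
    obtain ⟨w1, w2⟩ := abs_le.mp hwδ
    set v := u + δ * w with hv
    have hv1 : 1 ≤ v := by linarith
    have hvu : u / 2 ≤ v := by linarith
    have hzx : |v^2 - x| ≤ 1 := by
      rw [← hu2, show v^2 - u^2 = 2 * u * (δ * w) + (δ * w)^2 by rw [hv]; ring]
      have h1 : |2 * u * (δ * w)| ≤ 3/4 := by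
        rw [abs_mul, abs_of_pos (by linarith : 0 < 2 * u)]
        calc 2 * u * |δ * w| ≤ 2 * (3/2 * s) * δ := by gcongr
          _ = 3 * (δ * s) := by ring
          _ = 3/4 := by rw [hδs]; norm_num
      have h2 : |(δ * w)^2| ≤ 1/4 := by
        rw [abs_of_nonneg (sq_nonneg _), ← sq_abs]
        nlinarith [abs_nonneg (δ * w)]
      exact (abs_add_le _ _).trans (by linarith)
    have hz1 : 1 ≤ v^2 := by nlinarith
    have hz4 : v^2 ≤ 4 * T := by linarith [(abs_le.mp hzx).2]
    have s1 := delta_step hT (by linarith) (by linarith) hz1 hz4 hzx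
    have s2 := delta_triv hT hz1 hz4
    have s3 : |1 - √(u / v)| ≤ 1 / (2 * T) := by
      have h1 : |1 - √(u/v)| ≤ |1 - u / v| := by
        have hnn : 0 ≤ u / v := by positivity
        have hq := Real.sq_sqrt hnn
        have hq0 := Real.sqrt_nonneg (u/v)
        set q := √(u/v)
        rw [← hq, show 1 - q^2 = (1 - q) * (1 + q) by ring, abs_mul]
        refine le_mul_of_one_le_right (abs_nonneg _) ?_
        rw [abs_of_pos (by linarith)]; linarith
      have h2 : 1 - u / v = δ * w / v := by
        have hvne : v ≠ 0 := by
          intro h0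
          rw [h0] at hz1
          norm_num at hz1
        rw [eq_div_iff hvne, sub_mul, div_mul_cancel₀ _ hvne, hv]; ring
      rw [h2, abs_div, abs_of_pos (by linarith : 0 < v)] at h1
      refine h1.trans ?_
      rw [div_le_div_iff₀ (by linarith) (by linarith)]
      calc |δ * w| * (2 * T) ≤ δ * (2 * s^2) := by rw [hs2]; gcongr
        _ = (δ * s) * 2 * s := by ring
        _ ≤ 1 * v := by rw [hδs]; linarith
    have e : DirichletDelta x - f w = (DirichletDelta x - DirichletDelta (v^2)) + (1 - √(u/v)) * DirichletDelta (v^2) := by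
      simp only [hf]; ring
    rw [e]
    refine (abs_add_le _ _).trans ?_
    rw [abs_mul]
    have : |1 - √(u/v)| * |DirichletDelta (v^2)| ≤ 1 / (2 * T) * (24 * (T * Real.log T)) := by gcongr
    have e2 : 1 / (2 * T) * (24 * (T * Real.log T)) = 12 * Real.log T := by field_simp; norm_num
    rw [e2] at this
    linarith
  have hfm : Measurable f := by
    have := delta_meas
    simp only [hf]
    apply Measurable.mul
    · fun_prop
    · exact delta_meas.comp (by fun_prop)
  have hfi : Integrable (fun w => rho w * f w) := by
    refine (rho_int.mul_const (|DirichletDelta x| + B)).mono' (rho_cont.aestronglyMeasurable.mul hfm.aestronglyMeasurable) ?_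
    refine Filter.Eventually.of_forall (fun w => ?_)
    rw [norm_mul, Real.norm_of_nonneg (rho_nonneg w), Real.norm_eq_abs]
    by_cases hw : w ∈ Set.Ioo (-1:ℝ) 1
    · apply mul_le_mul_of_nonneg_left _ (rho_nonneg w)
      have := pt w hw
      have h3 := abs_sub_abs_le_abs_sub (f w) (DirichletDelta x)
      rw [abs_sub_comm (f w)] at h3
      linarith
    · simp [rho_supp hw]
  have e : DirichletDelta x - ∫ w, rho w * f w = ∫ w, rho w * (DirichletDelta x - f w) := by
    simp only [mul_sub]
    rw [integral_sub (rho_int.mul_const _) hfi, integral_mul_const, rho_integral, one_mul]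
  change |DirichletDelta x - ∫ w, rho w * f w| ≤ B
  rw [e, ← Real.norm_eq_abs]
  have hBe : B = ∫ w, rho w * B := by rw [integral_mul_const, rho_integral, one_mul]
  refine le_trans ?_ hBe.ge
  apply norm_integral_le_of_norm_le (rho_int.mul_const _)
  refine Filter.Eventually.of_forall (fun w => ?_)
  rw [norm_mul, Real.norm_of_nonneg (rho_nonneg w), Real.norm_eq_abs]
  by_cases hw : w ∈ Set.Ioo (-1:ℝ) 1
  · exact mul_le_mul_of_nonneg_left (pt w hw) (rho_nonneg w)
  · simp [rho_supp hw]

noncomputable def coefB (δ y : ℝ) (m : ℕ) : ℝ :=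
  1 / (√2 * Real.pi) * ((divfun m : ℝ) * (1 / (m:ℝ)^((3:ℝ)/4)) * (WW (δ * √m) - if m ≤ ⌊y⌋₊ then 1 else 0))

lemma coefB_eq (δ y : ℝ) (m : ℕ) : coefB δ y m = coefA δ m -
   (if m ∈ Finset.Icc 1 ⌊y⌋₊ then 1 / (√2 * Real.pi) * ((divfun m : ℝ) * (1 / (m:ℝ)^((3:ℝ)/4))) else 0) := by
  rcases Nat.eq_zero_or_pos m with hm | hm
  · subst hm; simp [coefA, coefB, divfun]
  have : m ∈ Finset.Icc 1 ⌊y⌋₊ ↔ m ≤ ⌊y⌋₊ := by simp; omega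
  simp only [this, coefB, coefA]
  split_ifs <;> ring

lemma coefB_summable {δ y : ℝ} (hδ : 0 < δ) : Summable (fun m => |coefB δ y m|) := by
  have h1 : Summable (coefA δ) := (coefA_summable hδ).of_abs
  have h2 : Summable (fun m => (if m ∈ Finset.Icc 1 ⌊y⌋₊ then 1 / (√2 * Real.pi) * ((divfun m : ℝ) * (1 / (m:ℝ)^((3:ℝ)/4))) else 0)) :=
    summable_of_ne_finset_zero (s := Finset.Icc 1 ⌊y⌋₊) (fun m hm => by simp only [hm, if_false])
  have := (h1.sub h2).abs
  refine this.congr (fun m => by rw [coefB_eq])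

noncomputable def SB (δ y u : ℝ) : ℝ := ∑' m : ℕ, coefB δ y m * Real.cos (4 * Real.pi * √m * u - Real.pi/4)

lemma R2_pointwise : ∃ C, 0 < C ∧ ∀ T y x : ℝ, 10 ≤ T → T ≤ x → x ≤ 2 * T →
    |R2 y x| ≤ (divfun ⌊x⌋₊ : ℝ) + (divfun (⌊x⌋₊ + 1) : ℝ) + C * Real.log T + √(√x) * |SB (1/(4*√T)) y (√x)| := by
  obtain ⟨C, hC, hv⟩ := smoothed_voronoi
  refine ⟨16 + C, by positivity, fun T y x hT hx hx2 => ?_⟩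
  have hlT : 1 ≤ Real.log T := by
    rw [Real.le_log_iff_exp_le (by linarith)]
    linarith [Real.exp_one_lt_d9]
  have hd := desmooth hT hx hx2
  have hs3 : 3 ≤ √T := Real.le_sqrt_of_sq_le (by linarith)
  have hu3 : 3 ≤ √x := hs3.trans (Real.sqrt_le_sqrt hx)
  have hδ0 : 0 < 1 / (4 * √T) := by positivity
  have hδ1 : 1 / (4 * √T) ≤ 1 := by rw [div_le_one (by positivity)]; linarith
  have h1 := hv (√x) (1 / (4 * √T)) hu3 hδ0 hδ1
  set δ := 1 / (4 * √T)
  have hx0 : 0 < x := by linarith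
  have q4 : x^((1:ℝ)/4) = √(√x) := by
    rw [Real.sqrt_eq_rpow, Real.sqrt_eq_rpow, ← Real.rpow_mul hx0.le]; norm_num
  have hsA : Summable (fun m : ℕ => coefA δ m * Real.cos (4 * Real.pi * √m * √x - Real.pi/4)) := by
    refine Summable.of_norm_bounded (coefA_summable hδ0) (fun m => ?_)
    rw [norm_mul]
    exact mul_le_of_le_one_right (norm_nonneg _) (Real.abs_cos_le_one _)
  have hSB : √(√x) * SB δ y (√x) = √(√x) * (∑' m : ℕ, coefA δ m * Real.cos (4 * Real.pi * √m * √x - Real.pi/4)) - R1 y x := by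
    have e1 : SB δ y (√x) = ∑' m : ℕ, (coefA δ m * Real.cos (4 * Real.pi * √m * √x - Real.pi/4)
       - (if m ∈ Finset.Icc 1 ⌊y⌋₊ then 1 / (√2 * Real.pi) * ((divfun m : ℝ) * (1 / (m:ℝ)^((3:ℝ)/4))) * Real.cos (4 * Real.pi * √m * √x - Real.pi/4) else 0)) := by
      unfold SB
      congr 1; ext m
      rw [coefB_eq]; split_ifs <;> ring
    have h2 : ∀ m ∉ Finset.Icc 1 ⌊y⌋₊, (if m ∈ Finset.Icc 1 ⌊y⌋₊ then 1 / (√2 * Real.pi) * ((divfun m : ℝ) * (1 / (m:ℝ)^((3:ℝ)/4))) * Real.cos (4 * Real.pi * √m * √x - Real.pi/4) else 0) = 0 := by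
      intro m hm; simp only [hm, if_false]
    rw [e1, Summable.tsum_sub hsA (summable_of_ne_finset_zero h2), tsum_eq_sum h2, mul_sub]
    congr 1
    rw [R1, Finset.mul_sum, Finset.mul_sum]
    apply Finset.sum_congr rfl
    intro m hm
    rw [if_pos hm, q4, Real.sqrt_mul (by positivity)]
    rw [show 4 * Real.pi * (√m * √x) = 4 * Real.pi * √m * √x by ring]; ring
  have habs : √(√x) * |SB δ y (√x)| = |√(√x) * SB δ y (√x)| := by rw [abs_mul, abs_of_nonneg (Real.sqrt_nonneg _)]
  rw [habs, hSB, R2]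
  have hb := le_abs_self (√(√x) * (∑' m : ℕ, coefA δ m * Real.cos (4 * Real.pi * √m * √x - Real.pi/4)) - R1 y x)
  have hb' := neg_abs_le (√(√x) * (∑' m : ℕ, coefA δ m * Real.cos (4 * Real.pi * √m * √x - Real.pi/4)) - R1 y x)
  have hCl : C ≤ C * Real.log T := le_mul_of_one_le_right hC.le hlT
  rw [abs_le] at hd h1
  rw [abs_le]
  constructor <;> linarith [hd.1, hd.2, h1.1, h1.2]
open MeasureTheory

lemma geom_inv_le (a : ℝ) (ha : 0 < a) : (1 - Real.exp (-a))⁻¹ ≤ 1 + 1 / a := by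
  have h1 : Real.exp (-a) ≤ 1 / (1 + a) := by
    rw [Real.exp_neg, ← one_div]
    apply one_div_le_one_div_of_le (by linarith)
    linarith [Real.add_one_le_exp a]
  have h2 : a / (1 + a) ≤ 1 - Real.exp (-a) := by
    have : a / (1 + a) = 1 - 1 / (1 + a) := by field_simp; ring
    linarith
  have h3 : 0 < a / (1 + a) := by positivity
  calc (1 - Real.exp (-a))⁻¹ ≤ (a / (1 + a))⁻¹ := inv_anti₀ h3 h2
    _ = 1 + 1 / a := by field_simp; ring

lemma geom_finset (a : ℝ) (ha : 0 < a) (s : Finset ℕ) :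
    ∑ j ∈ s, Real.exp (-(a * j)) ≤ 1 + 1 / a := by
  have hr : Real.exp (-a) < 1 := by rw [Real.exp_lt_one_iff]; linarith
  have hs := hasSum_geometric_of_lt_one (Real.exp_pos (-a)).le hr
  have e : ∀ j : ℕ, Real.exp (-(a * j)) = Real.exp (-a) ^ j := by
    intro j; rw [← Real.exp_nat_mul]; congr 1; ring
  simp_rw [e]
  exact (sum_le_hasSum s (fun i _ => by positivity) hs).trans (geom_inv_le a ha)

lemma geom_two (a : ℝ) (ha : 0 < a) (s : Finset ℕ) (m : ℕ) :
    ∑ n ∈ s, Real.exp (-(a * |(n:ℝ) - m|)) ≤ 2 * (1 + 1 / a) := by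
  rw [← Finset.sum_filter_add_sum_filter_not s (fun n => m ≤ n)]
  have h1 : ∑ n ∈ s with m ≤ n, Real.exp (-(a * |(n:ℝ) - m|)) ≤ 1 + 1 / a := by
    have : ∑ n ∈ s with m ≤ n, Real.exp (-(a * |(n:ℝ) - m|))
        = ∑ j ∈ (s.filter (fun n => m ≤ n)).image (fun n => n - m), Real.exp (-(a * j)) := by
      rw [Finset.sum_image]
      · refine Finset.sum_congr rfl fun n hn => ?_
        have := (Finset.mem_filter.mp hn).2
        rw [Nat.cast_sub this, abs_of_nonneg]
        rw [sub_nonneg]; exact_mod_cast this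
      · intro x hx y hy h
        have h1 := (Finset.mem_filter.mp hx).2
        have h2 := (Finset.mem_filter.mp hy).2
        simp only at h; omega
    rw [this]; exact geom_finset a ha _
  have h2 : ∑ n ∈ s with ¬ m ≤ n, Real.exp (-(a * |(n:ℝ) - m|)) ≤ 1 + 1 / a := by
    have : ∑ n ∈ s with ¬ m ≤ n, Real.exp (-(a * |(n:ℝ) - m|))
        = ∑ j ∈ (s.filter (fun n => ¬ m ≤ n)).image (fun n => m - n), Real.exp (-(a * j)) := by
      rw [Finset.sum_image]
      · refine Finset.sum_congr rfl fun n hn => ?_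
        have := (Finset.mem_filter.mp hn).2
        push Not at this
        rw [Nat.cast_sub this.le, abs_sub_comm, abs_of_nonneg]
        rw [sub_nonneg]; exact_mod_cast this.le
      · intro x hx y hy h
        have h1 := (Finset.mem_filter.mp hx).2
        have h2 := (Finset.mem_filter.mp hy).2
        simp only at h; omega
    rw [this]; exact geom_finset a ha _
  linarith

lemma row_term {T : ℝ} (hT : 10 ≤ T) (m n : ℕ) (hm : 0 < m) :
    Real.exp (-(4 * Real.pi^2 * T * (√m - √n)^2)) ≤
      Real.exp (-(1 * (n:ℝ))) + 3 * Real.exp (-(√(T / m) * |(n:ℝ) - m|)) := by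
  have hpi : 9 ≤ Real.pi^2 := by nlinarith [Real.pi_gt_three]
  have hm' : (0:ℝ) < m := by exact_mod_cast hm
  have qm := Real.sq_sqrt hm'.le
  have qm0 := Real.sqrt_pos.mpr hm'
  have hn' : (0:ℝ) ≤ n := Nat.cast_nonneg n
  have qn := Real.sq_sqrt hn'
  have qn0 := Real.sqrt_nonneg (n:ℝ)
  have hPT : 360 ≤ 4 * Real.pi^2 * T := by nlinarith
  by_cases h : 2 * √(m:ℝ) ≤ √(n:ℝ)
  · have h1 : (n:ℝ) / 4 ≤ (√(m:ℝ) - √n)^2 := by nlinarith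
    have : Real.exp (-(4 * Real.pi^2 * T * (√m - √n)^2)) ≤ Real.exp (-(1 * (n:ℝ))) := by
      apply Real.exp_le_exp.mpr
      nlinarith
    linarith [Real.exp_pos (-(√(T / m) * |(n:ℝ) - m|))]
  · push Not at h
    set a := √(T / m) with ha
    have ha2 : a^2 = T / m := Real.sq_sqrt (by positivity)
    set j := |(n:ℝ) - m| with hj
    have hj2 : j^2 = ((√(m:ℝ) - √n)^2) * (√m + √n)^2 := by
      rw [hj, sq_abs]
      calc ((n:ℝ) - m)^2 = (√(n:ℝ)^2 - √m^2)^2 := by rw [qn, qm]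
        _ = _ := by ring
    have h9 : (√(m:ℝ) + √n)^2 ≤ 9 * m := by nlinarith
    have key : (a * j)^2 ≤ 4 * Real.pi^2 * T * (√m - √n)^2 := by
      rw [mul_pow, ha2, hj2]
      calc T / m * ((√(m:ℝ) - √n)^2 * (√m + √n)^2) ≤ T / m * ((√(m:ℝ) - √n)^2 * (9 * m)) := by gcongr
        _ = 9 * T * (√(m:ℝ) - √n)^2 := by field_simp
        _ ≤ 4 * Real.pi^2 * T * (√m - √n)^2 := by
          apply mul_le_mul_of_nonneg_right _ (sq_nonneg _)
          nlinarith
    have h3 : Real.exp (-(4 * Real.pi^2 * T * (√m - √n)^2)) ≤ Real.exp (1 + -(a * j)) := by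
      apply Real.exp_le_exp.mpr
      nlinarith [sq_nonneg (a * j - 1/2)]
    rw [Real.exp_add] at h3
    have h4 : Real.exp 1 * Real.exp (-(a*j)) ≤ 3 * Real.exp (-(a*j)) := by
      gcongr; exact Real.exp_one_lt_three.le
    linarith [Real.exp_pos (-(1 * (n:ℝ)))]

lemma row_sum {T : ℝ} (hT : 10 ≤ T) (s : Finset ℕ) (m : ℕ) :
    ∑ n ∈ s, Real.exp (-(4 * Real.pi^2 * T * (√m - √n)^2)) ≤ 8 * (1 + √(m / T)) := by
  have hpi : 9 ≤ Real.pi^2 := by nlinarith [Real.pi_gt_three]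
  rcases Nat.eq_zero_or_pos m with rfl | hm
  · have h1 : ∑ n ∈ s, Real.exp (-(4 * Real.pi^2 * T * (√(0:ℕ) - √n)^2)) ≤ ∑ n ∈ s, Real.exp (-(1 * (n:ℝ))) := by
      refine Finset.sum_le_sum fun n _ => ?_
      apply Real.exp_le_exp.mpr
      have hn' : (0:ℝ) ≤ n := Nat.cast_nonneg n
      have qn := Real.sq_sqrt hn'
      have hPT : 360 ≤ 4 * Real.pi^2 * T := by nlinarith
      simp only [Nat.cast_zero, Real.sqrt_zero, zero_sub, neg_sq, qn]
      nlinarith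
    have := geom_finset 1 one_pos s
    simp at *
    linarith
  · have hm' : (0:ℝ) < m := by exact_mod_cast hm
    have h1 := Finset.sum_le_sum (fun n (_ : n ∈ s) => row_term hT m n hm)
    rw [Finset.sum_add_distrib, ← Finset.mul_sum] at h1
    have h2 := geom_finset 1 one_pos s
    have h3 := geom_two (√(T / m)) (Real.sqrt_pos.mpr (by positivity)) s m
    have h4 : 1 / √(T / m) = √(m / T) := by
      rw [one_div, ← Real.sqrt_inv, inv_div]
    rw [h4] at h3
    have := Real.sqrt_nonneg (m / T)
    linarith

lemma gauss_int {T : ℝ} (hT : 10 ≤ T) : Integrable (fun u : ℝ => Real.exp (-(1/T) * u^2)) :=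
  integrable_exp_neg_mul_sq (by positivity)

lemma gauss_cos {T : ℝ} (hT : 10 ≤ T) (β : ℝ) :
    ∫ u : ℝ, Real.exp (-(1/T) * u^2) * Real.cos (β * u) = √(Real.pi * T) * Real.exp (-(T * β^2 / 4)) := by
  have h := fourierIntegral_gaussian (b := ((1/T : ℝ) : ℂ)) (by rw [Complex.ofReal_re]; positivity) (β : ℂ)
  have e1 : (∫ u : ℝ, Complex.exp (Complex.I * β * u) * Complex.exp (-((1/T:ℝ):ℂ) * (u:ℂ)^2)).re
      = ∫ u : ℝ, Real.exp (-(1/T) * u^2) * Real.cos (β * u) := by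
    rw [← RCLike.re_eq_complex_re, ← integral_re]
    · congr 1; ext u
      rw [RCLike.re_eq_complex_re, ← Complex.exp_add]
      rw [Complex.exp_re]
      congr 1
      · congr 1; simp [pow_two]
      · congr 1; simp [pow_two]
    · refine Integrable.mono' (gauss_int hT) (by fun_prop) ?_
      filter_upwards with u
      rw [← Complex.exp_add, Complex.norm_exp]
      apply Real.exp_le_exp.mpr
      simp [pow_two]
  rw [← e1, h]
  have e2 : (((Real.pi:ℂ) / ((1/T:ℝ):ℂ))^((1:ℂ)/2)) = ((√(Real.pi * T) : ℝ) : ℂ) := by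
    rw [← Complex.ofReal_div, show ((1:ℂ)/2) = (((1:ℝ)/2 : ℝ):ℂ) by push_cast; rfl, ← Complex.ofReal_cpow (by positivity), Real.sqrt_eq_rpow]
    congr 2; field_simp
  have e3 : Complex.exp (-(β:ℂ)^2 / (4 * ((1/T:ℝ):ℂ))) = ((Real.exp (-(T * β^2/4)) : ℝ) : ℂ) := by
    push_cast; congr 1
    have : (T:ℂ) ≠ 0 := by exact_mod_cast (by linarith : T ≠ 0)
    field_simp
  rw [e2, e3, ← Complex.ofReal_mul, Complex.ofReal_re]

lemma sieve_finite {T : ℝ} (hT : 10 ≤ T) (c : ℕ → ℝ) (s : Finset ℕ) :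
    ∫ u in (√T)..(√(2*T)), (∑ m ∈ s, c m * Real.cos (4 * Real.pi * √m * u - Real.pi/4))^2 ≤
      Real.exp 2 * √(Real.pi * T) * (8 * ∑ m ∈ s, c m^2 * (1 + √(m/T))) := by
  have hT0 : 0 < T := by linarith
  set Q : ℝ → ℝ := fun u => ∑ m ∈ s, ∑ n ∈ s, c m * c n * Real.cos ((4 * Real.pi * (√m - √n)) * u) with hQ
  have hQ1 : ∀ u, (∑ m ∈ s, c m * Real.cos (4 * Real.pi * √m * u - Real.pi/4))^2 ≤ Q u := by
    intro u
    have e : Q u = (∑ m ∈ s, c m * Real.cos (4 * Real.pi * √m * u - Real.pi/4))^2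
        + (∑ m ∈ s, c m * Real.sin (4 * Real.pi * √m * u - Real.pi/4))^2 := by
      rw [pow_two, pow_two, Finset.sum_mul_sum, Finset.sum_mul_sum, ← Finset.sum_add_distrib]
      refine Finset.sum_congr rfl fun m _ => ?_
      rw [← Finset.sum_add_distrib]
      refine Finset.sum_congr rfl fun n _ => ?_
      have : (4 * Real.pi * (√m - √n)) * u = (4 * Real.pi * √m * u - Real.pi/4) - (4 * Real.pi * √n * u - Real.pi/4) := by ring
      rw [this, Real.cos_sub]; ring
    rw [e]; nlinarith [sq_nonneg (∑ m ∈ s, c m * Real.sin (4 * Real.pi * √m * u - Real.pi/4))]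
  have hQ0 : ∀ u, 0 ≤ Q u := fun u => (sq_nonneg _).trans (hQ1 u)
  have hti : ∀ m n : ℕ, Integrable (fun u : ℝ => c m * c n * (Real.exp (-(1/T) * u^2) * Real.cos ((4 * Real.pi * (√m - √n)) * u))) := by
    intro m n
    refine Integrable.const_mul ?_ _
    refine Integrable.mono' (gauss_int hT) (by fun_prop) ?_
    filter_upwards with u
    rw [norm_mul, Real.norm_eq_abs, Real.norm_eq_abs, abs_of_pos (Real.exp_pos _)]
    exact mul_le_of_le_one_right (Real.exp_pos _).le (Real.abs_cos_le_one _)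
  have hexp : ∀ u, Real.exp 2 * (Real.exp (-(1/T) * u^2) * Q u) = Real.exp 2 * ∑ m ∈ s, ∑ n ∈ s,
      c m * c n * (Real.exp (-(1/T) * u^2) * Real.cos ((4 * Real.pi * (√m - √n)) * u)) := by
    intro u
    congr 1
    rw [hQ, Finset.mul_sum]
    refine Finset.sum_congr rfl fun m _ => ?_
    rw [Finset.mul_sum]
    refine Finset.sum_congr rfl fun n _ => ?_
    ring
  have hgi : Integrable (fun u => Real.exp 2 * (Real.exp (-(1/T) * u^2) * Q u)) := by
    simp_rw [hexp]
    exact (integrable_finsetSum _ fun m _ => integrable_finsetSum _ fun n _ => hti m n).const_mul _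
  have hle : √T ≤ √(2*T) := Real.sqrt_le_sqrt (by linarith)
  have step1 : ∫ u in (√T)..(√(2*T)), (∑ m ∈ s, c m * Real.cos (4 * Real.pi * √m * u - Real.pi/4))^2 ≤
      ∫ u : ℝ, Real.exp 2 * (Real.exp (-(1/T) * u^2) * Q u) := by
    calc _ ≤ ∫ u in (√T)..(√(2*T)), Real.exp 2 * (Real.exp (-(1/T) * u^2) * Q u) := by
          refine intervalIntegral.integral_mono_on hle ?_ hgi.intervalIntegrable ?_
          · apply Continuous.intervalIntegrable; fun_prop
          · intro u hu
            refine (hQ1 u).trans ?_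
            rw [← mul_assoc, ← Real.exp_add]
            apply le_mul_of_one_le_left (hQ0 u)
            apply Real.one_le_exp
            have hu0 : 0 ≤ u := (Real.sqrt_nonneg _).trans hu.1
            have : u^2 ≤ 2*T := by
              have := Real.sq_sqrt (by linarith : 0 ≤ 2*T)
              rw [← this]; exact pow_le_pow_left₀ hu0 hu.2 2
            have h3 : 1/T * u^2 ≤ 1/T*(2*T) := by gcongr
            have h4 : 1/T*(2*T) = 2 := by field_simp
            linarith
      _ ≤ _ := by
          rw [intervalIntegral.integral_of_le hle]
          refine setIntegral_le_integral hgi ?_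
          filter_upwards with u
          have := hQ0 u
          positivity
  refine step1.trans ?_
  simp_rw [hexp]
  rw [integral_const_mul, integral_finsetSum _ fun m _ => integrable_finsetSum _ fun n _ => hti m n]
  rw [mul_assoc]
  refine mul_le_mul_of_nonneg_left ?_ (Real.exp_pos _).le
  set K : ℕ → ℕ → ℝ := fun m n => Real.exp (-(4 * Real.pi^2 * T * (√m - √n)^2)) with hK
  have e1 : ∀ m ∈ s, ∫ u : ℝ, ∑ n ∈ s, c m * c n * (Real.exp (-(1/T) * u^2) * Real.cos ((4 * Real.pi * (√m - √n)) * u))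
      = √(Real.pi * T) * ∑ n ∈ s, c m * c n * K m n := by
    intro m _
    rw [integral_finsetSum _ fun n _ => hti m n, Finset.mul_sum]
    refine Finset.sum_congr rfl fun n _ => ?_
    rw [integral_const_mul, gauss_cos hT, hK]
    have : -(T * (4 * Real.pi * (√(m:ℝ) - √n))^2/4) = -(4 * Real.pi^2 * T * (√m - √n)^2) := by ring
    rw [this]; ring
  rw [Finset.sum_congr rfl e1, ← Finset.mul_sum]
  refine mul_le_mul_of_nonneg_left ?_ (Real.sqrt_nonneg _)
  have hKpos : ∀ m n, 0 ≤ K m n := fun m n => (Real.exp_pos _).le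
  have hKsymm : ∀ m n, K m n = K n m := by
    intro m n; simp only [hK]; congr 2; ring
  calc ∑ m ∈ s, ∑ n ∈ s, c m * c n * K m n ≤ ∑ m ∈ s, ∑ n ∈ s, (c m^2/2 * K m n + c n^2/2 * K m n) := by
        refine Finset.sum_le_sum fun m _ => Finset.sum_le_sum fun n _ => ?_
        rw [← add_mul]
        refine mul_le_mul_of_nonneg_right ?_ (hKpos m n)
        nlinarith [sq_nonneg (c m - c n)]
    _ = ∑ m ∈ s, ∑ n ∈ s, c m^2 * K m n := by
        simp_rw [Finset.sum_add_distrib]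
        rw [Finset.sum_comm (f := fun m n => c n^2/2 * K m n)]
        rw [← Finset.sum_add_distrib]
        refine Finset.sum_congr rfl fun m _ => ?_
        rw [← Finset.sum_add_distrib]
        refine Finset.sum_congr rfl fun n _ => ?_
        rw [hKsymm n m]; ring
    _ ≤ ∑ m ∈ s, c m^2 * (8 * (1 + √(m/T))) := by
        refine Finset.sum_le_sum fun m _ => ?_
        rw [← Finset.mul_sum]
        exact mul_le_mul_of_nonneg_left (row_sum hT s m) (sq_nonneg _)
    _ = 8 * ∑ m ∈ s, c m^2 * (1 + √(m/T)) := by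
        rw [Finset.mul_sum]; refine Finset.sum_congr rfl fun m _ => by ring

lemma SB_cont {δ : ℝ} (hδ : 0 < δ) (y : ℝ) : Continuous (SB δ y) := by
  unfold SB
  refine continuous_tsum (fun m => by fun_prop) (coefB_summable hδ (y := y)) ?_
  intro m u
  rw [norm_mul, Real.norm_eq_abs, Real.norm_eq_abs]
  exact mul_le_of_le_one_right (abs_nonneg _) (Real.abs_cos_le_one _)

lemma SB_sq {T δ y B : ℝ} (hT : 10 ≤ T) (hδ : 0 < δ)
    (hB : ∀ N : ℕ, ∑ m ∈ Finset.range N, (coefB δ y m)^2 * (1 + √(m/T)) ≤ B) :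
    ∫ u in (√T)..(√(2*T)), (SB δ y u)^2 ≤ Real.exp 2 * √(Real.pi * T) * (8 * B) := by
  have hs := coefB_summable hδ (y := y)
  set c := coefB δ y
  have hb : ∀ (m : ℕ) (u : ℝ), ‖c m * Real.cos (4 * Real.pi * √m * u - Real.pi/4)‖ ≤ |c m| := by
    intro m u
    rw [norm_mul, Real.norm_eq_abs, Real.norm_eq_abs]
    exact mul_le_of_le_one_right (abs_nonneg _) (Real.abs_cos_le_one _)
  have hlim : Filter.Tendsto (fun N : ℕ => ∫ u in (√T)..(√(2*T)),
      (∑ m ∈ Finset.range N, c m * Real.cos (4 * Real.pi * √m * u - Real.pi/4))^2) Filter.atTop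
      (nhds (∫ u in (√T)..(√(2*T)), (SB δ y u)^2)) := by
    refine intervalIntegral.tendsto_integral_filter_of_dominated_convergence (fun _ => (∑' m, |c m|)^2) ?_ ?_ ?_ ?_
    · filter_upwards with N
      apply Continuous.aestronglyMeasurable; fun_prop
    · filter_upwards with N
      filter_upwards with u _
      rw [norm_pow]
      refine pow_le_pow_left₀ (norm_nonneg _) ?_ 2
      refine (norm_sum_le _ _).trans ((Finset.sum_le_sum fun m _ => hb m u).trans ?_)
      exact hs.sum_le_tsum _ (fun _ _ => abs_nonneg _)
    · exact intervalIntegrable_const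
    · filter_upwards with u _
      refine Filter.Tendsto.pow ?_ 2
      exact (Summable.of_norm_bounded hs (fun m => hb m u)).hasSum.tendsto_sum_nat
  refine le_of_tendsto hlim ?_
  filter_upwards with N
  refine (sieve_finite hT c _).trans ?_
  have := hB N
  gcongr

lemma SB_sq_x {T δ y : ℝ} (hT : 10 ≤ T) (hδ : 0 < δ) :
    ∫ x in T..(2*T), √x * (SB δ y (√x))^2 ≤ 4 * T * ∫ u in (√T)..(√(2*T)), (SB δ y u)^2 := by
  have hc := SB_cont hδ y
  have hle : T ≤ 2 * T := by linarith
  have hpos : ∀ x ∈ Set.uIcc T (2*T), 0 < √x := by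
    intro x hx
    rw [Set.uIcc_of_le hle] at hx
    exact Real.sqrt_pos.mpr (by linarith [hx.1])
  have hcv : ∫ x in T..(2*T), ((fun u => (SB δ y u)^2) ∘ Real.sqrt) x * (1 / (2 * √x)) = ∫ u in (√T)..(√(2*T)), (SB δ y u)^2 := by
    refine intervalIntegral.integral_comp_mul_deriv (f := Real.sqrt) (f' := fun x => 1 / (2 * √x)) ?_ ?_ (by fun_prop)
    · intro x hx
      exact Real.hasDerivAt_sqrt (Real.sqrt_pos.mp (hpos x hx)).ne'
    · refine ContinuousOn.div (by fun_prop) (by fun_prop) ?_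
      intro x hx; have := hpos x hx; positivity
  rw [← hcv, ← intervalIntegral.integral_const_mul]
  refine intervalIntegral.integral_mono_on hle ?_ ?_ ?_
  · apply Continuous.intervalIntegrable; fun_prop
  · apply ContinuousOn.intervalIntegrable
    refine ContinuousOn.mul (by fun_prop) (ContinuousOn.mul ?_ ?_)
    · exact Continuous.continuousOn (by simp only [Function.comp_def]; fun_prop)
    · refine ContinuousOn.div (by fun_prop) (by fun_prop) ?_
      intro x hx; have := hpos x hx; positivity
  · intro x hx
    have hp := hpos x (by rw [Set.uIcc_of_le hle]; exact hx)
    have hx0 : 0 ≤ x := by linarith [hx.1]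
    have hs := Real.sq_sqrt hx0
    simp only [Function.comp]
    have e : 4 * T * ((SB δ y (√x))^2 * (1 / (2 * √x))) = (4 * T * (1 / (2 * √x))) * (SB δ y (√x))^2 := by ring
    rw [e]
    refine mul_le_mul_of_nonneg_right ?_ (sq_nonneg _)
    rw [mul_one_div, le_div_iff₀ (by positivity)]
    nlinarith [hx.2]
open MeasureTheory

lemma divfun_eq_ind {N n : ℕ} (hn : n ∈ Finset.Icc 1 N) :
    (divfun n : ℝ) = ∑ a ∈ Finset.Icc 1 N, if a ∣ n then (1:ℝ) else 0 := by
  rw [Finset.mem_Icc] at hn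
  rw [Finset.sum_boole, divfun]
  congr 2
  ext a
  simp only [Nat.mem_divisors, Finset.mem_filter, Finset.mem_Icc]
  constructor
  · rintro ⟨h, _⟩
    exact ⟨⟨Nat.pos_of_dvd_of_pos h (by omega), (Nat.le_of_dvd (by omega) h).trans hn.2⟩, h⟩
  · rintro ⟨_, h⟩
    exact ⟨h, by omega⟩

lemma count_mult {N l : ℕ} (hl : 0 < l) :
    ∑ n ∈ Finset.Icc 1 N, (if l ∣ n then (1:ℝ) else 0) ≤ (N:ℝ) / l := by
  rw [Finset.sum_boole]
  have : (Finset.Icc 1 N).filter (fun n => l ∣ n) = (Finset.Ioc 0 N).filter (fun n => l ∣ n) := by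
    congr 1
  rw [this, Nat.Ioc_filter_dvd_card_eq_div]
  exact Nat.cast_div_le

lemma harm_mult {N g : ℕ} (hg : 0 < g) :
    ∑ a ∈ Finset.Icc 1 N, (if g ∣ a then (1:ℝ) / a else 0) ≤ (1 / g) * ∑ k ∈ Finset.Icc 1 N, (1:ℝ) / k := by
  rw [← Finset.sum_filter, Finset.mul_sum]
  have hsub : (Finset.Icc 1 N).filter (fun a => g ∣ a) ⊆ (Finset.Icc 1 N).image (fun k => g * k) := by
    intro a ha
    simp only [Finset.mem_filter, Finset.mem_Icc, Finset.mem_image] at *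
    obtain ⟨⟨h1, h2⟩, k, rfl⟩ := ha
    refine ⟨k, ⟨Nat.pos_of_mul_pos_left h1, ?_⟩, rfl⟩
    nlinarith
  refine (Finset.sum_le_sum_of_subset_of_nonneg hsub (fun _ _ _ => by positivity)).trans ?_
  rw [Finset.sum_image]
  · refine Finset.sum_le_sum fun k _ => ?_
    push_cast
    rw [one_div_mul_one_div]
  · intro x _ y _ h
    exact Nat.eq_of_mul_eq_mul_left hg h

lemma div_sq_sum (N : ℕ) :
    ∑ n ∈ Finset.Icc 1 N, (divfun n : ℝ)^2 ≤ N * (1 + Real.log N)^3 := by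
  set H : ℝ := ∑ k ∈ Finset.Icc 1 N, (1:ℝ) / k with hH
  have hH0 : 0 ≤ H := Finset.sum_nonneg fun _ _ => by positivity
  have hH1 : H ≤ 1 + Real.log N := by
    have := harmonic_le_one_add_log N
    rw [harmonic_eq_sum_Icc] at this
    push_cast at this
    simpa [hH] using this
  have h1 : ∑ n ∈ Finset.Icc 1 N, (divfun n : ℝ)^2 =
      ∑ a ∈ Finset.Icc 1 N, ∑ b ∈ Finset.Icc 1 N, ∑ n ∈ Finset.Icc 1 N, (if Nat.lcm a b ∣ n then (1:ℝ) else 0) := by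
    have : ∀ n ∈ Finset.Icc 1 N, (divfun n : ℝ)^2 = ∑ a ∈ Finset.Icc 1 N, ∑ b ∈ Finset.Icc 1 N, (if Nat.lcm a b ∣ n then (1:ℝ) else 0) := by
      intro n hn
      rw [divfun_eq_ind hn, pow_two, Finset.sum_mul_sum]
      refine Finset.sum_congr rfl fun a _ => Finset.sum_congr rfl fun b _ => ?_
      simp only [Nat.lcm_dvd_iff]
      by_cases h1 : a ∣ n <;> by_cases h2 : b ∣ n <;> simp [h1, h2]
    rw [Finset.sum_congr rfl this, Finset.sum_comm]
    refine Finset.sum_congr rfl fun a _ => ?_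
    rw [Finset.sum_comm]
  have h2 : ∀ a ∈ Finset.Icc 1 N, ∀ b ∈ Finset.Icc 1 N, ∑ n ∈ Finset.Icc 1 N, (if Nat.lcm a b ∣ n then (1:ℝ) else 0)
      ≤ N * ∑ g ∈ Finset.Icc 1 N, (g:ℝ) * ((if g ∣ a then (1:ℝ)/a else 0) * (if g ∣ b then (1:ℝ)/b else 0)) := by
    intro a ha b hb
    rw [Finset.mem_Icc] at ha hb
    have ha0 : 0 < a := by omega
    have hb0 : 0 < b := by omega
    refine (count_mult (Nat.lcm_pos ha0 hb0)).trans ?_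
    rw [div_eq_mul_one_div]
    refine mul_le_mul_of_nonneg_left ?_ (Nat.cast_nonneg N)
    have hg0 : 0 < Nat.gcd a b := Nat.gcd_pos_of_pos_left b ha0
    have hmem : Nat.gcd a b ∈ Finset.Icc 1 N := Finset.mem_Icc.mpr ⟨hg0, (Nat.gcd_le_left b ha0).trans ha.2⟩
    have e : (1:ℝ) / (Nat.lcm a b : ℕ) = (Nat.gcd a b : ℝ) * ((if Nat.gcd a b ∣ a then (1:ℝ)/a else 0) * (if Nat.gcd a b ∣ b then (1:ℝ)/b else 0)) := by
      rw [if_pos (Nat.gcd_dvd_left a b), if_pos (Nat.gcd_dvd_right a b)]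
      have hh : (Nat.gcd a b : ℝ) * (Nat.lcm a b : ℕ) = a * b := by exact_mod_cast Nat.gcd_mul_lcm a b
      have h1 : (Nat.lcm a b : ℝ) ≠ 0 := by exact_mod_cast (Nat.lcm_pos ha0 hb0).ne'
      have h2 : (a:ℝ) ≠ 0 := by exact_mod_cast ha0.ne'
      have h3 : (b:ℝ) ≠ 0 := by exact_mod_cast hb0.ne'
      field_simp
      linarith
    rw [e]
    exact Finset.single_le_sum (f := fun g : ℕ => (g:ℝ) * ((if g ∣ a then (1:ℝ)/a else 0) * (if g ∣ b then (1:ℝ)/b else 0)))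
      (fun g _ => by positivity) hmem
  rw [h1]
  calc _ ≤ ∑ a ∈ Finset.Icc 1 N, ∑ b ∈ Finset.Icc 1 N, N * ∑ g ∈ Finset.Icc 1 N, (g:ℝ) * ((if g ∣ a then (1:ℝ)/a else 0) * (if g ∣ b then (1:ℝ)/b else 0)) :=
        Finset.sum_le_sum fun a ha => Finset.sum_le_sum fun b hb => h2 a ha b hb
    _ = N * ∑ g ∈ Finset.Icc 1 N, (g:ℝ) * (∑ a ∈ Finset.Icc 1 N, if g ∣ a then (1:ℝ)/a else 0)^2 := by
        simp_rw [← Finset.mul_sum]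
        congr 1
        simp_rw [pow_two, Finset.sum_mul_sum, Finset.mul_sum]
        rw [Finset.sum_comm]
        have : ∀ x ∈ Finset.Icc 1 N, ∑ a ∈ Finset.Icc 1 N, ∑ g ∈ Finset.Icc 1 N, (g:ℝ) * ((if g ∣ a then (1:ℝ)/a else 0) * (if g ∣ x then (1:ℝ)/x else 0))
          = ∑ g ∈ Finset.Icc 1 N, ∑ a ∈ Finset.Icc 1 N, (g:ℝ) * ((if g ∣ a then (1:ℝ)/a else 0) * (if g ∣ x then (1:ℝ)/x else 0)) := fun x _ => Finset.sum_comm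
        rw [Finset.sum_congr rfl this, Finset.sum_comm]
        refine Finset.sum_congr rfl fun g _ => ?_
        rw [Finset.sum_comm]
    _ ≤ N * ∑ g ∈ Finset.Icc 1 N, (1:ℝ) / g * H^2 := by
        refine mul_le_mul_of_nonneg_left (Finset.sum_le_sum fun g hg => ?_) (Nat.cast_nonneg N)
        have hg0 : 0 < g := (Finset.mem_Icc.mp hg).1
        have hgr : (0:ℝ) < g := by exact_mod_cast hg0
        calc (g:ℝ) * (∑ a ∈ Finset.Icc 1 N, if g ∣ a then (1:ℝ)/a else 0)^2 ≤ g * (1 / g * H)^2 := by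
              refine mul_le_mul_of_nonneg_left (pow_le_pow_left₀ (Finset.sum_nonneg fun _ _ => by positivity) (harm_mult hg0) 2) hgr.le
          _ = 1 / g * H^2 := by field_simp
    _ = N * H^3 := by rw [← Finset.sum_mul, ← hH]; ring
    _ ≤ N * (1 + Real.log N)^3 := by gcongr

lemma majorize (a b f : ℕ → ℝ) (hf : ∀ n, f (n+1) ≤ f n) (hf0 : ∀ n, 0 ≤ f n)
    (h : ∀ N, ∑ n ∈ Finset.range N, a n ≤ ∑ n ∈ Finset.range N, b n) (N : ℕ) :
    ∑ n ∈ Finset.range N, a n * f n ≤ ∑ n ∈ Finset.range N, b n * f n := by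
  have key : ∀ N, f N * (∑ n ∈ Finset.range N, b n - ∑ n ∈ Finset.range N, a n) ≤ ∑ n ∈ Finset.range N, b n * f n - ∑ n ∈ Finset.range N, a n * f n := by
    intro N
    induction N with
    | zero => simp
    | succ N ih =>
      have h1 := h (N+1)
      have h2 : f (N+1) * (∑ n ∈ Finset.range (N+1), b n - ∑ n ∈ Finset.range (N+1), a n) ≤ f N * (∑ n ∈ Finset.range (N+1), b n - ∑ n ∈ Finset.range (N+1), a n) :=
        mul_le_mul_of_nonneg_right (hf N) (by linarith)
      refine h2.trans ?_
      simp only [Finset.sum_range_succ]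
      nlinarith
  have := key N
  nlinarith [mul_nonneg (hf0 N) (sub_nonneg.mpr (h N))]

lemma sqrt_sum_lower (N : ℕ) : (N:ℝ) * √N ≤ 2 * ∑ n ∈ Finset.range N, √((n:ℝ)+1) := by
  induction N with
  | zero => simp
  | succ N ih =>
    rw [Finset.sum_range_succ]
    push_cast
    have hN : (0:ℝ) ≤ N := Nat.cast_nonneg N
    have q1 := Real.sq_sqrt hN
    have q2 := Real.sq_sqrt (by linarith : (0:ℝ) ≤ N + 1)
    have p1 := Real.sqrt_nonneg (N:ℝ)
    have p2 := Real.sqrt_pos.mpr (by linarith : (0:ℝ) < N + 1)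
    set r := √(N:ℝ)
    set s := √((N:ℝ)+1)
    have hrs : r < s := Real.sqrt_lt_sqrt hN (by linarith)
    have : s^3 - r^3 ≤ 2 * s := by
      have h1 : (s - r) * (s + r) = 1 := by nlinarith
      have h2 : (s^3 - r^3) * (s + r) = s^2 + s*r + r^2 := by
        calc _ = ((s - r) * (s + r)) * (s^2 + s*r + r^2) := by ring
          _ = _ := by rw [h1, one_mul]
      by_contra hc
      push Not at hc
      nlinarith [mul_nonneg p1 p2.le]
    have e1 : ((N:ℝ)+1) * s = s^3 := by rw [← q2]; ring
    have e2 : (N:ℝ) * r = r^3 := by rw [← q1]; ring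
    linarith

lemma log10 {T : ℝ} (hT : 10 ≤ T) : 1 ≤ Real.log T := by
  rw [Real.le_log_iff_exp_le (by linarith)]
  linarith [Real.exp_one_lt_three]

lemma div_sq_major {T : ℝ} (hT : 10 ≤ T) (N : ℕ) :
    ∑ n ∈ Finset.range N, (divfun (n+1) : ℝ)^2 ≤
      ∑ n ∈ Finset.range N, 512 * Real.log T^3 * (1 + 2 * √(((n:ℝ)+1)/T)) := by
  have hT0 : 0 < T := by linarith
  have hl := log10 hT
  have e : ∑ n ∈ Finset.range N, (divfun (n+1) : ℝ)^2 = ∑ n ∈ Finset.Icc 1 N, (divfun n : ℝ)^2 := by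
    rw [Finset.range_eq_Ico, Finset.sum_Ico_add' (fun n => (divfun n : ℝ)^2) 0 N 1]
    rfl
  rw [e]
  refine (div_sq_sum N).trans ?_
  rw [← Finset.mul_sum, Finset.sum_add_distrib, ← Finset.mul_sum]
  simp only [Finset.sum_const, Finset.card_range, nsmul_eq_mul, mul_one]
  have hsq : (N:ℝ) * √(N/T) ≤ 2 * ∑ n ∈ Finset.range N, √(((n:ℝ)+1)/T) := by
    simp_rw [Real.sqrt_div' _ hT0.le, ← Finset.sum_div]
    rw [← mul_div_assoc, ← mul_div_assoc]
    exact div_le_div_of_nonneg_right (sqrt_sum_lower N) (Real.sqrt_nonneg _)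
  have hmain : (N:ℝ) * (1 + Real.log N)^3 ≤ 512 * Real.log T^3 * (N + N * √(N/T)) := by
    rcases Nat.eq_zero_or_pos N with rfl | hN
    · simp
    have hN1 : (1:ℝ) ≤ N := by exact_mod_cast hN
    have hlN : 0 ≤ Real.log N := Real.log_nonneg hN1
    rw [show 512 * Real.log T^3 * (N + N * √(N/T)) = N * (512 * Real.log T^3 * (1 + √(N/T))) by ring]
    refine mul_le_mul_of_nonneg_left ?_ (by linarith)
    by_cases h : (N:ℝ) ≤ T
    · have h1 : 1 + Real.log N ≤ 2 * Real.log T := by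
        have := Real.log_le_log (by linarith) h
        linarith
      calc (1 + Real.log N)^3 ≤ (2 * Real.log T)^3 := by gcongr
        _ = 8 * Real.log T^3 * 1 := by ring
        _ ≤ 512 * Real.log T^3 * (1 + √(N/T)) := by
          gcongr
          · norm_num
          · linarith [Real.sqrt_nonneg (N/T)]
    · push Not at h
      set z := (N:ℝ)/T with hz
      have hz1 : 1 ≤ z := by rw [hz, le_div_iff₀ hT0]; linarith
      have h1 : Real.log N = Real.log T + Real.log z := by
        rw [hz, Real.log_div (by linarith) (by linarith)]; ring
      have h2 : Real.log z ≤ z^((1:ℝ)/6) / (1/6) := Real.log_le_rpow_div (by linarith) (by norm_num)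
      have h3 : 1 ≤ z^((1:ℝ)/6) := Real.one_le_rpow hz1 (by norm_num)
      have h4 : 1 + Real.log N ≤ 8 * Real.log T * z^((1:ℝ)/6) := by
        rw [h1]; nlinarith [mul_nonneg (sub_nonneg.mpr hl) (sub_nonneg.mpr h3)]
      have h5 : (z^((1:ℝ)/6))^3 = √z := by
        rw [← Real.rpow_natCast, ← Real.rpow_mul (by linarith), Real.sqrt_eq_rpow]; norm_num
      calc (1 + Real.log N)^3 ≤ (8 * Real.log T * z^((1:ℝ)/6))^3 := by gcongr
        _ = 512 * Real.log T^3 * √z := by rw [← h5]; ring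
        _ ≤ _ := by gcongr; linarith
  refine hmain.trans ?_
  gcongr
open MeasureTheory

lemma inv_sqrt_sum (N : ℕ) : ∑ n ∈ Finset.range N, 1 / √((n:ℝ)+1) ≤ 2 * √N := by
  induction N with
  | zero => simp
  | succ N ih =>
    rw [Finset.sum_range_succ]
    push_cast
    have hN : (0:ℝ) ≤ N := Nat.cast_nonneg N
    have q1 := Real.sq_sqrt hN
    have q2 := Real.sq_sqrt (by linarith : (0:ℝ) ≤ N + 1)
    have p1 := Real.sqrt_nonneg (N:ℝ)
    have p2 := Real.sqrt_pos.mpr (by linarith : (0:ℝ) < N + 1)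
    set r := √(N:ℝ)
    set s := √((N:ℝ)+1)
    have : 1 / s ≤ 2 * s - 2 * r := by
      rw [div_le_iff₀ p2]
      nlinarith [sq_nonneg (s - r)]
    linarith

lemma tail_sum {y : ℝ} (hy : 0 < y) (N : ℕ) :
    ∑ n ∈ Finset.range N, 1 / (((n:ℝ)+1+y) * √((n:ℝ)+1+y)) ≤ 2 / √y := by
  have : ∀ N : ℕ, ∑ n ∈ Finset.range N, 1 / (((n:ℝ)+1+y) * √((n:ℝ)+1+y)) ≤ 2 / √y - 2 / √(N + y) := by
    intro N
    induction N with
    | zero => simp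
    | succ N ih =>
      rw [Finset.sum_range_succ]
      push_cast
      have hN : (0:ℝ) < N + y := by positivity
      have q1 := Real.sq_sqrt hN.le
      have q2 := Real.sq_sqrt (by linarith : (0:ℝ) ≤ N + 1 + y)
      have p1 := Real.sqrt_pos.mpr hN
      have p2 := Real.sqrt_pos.mpr (by linarith : (0:ℝ) < N + 1 + y)
      have hrs : √(N+y) ≤ √((N:ℝ)+1+y) := Real.sqrt_le_sqrt (by linarith)
      set r := √((N:ℝ)+y)
      set s := √((N:ℝ)+1+y)
      have e : ((N:ℝ)+1+y) * s = s^3 := by rw [← q2]; ring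
      rw [e]
      have : 1 / s^3 ≤ 2 / r - 2 / s := by
        rw [div_sub_div _ _ p1.ne' p2.ne', div_le_div_iff₀ (by positivity) (by positivity)]
        have h1 : (s - r) * (s + r) = 1 := by nlinarith
        have h2 : 1 ≤ (s - r) * (2 * s) := by nlinarith
        have h3 : r * s ≤ s^2 := by nlinarith
        calc 1 * (r * s) ≤ s^2 * ((s - r) * (2 * s)) := by nlinarith
          _ = (2 * s - r * 2) * s^3 := by ring
      linarith
  refine (this N).trans ?_
  have : 0 ≤ 2 / √(N+y) := by positivity
  linarith

lemma coefB_sq (δ y : ℝ) (m : ℕ) : (coefB δ y m)^2 = 1/(2*Real.pi^2) * ((divfun m : ℝ)^2 *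
    (1 / (m * √m)) * (WW (δ * √m) - if m ≤ ⌊y⌋₊ then 1 else 0)^2) := by
  have hm : (0:ℝ) ≤ m := Nat.cast_nonneg m
  have h : ((m:ℝ)^((3:ℝ)/4))^2 = m * √m := by
    rw [← Real.rpow_natCast, ← Real.rpow_mul hm]
    rcases hm.eq_or_lt with h0 | h0
    · rw [← h0]; norm_num
    · rw [Real.sqrt_eq_rpow]
      nth_rewrite 2 [← Real.rpow_one (m:ℝ)]
      rw [← Real.rpow_add h0]; norm_num
  have h2 : (√2:ℝ)^2 = 2 := Real.sq_sqrt (by norm_num)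
  unfold coefB
  simp only [mul_pow, div_pow, one_pow, h, h2]

lemma coefB_term : ∃ A > 0, ∀ T y : ℝ, ∀ n : ℕ, 10 ≤ T → 2 ≤ y → y ≤ T →
    (coefB (1/(4*√T)) y (n+1))^2 * (1 + √(((n+1:ℕ):ℝ)/T)) ≤
      (divfun (n+1) : ℝ)^2 * (if n < ⌊y⌋₊ then 1 / (T * √((n:ℝ)+1)) else 0) +
      A * ((divfun (n+1) : ℝ)^2 * (1 / (((n:ℝ)+1+y) * √((n:ℝ)+1+y)) * (1 / (1 + √(((n:ℝ)+1)/T))))) := by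
  obtain ⟨C, hC, hW⟩ := WW_decay
  refine ⟨3 * (2 + 32 * C), by positivity, ?_⟩
  intro T y n hT hy hyT
  have hT0 : 0 < T := by linarith
  have hpi := Real.pi_gt_three
  have hn0 : (0:ℝ) ≤ n := Nat.cast_nonneg n
  rw [coefB_sq]
  push_cast
  set m : ℝ := (n:ℝ) + 1 with hm
  have hm1 : 1 ≤ m := by linarith
  have sm0 := Real.sqrt_pos.mpr (by linarith : 0 < m)
  have sm2 := Real.sq_sqrt (by linarith : 0 ≤ m)
  have sT0 := Real.sqrt_pos.mpr hT0
  set q := √(m/T) with hq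
  have hq0 : 0 ≤ q := Real.sqrt_nonneg _
  have hq2 : q^2 = m / T := Real.sq_sqrt (by positivity)
  have hqd : 1/(4*√T) * √m = q / 4 := by
    rw [hq, Real.sqrt_div (by linarith)]; field_simp
  rw [hqd]
  set D := (divfun (n+1) : ℝ)^2 with hD
  have hD0 : 0 ≤ D := sq_nonneg _
  by_cases h : n < ⌊y⌋₊
  · rw [if_pos h, if_pos (by omega)]
    have hmy : m ≤ y := by
      have : ((n+1:ℕ):ℝ) ≤ y := (Nat.le_floor_iff (by linarith)).mp h
      push_cast at this; exact this
    have h1 := WW_sub_one (t := q/4) (by positivity)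
    have h2 : (WW (q/4) - 1)^2 ≤ Real.pi^2 * (m / T) := by
      rw [← sq_abs, ← hq2, ← mul_pow]
      refine pow_le_pow_left₀ (abs_nonneg _) (h1.trans (by linarith)) 2
    have hq1 : q ≤ 1 := by
      rw [hq, Real.sqrt_le_one, div_le_one hT0]; linarith
    have h3 : 1/(2*Real.pi^2) * (D * (1/(m*√m)) * (WW (q/4) - 1)^2) * (1 + q) ≤ 1/(2*Real.pi^2) * (D * (1/(m*√m)) * (Real.pi^2 * (m / T))) * 2 := by
      gcongr; linarith
    have e : 1/(2*Real.pi^2) * (D * (1/(m*√m)) * (Real.pi^2 * (m / T))) * 2 = D * (1 / (T * √m)) := by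
      field_simp
    rw [e] at h3
    have : 0 ≤ 3 * (2 + 32 * C) * (D * (1 / ((m+y) * √(m+y)) * (1 / (1+q)))) := by positivity
    linarith
  · rw [if_neg h, if_neg (by omega), sub_zero, mul_zero, zero_add]
    have hym : y < m := by
      have : y < (⌊y⌋₊:ℝ) + 1 := Nat.lt_floor_add_one y
      have h' : (⌊y⌋₊:ℝ) ≤ n := by exact_mod_cast (not_lt.mp h)
      linarith
    have hw1 := WW_abs (q/4)
    have hw2 := hW (q/4)
    have hw0 := abs_nonneg (WW (q/4))
    have hW2 : (WW (q/4))^2 * (1+q)^2 ≤ 2 + 32 * C := by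
      rw [← sq_abs]
      set w := |WW (q/4)|
      have h1 : w^2 ≤ w := by nlinarith
      have h2 : (1+q)^2 ≤ 2 + 2*q^2 := by nlinarith [sq_nonneg (1-q)]
      calc w^2*(1+q)^2 ≤ w * (2 + 2*q^2) := by gcongr
        _ ≤ 2 + 32*C := by nlinarith
    set P := m + y with hP
    have hP0 : 0 < P := by linarith
    have sP0 := Real.sqrt_pos.mpr hP0
    have hPm : P * √P ≤ 3 * (m * √m) := by
      have h1 : P ≤ 2 * m := by linarith
      have h2 : √P ≤ 3/2 * √m := by
        rw [show (3/2:ℝ) = √(9/4) by rw [show (9/4:ℝ) = (3/2)^2 by norm_num]; exact (Real.sqrt_sq (by norm_num)).symm, ← Real.sqrt_mul (by norm_num)]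
        exact Real.sqrt_le_sqrt (by linarith)
      calc P * √P ≤ (2*m) * (3/2*√m) := by gcongr
        _ = _ := by ring
    have hP3 : 1 / (m*√m) ≤ 3 * (1 / (P*√P)) := by
      rw [mul_one_div, div_le_div_iff₀ (by positivity) (by positivity)]; linarith
    have hw3 : (WW (q/4))^2 * (1+q) ≤ (2+32*C) * (1/(1+q)) := by
      rw [mul_one_div, le_div_iff₀ (by positivity)]
      calc _ = (WW (q/4))^2 * (1+q)^2 := by ring
        _ ≤ _ := hW2
    have hpi1 : 1/(2*Real.pi^2) ≤ 1 := by
      rw [div_le_one (by positivity)]; nlinarith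
    calc 1/(2*Real.pi^2) * (D * (1/(m*√m)) * (WW (q/4))^2) * (1 + q)
        = 1/(2*Real.pi^2) * ((D * (1/(m*√m))) * ((WW (q/4))^2 * (1 + q))) := by ring
      _ ≤ 1 * ((D * (3 * (1 / (P*√P)))) * ((2+32*C) * (1/(1+q)))) := by gcongr
      _ = _ := by ring

lemma coefB_sum : ∃ C > 0, ∀ T y : ℝ, ∀ N : ℕ, 10 ≤ T → 2 ≤ y → y ≤ T →
    ∑ m ∈ Finset.range N, (coefB (1/(4*√T)) y m)^2 * (1 + √(m/T)) ≤ C * (Real.log T^3 / √y) := by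
  obtain ⟨A, hA, hterm⟩ := coefB_term
  refine ⟨3072 + 2048 * A, by positivity, ?_⟩
  intro T y N hT hy hyT
  have hT0 : 0 < T := by linarith
  have hy0 : 0 < y := by linarith
  have hl := log10 hT
  set L := Real.log T^3 with hL
  have hL0 : 0 ≤ L := by positivity
  have hsy := Real.sqrt_pos.mpr hy0
  have s1 : ∑ m ∈ Finset.range N, (coefB (1/(4*√T)) y m)^2 * (1 + √(m/T)) ≤
      ∑ n ∈ Finset.range N, (coefB (1/(4*√T)) y (n+1))^2 * (1 + √(((n+1:ℕ):ℝ)/T)) := by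
    have : ∑ m ∈ Finset.range N, (coefB (1/(4*√T)) y m)^2 * (1 + √(m/T)) ≤ ∑ m ∈ Finset.range (N+1), (coefB (1/(4*√T)) y m)^2 * (1 + √(m/T)) := by
      rw [Finset.sum_range_succ]
      have : 0 ≤ (coefB (1/(4*√T)) y N)^2 * (1 + √(N/T)) := by positivity
      linarith
    rw [Finset.sum_range_succ'] at this
    have h0 : coefB (1/(4*√T)) y 0 = 0 := by simp [coefB, divfun]
    rw [h0] at this
    simpa using this
  refine s1.trans ((Finset.sum_le_sum fun n _ => hterm T y n hT hy hyT).trans ?_)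
  rw [Finset.sum_add_distrib, ← Finset.mul_sum]
  have b1 : ∑ n ∈ Finset.range N, (divfun (n+1) : ℝ)^2 * (if n < ⌊y⌋₊ then 1 / (T * √((n:ℝ)+1)) else 0) ≤ 3072 * (L / √y) := by
    calc _ ≤ ∑ n ∈ Finset.range ⌊y⌋₊, (divfun (n+1) : ℝ)^2 * (1 / (T * √((n:ℝ)+1))) := by
          simp_rw [mul_ite, mul_zero]
          rw [← Finset.sum_filter]
          refine Finset.sum_le_sum_of_subset_of_nonneg ?_ (fun _ _ _ => by positivity)
          intro n hn
          exact Finset.mem_range.mpr (Finset.mem_filter.mp hn).2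
      _ ≤ ∑ n ∈ Finset.range ⌊y⌋₊, (512 * L * (1 + 2 * √(((n:ℝ)+1)/T))) * (1 / (T * √((n:ℝ)+1))) := by
          refine majorize _ _ _ ?_ (fun n => by positivity) (div_sq_major hT) _
          intro n
          push_cast
          gcongr
          linarith
      _ ≤ ∑ n ∈ Finset.range ⌊y⌋₊, (512 * L * 3 / T) * (1 / √((n:ℝ)+1)) := by
          refine Finset.sum_le_sum fun n hn => ?_
          have hn' : ((n+1:ℕ):ℝ) ≤ y := (Nat.le_floor_iff hy0.le).mp (Finset.mem_range.mp hn)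
          push_cast at hn'
          have : √(((n:ℝ)+1)/T) ≤ 1 := by
            rw [Real.sqrt_le_one, div_le_one hT0]; linarith
          calc _ ≤ (512 * L * (1 + 2 * 1)) * (1 / (T * √((n:ℝ)+1))) := by gcongr
            _ = _ := by
              have := Real.sqrt_pos.mpr (by positivity : (0:ℝ) < n + 1)
              field_simp; norm_num
      _ ≤ (512 * L * 3 / T) * (2 * √y) := by
          rw [← Finset.mul_sum]
          refine mul_le_mul_of_nonneg_left ((inv_sqrt_sum _).trans ?_) (by positivity)
          gcongr
          exact Nat.floor_le hy0.le
      _ ≤ 3072 * (L / √y) := by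
          have e : (512 * L * 3 / T) * (2 * √y) = 3072 * L * (√y / T) := by ring
          rw [e, show 3072 * (L / √y) = 3072 * L * (1 / √y) by ring]
          refine mul_le_mul_of_nonneg_left ?_ (by positivity)
          rw [div_le_div_iff₀ hT0 hsy, Real.mul_self_sqrt hy0.le]
          linarith
  have b2 : ∑ n ∈ Finset.range N, (divfun (n+1) : ℝ)^2 * (1 / (((n:ℝ)+1+y) * √((n:ℝ)+1+y)) * (1 / (1 + √(((n:ℝ)+1)/T)))) ≤ 2048 * (L / √y) := by
    calc _ ≤ ∑ n ∈ Finset.range N, (512 * L * (1 + 2 * √(((n:ℝ)+1)/T))) * (1 / (((n:ℝ)+1+y) * √((n:ℝ)+1+y)) * (1 / (1 + √(((n:ℝ)+1)/T)))) := by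
          refine majorize _ _ _ ?_ (fun n => by positivity) (div_sq_major hT) _
          intro n
          push_cast
          gcongr <;> linarith
      _ ≤ ∑ n ∈ Finset.range N, (1024 * L) * (1 / (((n:ℝ)+1+y) * √((n:ℝ)+1+y))) := by
          refine Finset.sum_le_sum fun n _ => ?_
          set q := √(((n:ℝ)+1)/T)
          have hq0 : 0 ≤ q := Real.sqrt_nonneg _
          calc _ ≤ (512 * L * (2 * (1 + q))) * (1 / (((n:ℝ)+1+y) * √((n:ℝ)+1+y)) * (1 / (1 + q))) := by
                gcongr; linarith
            _ = ((1024 * L) * (1 / (((n:ℝ)+1+y) * √((n:ℝ)+1+y)))) * ((1+q) * (1 / (1+q))) := by ring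
            _ = _ := by rw [mul_one_div_cancel (by positivity), mul_one]
      _ ≤ (1024 * L) * (2 / √y) := by
          rw [← Finset.mul_sum]
          exact mul_le_mul_of_nonneg_left (tail_sum hy0 N) (by positivity)
      _ = 2048 * (L / √y) := by ring
  have := mul_le_mul_of_nonneg_left b2 hA.le
  linarith
open MeasureTheory

lemma floor_int (h : ℕ → ℝ) (M : ℕ) : Integrable (fun x : ℝ => ∑ n ∈ Finset.range M, (Set.Ico (n:ℝ) (n+1)).indicator (fun _ => h n) x) := by
  refine integrable_finsetSum _ fun n _ => ?_
  rw [integrable_indicator_iff measurableSet_Ico]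
  exact integrableOn_const (by simp)

lemma floor_integral (h : ℕ → ℝ) (M : ℕ) :
    ∫ x : ℝ, ∑ n ∈ Finset.range M, (Set.Ico (n:ℝ) (n+1)).indicator (fun _ => h n) x = ∑ n ∈ Finset.range M, h n := by
  rw [integral_finsetSum]
  · refine Finset.sum_congr rfl fun n _ => ?_
    rw [integral_indicator measurableSet_Ico]
    simp
  · intro n _
    rw [integrable_indicator_iff measurableSet_Ico]
    exact integrableOn_const (by simp)

lemma floor_eq (h : ℕ → ℝ) {M : ℕ} {x : ℝ} (hx : 0 ≤ x) (hxM : ⌊x⌋₊ < M) :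
    ∑ n ∈ Finset.range M, (Set.Ico (n:ℝ) (n+1)).indicator (fun _ => h n) x = h ⌊x⌋₊ := by
  rw [Finset.sum_eq_single ⌊x⌋₊]
  · rw [Set.indicator_of_mem]
    exact ⟨Nat.floor_le hx, Nat.lt_floor_add_one x⟩
  · intro n _ hn
    rw [Set.indicator_of_notMem]
    rintro ⟨h1, h2⟩
    exact hn ((Nat.floor_eq_iff hx).mpr ⟨h1, h2⟩).symm
  · intro h'
    exact absurd (Finset.mem_range.mpr hxM) h'

theorem R2_mean_square :
    ∃ C : ℝ, 0 < C ∧ ∀ T y : ℝ, 10 ≤ T → 2 ≤ y → y ≤ T →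
      (∫ x in T..(2 * T), R2 y x ^ 2) ≤
        C * T ^ ((3 : ℝ) / 2) * y ^ (-(1 : ℝ) / 2) * Real.log T ^ 3 := by
  obtain ⟨C, hC, hR⟩ := R2_pointwise
  obtain ⟨K, hK, hS⟩ := coefB_sum
  refine ⟨4 * (15360 + C^2 + 576 * K), by positivity, ?_⟩
  intro T y hT hy hyT
  have hT0 : 0 < T := by linarith
  have hy0 : 0 < y := by linarith
  have hl := log10 hT
  have hsT := Real.sqrt_pos.mpr hT0
  have hsy := Real.sqrt_pos.mpr hy0
  have eT : T ^ ((3:ℝ)/2) = T * √T := by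
    rw [Real.sqrt_eq_rpow]
    nth_rewrite 2 [← Real.rpow_one T]
    rw [← Real.rpow_add hT0]; norm_num
  have ey : y ^ (-(1:ℝ)/2) = 1 / √y := by
    rw [Real.sqrt_eq_rpow, neg_div, Real.rpow_neg hy0.le, ← one_div]
  rw [eT, ey]
  set L := Real.log T^3 with hL
  have hL0 : 0 ≤ L := by positivity
  have hle : T ≤ 2 * T := by linarith
  by_cases hIntg : IntervalIntegrable (fun x => R2 y x ^ 2) volume T (2*T)
  swap
  · rw [intervalIntegral.integral_undef hIntg]; positivity
  set δ := 1/(4*√T) with hδd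
  have hδ : 0 < δ := by positivity
  set M := ⌊2*T⌋₊ + 1 with hM
  set H1 : ℝ → ℝ := fun x => ∑ n ∈ Finset.range M, (Set.Ico (n:ℝ) (n+1)).indicator (fun _ => (divfun n:ℝ)^2) x with hH1
  set H2 : ℝ → ℝ := fun x => ∑ n ∈ Finset.range M, (Set.Ico (n:ℝ) (n+1)).indicator (fun _ => (divfun (n+1):ℝ)^2) x with hH2
  have i1 : Integrable H1 := floor_int (fun n => (divfun n:ℝ)^2) M
  have i2 : Integrable H2 := floor_int (fun n => (divfun (n+1):ℝ)^2) M
  have v1 : ∫ x, H1 x = ∑ n ∈ Finset.range M, (divfun n:ℝ)^2 := floor_integral (fun n => (divfun n:ℝ)^2) M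
  have v2 : ∫ x, H2 x = ∑ n ∈ Finset.range M, (divfun (n+1):ℝ)^2 := floor_integral (fun n => (divfun (n+1):ℝ)^2) M
  have hMT : (M:ℝ) ≤ 3 * T := by
    rw [hM]; push_cast
    linarith [Nat.floor_le (by linarith : 0 ≤ 2*T)]
  have w2 : ∑ n ∈ Finset.range M, (divfun (n+1):ℝ)^2 ≤ 7680 * (T * L) := by
    refine (div_sq_major hT M).trans ?_
    calc ∑ n ∈ Finset.range M, 512 * Real.log T^3 * (1 + 2 * √(((n:ℝ)+1)/T)) ≤ ∑ n ∈ Finset.range M, 512 * L * (1 + 2*2) := by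
          refine Finset.sum_le_sum fun n hn => ?_
          have : √(((n:ℝ)+1)/T) ≤ 2 := by
            rw [Real.sqrt_le_left (by norm_num), div_le_iff₀ hT0]
            have : ((n+1:ℕ):ℝ) ≤ M := by exact_mod_cast Finset.mem_range.mp hn
            push_cast at this; linarith
          gcongr
      _ = M * (2560 * L) := by
          rw [Finset.sum_const, Finset.card_range, nsmul_eq_mul]; ring
      _ ≤ (3 * T) * (2560 * L) := by gcongr
      _ = _ := by ring
  have w1 : ∑ n ∈ Finset.range M, (divfun n:ℝ)^2 ≤ 7680 * (T * L) := by
    refine le_trans ?_ w2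
    have h1 := Finset.sum_range_succ (fun n => (divfun n:ℝ)^2) M
    have h2 := Finset.sum_range_succ' (fun n => (divfun n:ℝ)^2) M
    have h3 : (divfun 0 : ℝ) = 0 := by simp [divfun]
    rw [h3] at h2
    nlinarith [sq_nonneg (divfun M : ℝ)]
  have hH1n : ∀ x, 0 ≤ H1 x := fun x => Finset.sum_nonneg fun n _ => Set.indicator_nonneg (fun _ _ => by positivity) x
  have hH2n : ∀ x, 0 ≤ H2 x := fun x => Finset.sum_nonneg fun n _ => Set.indicator_nonneg (fun _ _ => by positivity) x
  have u1 : ∫ x in T..(2*T), H1 x ≤ 7680 * (T * L) := by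
    rw [intervalIntegral.integral_of_le hle]
    refine (setIntegral_le_integral i1 (Filter.Eventually.of_forall hH1n)).trans ?_
    rw [v1]; exact w1
  have u2 : ∫ x in T..(2*T), H2 x ≤ 7680 * (T * L) := by
    rw [intervalIntegral.integral_of_le hle]
    refine (setIntegral_le_integral i2 (Filter.Eventually.of_forall hH2n)).trans ?_
    rw [v2]; exact w2
  have u3 : ∫ x in T..(2*T), √x * (SB δ y (√x))^2 ≤ 576 * K * (T * √T * (1/√y) * L) := by
    refine (SB_sq_x hT hδ).trans ?_
    have h1 := SB_sq (T := T) (δ := δ) (y := y) hT hδ (fun N => hS T y N hT hy hyT)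
    have hpi : √(Real.pi * T) ≤ 2 * √T := by
      rw [show (2:ℝ) = √4 by rw [show (4:ℝ) = 2^2 by norm_num]; exact (Real.sqrt_sq (by norm_num)).symm, ← Real.sqrt_mul (by norm_num)]
      apply Real.sqrt_le_sqrt
      nlinarith [Real.pi_lt_four]
    have he : Real.exp 2 ≤ 9 := by
      rw [show (2:ℝ) = 1 + 1 by norm_num, Real.exp_add]
      nlinarith [Real.exp_one_lt_three, Real.exp_pos 1]
    calc _ ≤ 4 * T * (Real.exp 2 * √(Real.pi * T) * (8 * (K * (L / √y)))) := by gcongr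
      _ ≤ 4 * T * (9 * (2 * √T) * (8 * (K * (L / √y)))) := by gcongr
      _ = _ := by ring
  have hcS : Continuous (fun x => √x * (SB δ y (√x))^2) := by
    have := SB_cont hδ y
    fun_prop
  have j1 : IntervalIntegrable H1 volume T (2*T) := i1.intervalIntegrable
  have j2 : IntervalIntegrable H2 volume T (2*T) := i2.intervalIntegrable
  have j3 : IntervalIntegrable (fun x => √x * (SB δ y (√x))^2) volume T (2*T) := hcS.intervalIntegrable _ _
  have j4 : IntervalIntegrable (fun _ : ℝ => (C * Real.log T)^2) volume T (2*T) := intervalIntegrable_const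
  have main : ∫ x in T..(2*T), R2 y x ^ 2 ≤ ∫ x in T..(2*T), 4 * (((H1 x + H2 x) + (C * Real.log T)^2) + √x * (SB δ y (√x))^2) := by
    refine intervalIntegral.integral_mono_on hle hIntg ((((j1.add j2).add j4).add j3).const_mul 4) ?_
    intro x hx
    have hx0 : 0 ≤ x := by linarith [hx.1]
    have hfl : ⌊x⌋₊ < M := Nat.lt_succ_of_le (Nat.floor_le_floor hx.2)
    have e1 : H1 x = (divfun ⌊x⌋₊:ℝ)^2 := floor_eq (fun n => (divfun n:ℝ)^2) hx0 hfl
    have e2 : H2 x = (divfun (⌊x⌋₊+1):ℝ)^2 := floor_eq (fun n => (divfun (n+1):ℝ)^2) hx0 hfl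
    rw [e1, e2]
    have h := hR T y x hT hx.1 hx.2
    rw [← hδd] at h
    have hr : (√(√x) * |SB δ y (√x)|)^2 = √x * (SB δ y (√x))^2 := by
      rw [mul_pow, sq_abs, Real.sq_sqrt (Real.sqrt_nonneg _)]
    rw [← hr, ← sq_abs (R2 y x)]
    set p := (divfun ⌊x⌋₊:ℝ)
    set q := (divfun (⌊x⌋₊+1):ℝ)
    set r := √(√x) * |SB δ y (√x)|
    set w := C * Real.log T
    refine (pow_le_pow_left₀ (abs_nonneg _) h 2).trans ?_
    nlinarith [sq_nonneg (p-q), sq_nonneg (p-w), sq_nonneg (p-r), sq_nonneg (q-w), sq_nonneg (q-r), sq_nonneg (w-r)]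
  refine main.trans ?_
  rw [intervalIntegral.integral_const_mul, intervalIntegral.integral_add ((j1.add j2).add j4) j3,
    intervalIntegral.integral_add (j1.add j2) j4, intervalIntegral.integral_add j1 j2, intervalIntegral.integral_const]
  have hTL : T * L ≤ T * √T * (1/√y) * L := by
    have : 1 ≤ √T * (1/√y) := by
      rw [mul_one_div, le_div_iff₀ hsy, one_mul]
      exact Real.sqrt_le_sqrt hyT
    calc T * L = (T * L) * 1 := by ring
      _ ≤ (T * L) * (√T * (1/√y)) := by gcongr
      _ = _ := by ring
  have u4 : (2*T - T) • (C * Real.log T)^2 ≤ C^2 * (T * L) := by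
    rw [smul_eq_mul, mul_pow]
    have : Real.log T^2 ≤ L := by rw [hL]; exact pow_le_pow_right₀ hl (by norm_num)
    calc _ = (C^2 * T) * Real.log T^2 := by ring
      _ ≤ (C^2 * T) * L := by gcongr
      _ = _ := by ring
  have hCC := mul_le_mul_of_nonneg_left hTL (sq_nonneg C)
  have e : 4 * (15360 + C^2 + 576 * K) * (T * √T) * (1/√y) * L = 4 * (15360 * (T * √T * (1/√y) * L) + C^2 * (T * √T * (1/√y) * L) + 576 * K * (T * √T * (1/√y) * L)) := by ring
  rw [e]
  linarith
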